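/- arXiv:1108.1878 — 5 statements merged into one kernel-verified Lean document; each statement's English description precedes it below -/
import Mathlib

section
/- Let ξ ∈ ℝ satisfy |a| < |ξ| < 1 and suppose a sequence of integers {y_n} satisfies y_n = nξ + O(1) as n → ∞. Then for every ψ ∈ ℂ² with ‖ψ‖ = 1 there is a smooth function F_ψ on {η : |a| < |η| < 1} (independent of n) such that, writing ξ_n = y_n/n, ⟨Uⁿ(δ₀ ⊗ φ), δ_{y_n} ⊗ ψ⟩_{ℓ²} = (1 + (−1)^{n+y_n}) ω^{−y_n} (e^{−n H_Q(ξ_n)/2} / √(2πn)) · √(|b| / ((1 − ξ²)√(ξ² − |a|²))) · e^{πi(n − |y_n|)/2} (F_ψ(ξ) + O(1/n)) as n → ∞. -/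
/-!
The amplitude is treated by the saddle-point method for its Fourier representation.

Under the Fourier transform the walk becomes multiplication by the symbol `P w⁻¹ + Q w`, which is a
Laurent polynomial in `w`, so Fourier inversion may be done on a circle of any radius
(`walk_fourier`). The symbol is odd in `w`, so the two half circles contribute equally up to the sign
`(-1)^(n+y)`, which produces the parity factor. On the circle of radius `e^σ`, suitably rotated,
Cayley–Hamilton shows that the remaining matrix element `k n x` satisfies
`k (n+2) x = 2 r sinh (σ + ix) k (n+1) x + k n x` with `r = |a|` (`amplitude_eq`).

Take `ξ > 0` and choose `σ` so that `ξ` is the derivative at `σ` of `arsinh (r sinh ·)`. Then `x = 0` is a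
saddle point of the integrand. Near it `k n x` is, up to an exponentially small term, the `n`-th power of
the dominant root `elF` times an amplitude (`closed_form`), and the phase has a Taylor expansion with
negative quadratic part (`nuF_taylor`). Away from it both roots of the recursion are smaller by a
definite factor, by comparison of confocal ellipses (`far_root`). Laplace's method (`laplace`) then gives
the integral up to a relative error `1/n`, uniformly in the bounded discrepancy `y_n - nξ`
(`core_asymptotics`).

Half of the rate function is the Legendre transform of `arsinh (r sinh ·)`, with derivative `σ` at `ξ`
(`saddle_identities`, `hasDerivAt_rateF`). Hence `e^{-y_n σ}` times the `n`-th power of the dominant root is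
`e^{-n H_Q(y_n/n)/2}` up to a factor `1 + O(1/n)` (`rateF_taylor`). The case `ξ < 0` follows by spatial
reflection (`walk_reflect`). In the statement `ξ` is fixed before `F`, so `F` is taken to be constant, equal
to the saddle-point amplitude at `ξ`.
-/

open Filter Topology Asymptotics MeasureTheory

noncomputable section

/-- One step of the (column-decomposition) quantum walk `U` on functions `ℤ → ℂ²`:
`(Uf)(x) = P f(x+1) + Q f(x-1)` with `P = [[a,0],[-conj b,0]]`, `Q = [[0,b],[0,conj a]]`. -/
def qwStep (a b : ℂ) (f : ℤ → ℂ × ℂ) : ℤ → ℂ × ℂ := fun x =>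
  (a * (f (x + 1)).1 + b * (f (x - 1)).2,
   -(starRingEnd ℂ) b * (f (x + 1)).1 + (starRingEnd ℂ) a * (f (x - 1)).2)

/-- `δ₀ ⊗ φ : ℤ → ℂ²`. -/
def qwDelta (φ : ℂ × ℂ) : ℤ → ℂ × ℂ := fun x => if x = 0 then φ else 0

/-- Squared norm of a vector in `ℂ²`. -/
def nsq (u : ℂ × ℂ) : ℝ := ‖u.1‖ ^ 2 + ‖u.2‖ ^ 2

/-- Transition probability `p_n(φ; y) = ‖(Uⁿ(δ₀ ⊗ φ))(y)‖²`. -/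
def qwP (a b : ℂ) (φ : ℂ × ℂ) (n : ℕ) (y : ℤ) : ℝ :=
  nsq (((qwStep a b)^[n] (qwDelta φ)) y)

/-- `λ_A(φ) = |φ₂|² − |φ₁|² + (1/|a|²)(ab conj(φ₁)φ₂ + conj(ab) φ₁ conj(φ₂))` (a real number). -/
def lamA (a b : ℂ) (φ : ℂ × ℂ) : ℝ :=
  ‖φ.2‖ ^ 2 - ‖φ.1‖ ^ 2 +
    (a * b * (starRingEnd ℂ) φ.1 * φ.2 +
      (starRingEnd ℂ) a * (starRingEnd ℂ) b * φ.1 * (starRingEnd ℂ) φ.2).re / ‖a‖ ^ 2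

/-- `μ(t) = arccos(|a| cos t)`. -/
def muF (a : ℂ) (t : ℝ) : ℝ := Real.arccos (‖a‖ * Real.cos t)

/-- `t(η) = arcsin(|b|η/(|a|√(1 − η²)))`. -/
def tF (a b : ℂ) (η : ℝ) : ℝ := Real.arcsin (‖b‖ * η / (‖a‖ * Real.sqrt (1 - η ^ 2)))

/-- `θ(η) = 2μ(t(η)) − 2η t(η)`. -/
def thetaF (a b : ℂ) (η : ℝ) : ℝ := 2 * muF a (tF a b η) - 2 * η * tF a b η

/-- The standard inner product on `ℂ²`, conjugate-linear in the second argument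
(the convention of the paper): `⟨u, v⟩ = u₁ conj(v₁) + u₂ conj(v₂)`. -/
def innC (u v : ℂ × ℂ) : ℂ :=
  u.1 * (starRingEnd ℂ) v.1 + u.2 * (starRingEnd ℂ) v.2

/-- The rate function `H_Q(ξ)` on `|a| < |ξ| < 1`. -/
def HQ (a b : ℂ) (ξ : ℝ) : ℝ :=
  2 * |ξ| * Real.log (‖b‖ * |ξ| + Real.sqrt (ξ ^ 2 - ‖a‖ ^ 2)) -
    2 * Real.log (‖b‖ + Real.sqrt (ξ ^ 2 - ‖a‖ ^ 2)) +
    (1 - |ξ|) * Real.log (1 - ξ ^ 2) - 2 * |ξ| * Real.log ‖a‖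

/-! ### Laplace's method for a complex phase -/

lemma poly_le_exp {c : ℝ} (hc : 0 < c) : ∃ K : ℝ, 0 ≤ K ∧ ∀ t : ℝ, 0 ≤ t →
    t + t ^ 2 + t ^ 3 ≤ K * Real.exp (c * t) := by
  refine ⟨1 / c + 2 / c ^ 2 + 6 / c ^ 3, by positivity, fun t ht => ?_⟩
  have h1 := Real.pow_div_factorial_le_exp (c * t) (by positivity) 1
  have h2 := Real.pow_div_factorial_le_exp (c * t) (by positivity) 2
  have h3 := Real.pow_div_factorial_le_exp (c * t) (by positivity) 3
  norm_num [Nat.factorial] at h1 h2 h3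
  have e1 : t ≤ 1 / c * Real.exp (c * t) := by
    rw [div_mul_eq_mul_div, le_div_iff₀ hc]; linarith
  have e2 : t ^ 2 ≤ 2 / c ^ 2 * Real.exp (c * t) := by
    rw [div_mul_eq_mul_div, le_div_iff₀ (by positivity)]; linarith [mul_pow c t 2]
  have e3 : t ^ 3 ≤ 6 / c ^ 3 * Real.exp (c * t) := by
    rw [div_mul_eq_mul_div, le_div_iff₀ (by positivity)]; linarith [mul_pow c t 3]
  linarith


/-- Near the saddle the integrand agrees with the Gaussian `exp (-nκx²/2)` times the model
`g₀ + d x + g₀ n c x³`, up to `1/n` times a wider Gaussian; powers of `n x²` are absorbed in the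
widening. -/
lemma laplace_pointwise {κ C B : ℝ} (hκ : 0 < κ) (hC : 0 ≤ C) (hB : 0 ≤ B) (c g₀ : ℂ) :
    ∃ K : ℝ, 0 ≤ K ∧ ∀ n : ℝ, 1 ≤ n → ∀ x : ℝ, |x| ≤ 1 → ∀ h u d : ℂ,
      ‖u‖ ≤ κ / 4 * x ^ 2 → ‖u - c * x ^ 3‖ ≤ C * x ^ 4 → ‖d‖ ≤ B →
      ‖h - g₀ - d * x‖ ≤ B * x ^ 2 →
      ‖h * Complex.exp (n * (u - κ / 2 * x ^ 2)) -
        (g₀ + d * x + g₀ * n * c * x ^ 3) * Real.exp (-(n * κ / 2) * x ^ 2)‖ ≤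
        K / n * Real.exp (-(n * κ / 8) * x ^ 2) := by
  obtain ⟨K₀, hK₀, hK⟩ := poly_le_exp (c := κ / 8) (by positivity)
  set D := ‖g₀‖ with hD
  set A := C + ‖c‖ with hA
  have hA0 : 0 ≤ A := by positivity
  set Q := (D + 2 * B) * A ^ 2 + 2 * B * A + D * C + B with hQ
  have hQ0 : 0 ≤ Q := by positivity
  refine ⟨Q * K₀, by positivity, fun n hn x hx h u d hu1 hu2 hd hh => ?_⟩
  have hn0 : 0 < n := by linarith
  set X := |x| with hX
  have hX0 : 0 ≤ X := abs_nonneg x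
  have hX2 : x ^ 2 = X ^ 2 := (sq_abs x).symm
  have hX4 : x ^ 4 = X ^ 4 := by
    calc x ^ 4 = (x ^ 2) ^ 2 := by ring
      _ = X ^ 4 := by rw [hX2]; ring
  have hXn : ‖(x : ℂ)‖ = X := by simp [hX]
  rw [hX2] at hu1 hh
  rw [hX4] at hu2
  have hu3 : ‖u‖ ≤ A * X ^ 3 := by
    have h1 : ‖u‖ ≤ ‖u - c * x ^ 3‖ + ‖c * x ^ 3‖ := by
      have := norm_add_le (u - c * x ^ 3) (c * x ^ 3)
      rwa [sub_add_cancel] at this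
    have h2 : ‖c * (x : ℂ) ^ 3‖ = ‖c‖ * X ^ 3 := by rw [norm_mul, norm_pow, hXn]
    have h3 : C * X ^ 4 ≤ C * X ^ 3 :=
      mul_le_mul_of_nonneg_left (pow_le_pow_of_le_one hX0 hx (by norm_num)) hC
    rw [hA, add_mul]; linarith
  have hhg : ‖h - g₀‖ ≤ 2 * B * X := by
    have h1 : ‖h - g₀‖ ≤ ‖h - g₀ - d * x‖ + ‖d * x‖ := by
      simpa using norm_add_le (h - g₀ - d * x) (d * x)
    have h2 : ‖d * (x : ℂ)‖ ≤ B * X := by rw [norm_mul, hXn]; gcongr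
    have h3 : B * X ^ 2 ≤ B * X :=
      mul_le_mul_of_nonneg_left (by simpa using pow_le_pow_of_le_one hX0 hx (show 1 ≤ 2 by norm_num)) hB
    linarith
  have hhn : ‖h‖ ≤ D + 2 * B := by
    have h1 : ‖h‖ ≤ ‖g₀‖ + ‖h - g₀‖ := by simpa using norm_add_le g₀ (h - g₀)
    have : 2 * B * X ≤ 2 * B := by nlinarith
    linarith
  set R := Complex.exp (n * u) - 1 - n * u with hR
  have hRn : ‖R‖ ≤ n ^ 2 * (A * X ^ 3) ^ 2 * Real.exp (n * κ / 4 * X ^ 2) := by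
    have h1 := Complex.norm_exp_sub_sum_le_norm_mul_exp (n * u) 2
    simp only [Finset.sum_range_succ, Finset.sum_range_zero, Nat.factorial, pow_zero, pow_one] at h1
    have h2 : Complex.exp (n * u) - (0 + 1 / ((1 : ℕ) : ℂ) + n * u / ((0 + 1) * 1 : ℕ)) = R := by
      rw [hR]; push_cast; ring
    have h3 : ‖(n : ℂ) * u‖ = n * ‖u‖ := by
      rw [norm_mul, Complex.norm_real, Real.norm_of_nonneg hn0.le]
    rw [h2, h3, mul_pow] at h1
    refine h1.trans ?_
    have h4 : n * ‖u‖ ≤ n * κ / 4 * X ^ 2 := by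
      calc n * ‖u‖ ≤ n * (κ / 4 * X ^ 2) := by gcongr
        _ = _ := by ring
    exact mul_le_mul (by gcongr) (Real.exp_le_exp.2 h4) (Real.exp_pos _).le (by positivity)
  have key : ‖h * Complex.exp (n * u) - (g₀ + d * x + g₀ * n * c * x ^ 3)‖ ≤
      Q * (n ^ 2 * X ^ 6 + n * X ^ 4 + X ^ 2) * Real.exp (n * κ / 4 * X ^ 2) := by
    have e1 : h * Complex.exp (n * u) - (g₀ + d * x + g₀ * n * c * x ^ 3) =
        h * R + (h - g₀) * (n * u) + g₀ * (n * (u - c * x ^ 3)) + (h - g₀ - d * x) := by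
      rw [hR]; ring
    have hE : 1 ≤ Real.exp (n * κ / 4 * X ^ 2) := Real.one_le_exp (by positivity)
    set E := Real.exp (n * κ / 4 * X ^ 2) with hEdef
    have nn : ‖(n : ℂ)‖ = n := by rw [Complex.norm_real, Real.norm_of_nonneg hn0.le]
    have b1 : ‖h * R‖ ≤ (D + 2 * B) * (n ^ 2 * (A * X ^ 3) ^ 2 * E) := by
      rw [norm_mul]; gcongr
    have b2 : ‖(h - g₀) * (n * u)‖ ≤ (2 * B * X) * (n * (A * X ^ 3)) := by
      rw [norm_mul, norm_mul, nn]; gcongr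
    have b3 : ‖g₀ * (n * (u - c * x ^ 3))‖ ≤ D * (n * (C * X ^ 4)) := by
      rw [norm_mul, norm_mul, nn]; gcongr
    rw [e1]
    refine (norm_add_le _ _).trans ?_
    refine (add_le_add_left ((norm_add_le _ _).trans (add_le_add_left (norm_add_le _ _) _)) _).trans ?_
    have t1 : 0 ≤ n ^ 2 * X ^ 6 := by positivity
    have t2 : 0 ≤ n * X ^ 4 := by positivity
    have t3 : 0 ≤ X ^ 2 := by positivity
    have q1 : (D + 2 * B) * A ^ 2 ≤ Q := by
      have : 0 ≤ 2 * B * A + D * C + B := by positivity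
      linarith
    have q2 : 2 * B * A + D * C ≤ Q := by
      have : 0 ≤ (D + 2 * B) * A ^ 2 + B := by positivity
      linarith
    have q3 : B ≤ Q := by
      have : 0 ≤ (D + 2 * B) * A ^ 2 + 2 * B * A + D * C := by positivity
      linarith
    have s1 : (D + 2 * B) * (n ^ 2 * (A * X ^ 3) ^ 2 * E) ≤ Q * (n ^ 2 * X ^ 6) * E := by
      calc (D + 2 * B) * (n ^ 2 * (A * X ^ 3) ^ 2 * E)
          = ((D + 2 * B) * A ^ 2) * (n ^ 2 * X ^ 6) * E := by ring
        _ ≤ _ := by gcongr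
    have s2 : (2 * B * X) * (n * (A * X ^ 3)) + D * (n * (C * X ^ 4)) ≤ Q * (n * X ^ 4) * E := by
      calc (2 * B * X) * (n * (A * X ^ 3)) + D * (n * (C * X ^ 4))
          = (2 * B * A + D * C) * (n * X ^ 4) := by ring
        _ ≤ Q * (n * X ^ 4) := by gcongr
        _ ≤ _ := le_mul_of_one_le_right (by positivity) hE
    have s3 : B * X ^ 2 ≤ Q * X ^ 2 * E := by
      calc B * X ^ 2 ≤ Q * X ^ 2 := by gcongr
        _ ≤ _ := le_mul_of_one_le_right (by positivity) hE
    calc _ ≤ Q * (n ^ 2 * X ^ 6) * E + Q * (n * X ^ 4) * E + Q * X ^ 2 * E := by linarith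
      _ = _ := by ring
  have hfac : Complex.exp (n * (u - κ / 2 * x ^ 2)) =
      Complex.exp (n * u) * Real.exp (-(n * κ / 2) * x ^ 2) := by
    rw [Complex.ofReal_exp, ← Complex.exp_add]; congr 1; push_cast; ring
  rw [hfac, ← mul_assoc, ← sub_mul, norm_mul, Complex.norm_real,
    Real.norm_of_nonneg (Real.exp_pos _).le, hX2]
  have hp : n ^ 2 * X ^ 6 + n * X ^ 4 + X ^ 2 ≤ K₀ / n * Real.exp (n * κ / 8 * X ^ 2) := by
    have := hK (n * X ^ 2) (by positivity)
    rw [div_mul_eq_mul_div, le_div_iff₀ hn0]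
    calc _ = n * X ^ 2 + (n * X ^ 2) ^ 2 + (n * X ^ 2) ^ 3 := by ring
      _ ≤ _ := this
      _ = _ := by ring_nf
  calc _ ≤ (Q * (K₀ / n * Real.exp (n * κ / 8 * X ^ 2)) * Real.exp (n * κ / 4 * X ^ 2)) *
        Real.exp (-(n * κ / 2) * X ^ 2) := by
          refine mul_le_mul_of_nonneg_right (key.trans ?_) (Real.exp_pos _).le
          gcongr
    _ = Q * K₀ / n * (Real.exp (n * κ / 8 * X ^ 2) * Real.exp (n * κ / 4 * X ^ 2) *
        Real.exp (-(n * κ / 2) * X ^ 2)) := by ring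
    _ = _ := by
      rw [← Real.exp_add, ← Real.exp_add]; ring_nf

/-- Far from the saddle the Gaussian model itself is negligible. -/
lemma laplace_far {κ δ B : ℝ} (hκ : 0 < κ) (hδ : 0 < δ) (hB : 0 ≤ B) (c g₀ : ℂ) :
    ∃ K : ℝ, 0 ≤ K ∧ ∀ n : ℝ, 1 ≤ n → ∀ x : ℝ, δ ≤ |x| → ∀ d : ℂ, ‖d‖ ≤ B →
      ‖(g₀ + d * x + g₀ * n * c * x ^ 3) * (Real.exp (-(n * κ / 2) * x ^ 2) : ℂ)‖ ≤
        K / n * Real.exp (-(n * κ / 8) * x ^ 2) := by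
  obtain ⟨K₀, hK₀, hK⟩ := poly_le_exp (c := 3 * κ / 8) (by positivity)
  set Q := ‖g₀‖ / δ ^ 2 + B / δ + ‖g₀‖ * ‖c‖ / δ with hQ
  have hQ0 : 0 ≤ Q := by positivity
  refine ⟨Q * K₀, by positivity, fun n hn x hx d hd => ?_⟩
  have hn0 : 0 < n := by linarith
  set X := |x| with hX
  have hX0 : 0 < X := by linarith
  have hX2 : x ^ 2 = X ^ 2 := (sq_abs x).symm
  have hXn : ‖(x : ℂ)‖ = X := by simp [hX]
  have nn : ‖(n : ℂ)‖ = n := by rw [Complex.norm_real, Real.norm_of_nonneg hn0.le]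
  have hone : 1 ≤ X / δ := by rwa [le_div_iff₀ hδ, one_mul]
  have key : ‖g₀ + d * x + g₀ * n * c * x ^ 3‖ ≤ Q * (X ^ 2 + n * X ^ 4) := by
    have b1 : ‖g₀‖ ≤ ‖g₀‖ / δ ^ 2 * X ^ 2 := by
      calc ‖g₀‖ ≤ ‖g₀‖ * (X / δ) ^ 2 := le_mul_of_one_le_right (norm_nonneg _) (one_le_pow₀ hone)
        _ = _ := by ring
    have b2 : ‖d * (x : ℂ)‖ ≤ B / δ * X ^ 2 := by
      rw [norm_mul, hXn]
      calc ‖d‖ * X ≤ B * X := by gcongr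
        _ ≤ B * X * (X / δ) := le_mul_of_one_le_right (by positivity) hone
        _ = _ := by ring
    have b3 : ‖g₀ * n * c * (x : ℂ) ^ 3‖ ≤ ‖g₀‖ * ‖c‖ / δ * (n * X ^ 4) := by
      rw [norm_mul, norm_mul, norm_mul, norm_pow, hXn, nn]
      calc ‖g₀‖ * n * ‖c‖ * X ^ 3 ≤ ‖g₀‖ * n * ‖c‖ * X ^ 3 * (X / δ) :=
            le_mul_of_one_le_right (by positivity) hone
        _ = _ := by ring
    have t1 : 0 ≤ X ^ 2 := by positivity
    have t2 : 0 ≤ n * X ^ 4 := by positivity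
    have := norm_add₃_le (a := g₀) (b := d * x) (c := g₀ * n * c * x ^ 3)
    have q1 : 0 ≤ ‖g₀‖ * ‖c‖ / δ * X ^ 2 := by positivity
    have q2 : 0 ≤ (‖g₀‖ / δ ^ 2 + B / δ) * (n * X ^ 4) := by positivity
    rw [hQ]; linarith
  have hp : X ^ 2 + n * X ^ 4 ≤ K₀ / n * Real.exp (3 * n * κ / 8 * X ^ 2) := by
    have := hK (n * X ^ 2) (by positivity)
    rw [div_mul_eq_mul_div, le_div_iff₀ hn0]
    calc _ = n * X ^ 2 + (n * X ^ 2) ^ 2 := by ring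
      _ ≤ n * X ^ 2 + (n * X ^ 2) ^ 2 + (n * X ^ 2) ^ 3 := le_add_of_nonneg_right (by positivity)
      _ ≤ _ := this
      _ = _ := by ring_nf
  rw [norm_mul, Complex.norm_real, Real.norm_of_nonneg (Real.exp_pos _).le, hX2]
  calc _ ≤ (Q * (K₀ / n * Real.exp (3 * n * κ / 8 * X ^ 2))) *
        Real.exp (-(n * κ / 2) * X ^ 2) := by
          refine mul_le_mul_of_nonneg_right (key.trans ?_) (Real.exp_pos _).le
          gcongr
    _ = Q * K₀ / n * (Real.exp (3 * n * κ / 8 * X ^ 2) * Real.exp (-(n * κ / 2) * X ^ 2)) := by ring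
    _ = _ := by
      rw [← Real.exp_add]; ring_nf


/-- Laplace's method, uniformly in the integrand `Φ`: it behaves like `h x · exp (n (u x - κx²/2))` near
`0` and is negligible away from `0`. The error is `n^{-3/2}` rather than `n^{-1}` because the first-order
corrections `d x` and `n c x³` are odd. -/
lemma laplace {κ δ C B : ℝ} (hκ : 0 < κ) (hδ : 0 < δ) (hδ1 : δ ≤ 1) (hC : 0 ≤ C) (hB : 0 ≤ B)
    (u : ℝ → ℂ) (c g₀ : ℂ) (hu1 : ∀ x : ℝ, |x| ≤ δ → ‖u x‖ ≤ κ / 4 * x ^ 2)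
    (hu2 : ∀ x : ℝ, |x| ≤ δ → ‖u x - c * x ^ 3‖ ≤ C * x ^ 4) :
    ∃ K : ℝ, ∀ n : ℝ, 1 ≤ n → ∀ (h Φ : ℝ → ℂ) (d : ℂ), Continuous Φ → ‖d‖ ≤ B →
      (∀ x : ℝ, |x| ≤ δ → ‖h x - g₀ - d * x‖ ≤ B * x ^ 2) →
      (∀ x : ℝ, |x| ≤ δ → ‖Φ x - h x * Complex.exp (n * (u x - κ / 2 * x ^ 2))‖ ≤ B / n ^ 2) →
      (∀ x : ℝ, δ ≤ |x| → |x| ≤ Real.pi / 2 → ‖Φ x‖ ≤ B / n ^ 2) →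
      ‖(∫ x in (-(Real.pi / 2))..(Real.pi / 2), Φ x) - g₀ * Real.sqrt (2 * Real.pi / (n * κ))‖ ≤
        K / (n * Real.sqrt n) := by
  obtain ⟨K₁, hK₁, H₁⟩ := laplace_pointwise hκ hC hB c g₀
  obtain ⟨K₂, hK₂, H₂⟩ := laplace_far hκ hδ hB c g₀
  set P := Real.pi / 2 with hP
  have hP0 : 0 < P := by positivity
  have hP1 : δ ≤ P := by have := Real.pi_gt_three; rw [hP]; linarith
  obtain ⟨K₃, hK₃, H₃⟩ := laplace_far hκ hP0 le_rfl 0 g₀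
  refine ⟨B * Real.pi + (K₁ + K₂) * Real.sqrt (8 * Real.pi / κ) + K₃ * Real.sqrt (8 * Real.pi / κ),
    fun n hn h Φ d hΦ hd hh hnear hfar => ?_⟩
  have hn0 : 0 < n := by linarith
  set G : ℝ → ℂ := fun x => (Real.exp (-(n * κ / 2) * x ^ 2) : ℂ) with hG
  set J : ℝ → ℝ := fun x => Real.exp (-(n * κ / 8) * x ^ 2) with hJ
  have hGc : Continuous G := by simp only [hG]; fun_prop
  have hJc : Continuous J := by simp only [hJ]; fun_prop
  have hJi : Integrable J := integrable_exp_neg_mul_sq (by positivity)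
  have hJint : ∫ x, J x = Real.sqrt (8 * Real.pi / κ) / Real.sqrt n := by
    rw [hJ, integral_gaussian, ← Real.sqrt_div (by positivity)]
    congr 1; field_simp
  have hGi : Integrable G := (integrable_exp_neg_mul_sq (b := n * κ / 2) (by positivity)).ofReal
  have hGint : ∫ x, G x = Real.sqrt (2 * Real.pi / (n * κ)) := by
    rw [hG, integral_complex_ofReal, integral_gaussian]
    congr 2; field_simp
  have hJle : ∫ x in (-P)..P, J x ≤ Real.sqrt (8 * Real.pi / κ) / Real.sqrt n := by
    rw [← hJint, intervalIntegral.integral_of_le (by linarith)]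
    exact setIntegral_le_integral hJi (Eventually.of_forall fun x => (Real.exp_pos _).le)
  -- the odd part of the model integrates to zero
  set O : ℝ → ℂ := fun x => (d * x + g₀ * n * c * x ^ 3) * G x with hO
  have hOc : Continuous O := by simp only [hO]; fun_prop
  have hOint : ∫ x in (-P)..P, O x = 0 := by
    have h1 := intervalIntegral.integral_comp_neg (a := -P) (b := P) O
    have h2 : (fun x => O (-x)) = fun x => -O x := by
      funext x; simp only [hO, hG]; push_cast; ring_nf
    rw [h2, intervalIntegral.integral_neg, neg_neg] at h1
    exact self_eq_neg.1 h1.symm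
  have hpt : ∀ x : ℝ, |x| ≤ P → ‖Φ x - (g₀ * G x + O x)‖ ≤ B / n ^ 2 + (K₁ + K₂) / n * J x := by
    intro x hx
    have hJ0 : 0 ≤ J x := (Real.exp_pos _).le
    have hsp : g₀ * G x + O x = (g₀ + d * x + g₀ * n * c * x ^ 3) * G x := by
      simp only [hO]; ring
    have hs : (K₁ + K₂) / n * J x = K₁ / n * J x + K₂ / n * J x := by ring
    rw [hsp, hs]
    have p1 : 0 ≤ K₁ / n * J x := by positivity
    have p2 : 0 ≤ K₂ / n * J x := by positivity
    rcases le_total |x| δ with hxδ | hxδ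
    · have := H₁ n hn x (hxδ.trans hδ1) (h x) (u x) d (hu1 x hxδ) (hu2 x hxδ) hd (hh x hxδ)
      have h2 := norm_add_le (Φ x - h x * Complex.exp (n * (u x - κ / 2 * x ^ 2)))
        (h x * Complex.exp (n * (u x - κ / 2 * x ^ 2)) - (g₀ + d * x + g₀ * n * c * x ^ 3) * G x)
      rw [sub_add_sub_cancel] at h2
      have := hnear x hxδ
      simp only [hG, hJ] at *
      linarith
    · have := H₂ n hn x hxδ d hd
      have h2 := norm_sub_le (Φ x) ((g₀ + d * x + g₀ * n * c * x ^ 3) * G x)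
      have := hfar x hxδ hx
      simp only [hG, hJ] at *
      linarith
  have hmain : ‖(∫ x in (-P)..P, Φ x) - g₀ * ∫ x in (-P)..P, G x‖ ≤
      B * Real.pi / n ^ 2 + (K₁ + K₂) / n * (Real.sqrt (8 * Real.pi / κ) / Real.sqrt n) := by
    have e1 : (∫ x in (-P)..P, Φ x) - g₀ * ∫ x in (-P)..P, G x =
        ∫ x in (-P)..P, (Φ x - (g₀ * G x + O x)) := by
      rw [intervalIntegral.integral_sub (hΦ.intervalIntegrable _ _)
        ((by fun_prop : Continuous fun x => g₀ * G x + O x).intervalIntegrable _ _),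
        intervalIntegral.integral_add ((by fun_prop : Continuous fun x => g₀ * G x).intervalIntegrable _ _)
        (hOc.intervalIntegrable _ _), hOint, add_zero, intervalIntegral.integral_const_mul]
    rw [e1]
    refine (intervalIntegral.norm_integral_le_of_norm_le (g := fun x => B / n ^ 2 + (K₁ + K₂) / n * J x)
      (by linarith) (Eventually.of_forall fun x hx => hpt x (abs_le.2 ⟨hx.1.le, hx.2⟩))
      ((by fun_prop : Continuous _).intervalIntegrable _ _)).trans ?_
    rw [intervalIntegral.integral_add (by simp)
      ((by fun_prop : Continuous fun x => (K₁ + K₂) / n * J x).intervalIntegrable _ _),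
      intervalIntegral.integral_const_mul, intervalIntegral.integral_const]
    refine add_le_add (le_of_eq ?_) (by gcongr)
    rw [hP, smul_eq_mul]; ring
  have htail : ‖g₀ * (∫ x in (-P)..P, G x) - g₀ * ∫ x, G x‖ ≤
      K₃ / n * (Real.sqrt (8 * Real.pi / κ) / Real.sqrt n) := by
    rw [intervalIntegral.integral_of_le (by linarith : -P ≤ P), ← mul_sub, 
      ← integral_add_compl (measurableSet_Ioc (a := -P) (b := P)) hGi, sub_add_cancel_left, mul_neg,
      norm_neg, ← integral_const_mul]
    refine (norm_integral_le_of_norm_le (g := fun x => K₃ / n * J x)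
      ((hJi.const_mul _).integrableOn) ?_).trans ?_
    · refine (ae_restrict_iff' measurableSet_Ioc.compl).2 (Eventually.of_forall fun x hx => ?_)
      have hx' : P ≤ |x| := by
        by_contra hcon
        push Not at hcon
        rw [abs_lt] at hcon
        exact hx ⟨hcon.1, hcon.2.le⟩
      have := H₃ n hn x hx' 0 (by simp)
      simpa [hG, hJ] using this
    · rw [← hJint, ← integral_const_mul]
      exact setIntegral_le_integral (hJi.const_mul _)
        (Eventually.of_forall fun x => mul_nonneg (by positivity) (Real.exp_pos _).le)
  rw [hGint] at htail
  have hfin := norm_add_le ((∫ x in (-P)..P, Φ x) - g₀ * ∫ x in (-P)..P, G x)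
    (g₀ * (∫ x in (-P)..P, G x) - g₀ * Real.sqrt (2 * Real.pi / (n * κ)))
  rw [sub_add_sub_cancel] at hfin
  have hsq : B * Real.pi / n ^ 2 ≤ B * Real.pi / (n * Real.sqrt n) := by
    have : Real.sqrt n ≤ n := Real.sqrt_le_iff.2 ⟨by linarith, by nlinarith⟩
    have h0 : 0 < Real.sqrt n := Real.sqrt_pos.2 hn0
    rw [sq]
    gcongr
  calc _ ≤ _ := hfin
    _ ≤ B * Real.pi / (n * Real.sqrt n) +
        (K₁ + K₂) / n * (Real.sqrt (8 * Real.pi / κ) / Real.sqrt n) +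
        K₃ / n * (Real.sqrt (8 * Real.pi / κ) / Real.sqrt n) := by linarith
    _ = _ := by
      have h0 : 0 < Real.sqrt n := Real.sqrt_pos.2 hn0
      field_simp


/-! ### The recursion `k (n+2) = 2 p k (n+1) + k n` -/

/-- If `2p = L - L⁻¹`, then `p` lies on the ellipse with foci `±i` whose semi-axes are determined
by `‖L‖`. -/
lemma ellipse_eq {L p : ℂ} (hL : L ≠ 0) (hp : 2 * p = L - L⁻¹) :
    p.re ^ 2 * (1 + ((‖L‖ - ‖L‖⁻¹) / 2) ^ 2) + p.im ^ 2 * ((‖L‖ - ‖L‖⁻¹) / 2) ^ 2 =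
      ((‖L‖ - ‖L‖⁻¹) / 2) ^ 2 * (1 + ((‖L‖ - ‖L‖⁻¹) / 2) ^ 2) := by
  have ht : 0 < ‖L‖ := norm_pos_iff.2 hL
  have hsq : L.re ^ 2 + L.im ^ 2 = ‖L‖ ^ 2 := by
    rw [← Complex.normSq_eq_norm_sq, Complex.normSq_apply]; ring
  have hre := congrArg Complex.re hp
  have him := congrArg Complex.im hp
  simp only [Complex.mul_re, Complex.mul_im, Complex.sub_re, Complex.sub_im, Complex.inv_re,
    Complex.inv_im, Complex.re_ofNat, Complex.im_ofNat, Complex.normSq_eq_norm_sq] at hre him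
  set t := ‖L‖
  have h1 : p.re = L.re / t * ((t - t⁻¹) / 2) := by
    field_simp; field_simp at hre; linarith
  have h2 : p.im = L.im / t * ((t + t⁻¹) / 2) := by
    field_simp; field_simp at him; linarith
  have h3 : 1 + ((t - t⁻¹) / 2) ^ 2 = ((t + t⁻¹) / 2) ^ 2 := by field_simp; ring
  rw [h3, h1, h2]
  calc _ = (L.re ^ 2 + L.im ^ 2) / t ^ 2 * (((t - t⁻¹) / 2) ^ 2 * ((t + t⁻¹) / 2) ^ 2) := by ring
    _ = _ := by rw [hsq, div_self (by positivity), one_mul]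

lemma exists_root (p : ℂ) : ∃ L : ℂ, 1 ≤ ‖L‖ ∧ 2 * p = L - L⁻¹ := by
  obtain ⟨s, hs⟩ := IsAlgClosed.exists_pow_nat_eq (1 + p ^ 2) (n := 2) (by norm_num)
  -- the two roots of `X ^ 2 = 2 p X + 1` have product `-1`
  have hmul : (p + s) * (p - s) = -1 := by linear_combination -hs
  have hne1 : p + s ≠ 0 := fun h => by simp [h] at hmul
  have hne2 : p - s ≠ 0 := fun h => by simp [h] at hmul
  have hnorm : ‖p + s‖ * ‖p - s‖ = 1 := by rw [← norm_mul, hmul]; simp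
  rcases le_total 1 ‖p + s‖ with h | h
  · refine ⟨p + s, h, ?_⟩
    have : (p + s)⁻¹ = -(p - s) := inv_eq_of_mul_eq_one_right (by linear_combination -hmul)
    rw [this]; ring
  · refine ⟨p - s, ?_, ?_⟩
    · by_contra hcon
      push Not at hcon
      have h1 : 0 < ‖p - s‖ := norm_pos_iff.2 hne2
      nlinarith
    · have : (p - s)⁻¹ = -(p + s) := inv_eq_of_mul_eq_one_right (by linear_combination -hmul)
      rw [this]; ring

/-- Growth bound for the recursion that does not require the roots `L`, `-L⁻¹` to be distinct; the
factor `n + 1` accounts for the confluent case. -/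
lemma norm_rec_le {k : ℕ → ℂ} {p L : ℂ} {R C : ℝ} (hk : ∀ n, k (n + 2) = 2 * p * k (n + 1) + k n)
    (hL : 1 ≤ ‖L‖) (hp : 2 * p = L - L⁻¹) (hR : ‖L‖ ≤ R) (h0 : ‖k 0‖ ≤ C) (h1 : ‖k 1‖ ≤ C) (n : ℕ) :
    ‖k n‖ ≤ 2 * C * (n + 1) * R ^ n := by
  have hL0 : L ≠ 0 := norm_pos_iff.1 (by linarith)
  have hR1 : 1 ≤ R := hL.trans hR
  have hC : 0 ≤ C := (norm_nonneg _).trans h0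
  have hinv : ‖L⁻¹‖ ≤ 1 := by rw [norm_inv]; exact inv_le_one_of_one_le₀ hL
  have hinv' : ∀ z : ℂ, ‖L⁻¹ * z‖ ≤ ‖z‖ := fun z => by
    rw [norm_mul]; exact mul_le_of_le_one_left (norm_nonneg _) hinv
  have hj : ∀ n, k (n + 1) + L⁻¹ * k n = L ^ n * (k 1 + L⁻¹ * k 0) := by
    intro n
    induction n with
    | zero => simp
    | succ n ih =>
      rw [hk, hp, pow_succ', mul_assoc, ← ih]
      field_simp; ring
  induction n with
  | zero => simp; linarith
  | succ n ih =>
    have e : k (n + 1) = L ^ n * (k 1 + L⁻¹ * k 0) - L⁻¹ * k n := by rw [← hj]; ring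
    have b1 : ‖L ^ n * (k 1 + L⁻¹ * k 0)‖ ≤ R ^ n * (2 * C) := by
      rw [norm_mul, norm_pow]
      gcongr
      have := norm_add_le (k 1) (L⁻¹ * k 0)
      have := hinv' (k 0)
      linarith
    have b2 := hinv' (k n)
    have b3 : ‖k (n + 1)‖ ≤ R ^ n * (2 * C) + 2 * C * (n + 1) * R ^ n := by
      rw [e]; refine (norm_sub_le _ _).trans (by linarith)
    refine b3.trans ?_
    calc R ^ n * (2 * C) + 2 * C * (n + 1) * R ^ n = 2 * C * ((n : ℝ) + 1 + 1) * R ^ n := by ring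
      _ ≤ 2 * C * ((n : ℝ) + 1 + 1) * R ^ (n + 1) := by
        gcongr
        omega
      _ = _ := by push_cast; ring

/-- Binet formula for the recursion with distinct roots `L`, `-L⁻¹`. -/
lemma closed_form {k : ℕ → ℂ} {p L s : ℂ} (hk : ∀ n, k (n + 2) = 2 * p * k (n + 1) + k n)
    (hL0 : L ≠ 0) (hp : 2 * p = L - L⁻¹) (hs : 2 * s = L + L⁻¹) (hs0 : s ≠ 0) (n : ℕ) :
    k n = L ^ n * ((k 1 + k 0 / L) / (2 * s)) - (-L⁻¹) ^ n * ((k 1 - L * k 0) / (2 * s)) := by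
  have key : ∀ n, 2 * s * k n = L ^ n * (k 1 + k 0 / L) - (-L⁻¹) ^ n * (k 1 - L * k 0) := by
    intro n
    induction n using Nat.strong_induction_on with
    | _ n ih =>
      match n with
      | 0 => rw [hs]; field_simp; ring
      | 1 => rw [hs]; field_simp; ring
      | n + 2 =>
        have i0 := ih n (by omega)
        have i1 := ih (n + 1) (by omega)
        have : 2 * s * k (n + 2) = 2 * p * (2 * s * k (n + 1)) + 2 * s * k n := by rw [hk]; ring
        rw [this, i0, i1, hp]
        simp only [pow_succ]
        field_simp
        ring
  have := key n
  field_simp at this ⊢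
  linear_combination this

/-- Away from the saddle the dominant root is strictly smaller than at the saddle. For
`p = r sinh (σ + ix)` with `S = r sinh σ` the hypotheses `hre`, `him` hold, and at `x = 0` the root is
`S + √(1 + S²)`, the bound for `η = 0`. The point `p` runs along an ellipse which is inside the
confocal one through `S`, because `r < 1`. -/
lemma far_root {S r x η t : ℝ} {L p : ℂ} (hS : 0 < S) (hr0 : 0 < r) (hr : r < 1)
    (hL : 1 ≤ ‖L‖) (hp : 2 * p = L - L⁻¹)
    (hre : p.re ^ 2 = S ^ 2 * Real.cos x ^ 2) (him : p.im ^ 2 = (r ^ 2 + S ^ 2) * Real.sin x ^ 2)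
    (hη : η ≤ Real.sin x ^ 2)
    (ht : t = S ^ 2 - η * (S ^ 2 * (1 - r ^ 2) / (1 + S ^ 2))) :
    ‖L‖ ≤ Real.sqrt t + Real.sqrt (1 + t) := by
  have hL0 : L ≠ 0 := norm_pos_iff.1 (by linarith)
  have he := ellipse_eq hL0 hp
  set τ := ‖L‖
  have hτ : 0 < τ := by linarith
  have hinv : τ⁻¹ ≤ 1 := inv_le_one_of_one_le₀ hL
  set q := ((τ - τ⁻¹) / 2) ^ 2 with hq
  have hq0 : 0 ≤ q := sq_nonneg _
  have hr2 : r ^ 2 < 1 := by nlinarith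
  have hsin0 : 0 ≤ Real.sin x ^ 2 := sq_nonneg _
  have hsin1 : Real.sin x ^ 2 ≤ 1 := Real.sin_sq_le_one x
  rw [hre, him, Real.cos_sq'] at he
  have hkey : (S ^ 2 - q) * (1 + q) = Real.sin x ^ 2 * (S ^ 2 - r ^ 2 * q) := by linear_combination he
  have hqS : q ≤ S ^ 2 := by
    by_contra hcon
    push Not at hcon
    have h1 : (S ^ 2 - q) * (1 + q) < S ^ 2 - q := by nlinarith [sq_nonneg S]
    have h2 : S ^ 2 - q ≤ S ^ 2 - r ^ 2 * q := by nlinarith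
    rcases le_total 0 (S ^ 2 - r ^ 2 * q) with h3 | h3
    · have := mul_nonneg hsin0 h3
      nlinarith
    · nlinarith
  have hqt : q ≤ t := by
    have h1 : η * (S ^ 2 * (1 - r ^ 2) / (1 + S ^ 2)) ≤ S ^ 2 - q := by
      have hA : 0 ≤ S ^ 2 * (1 - r ^ 2) := by nlinarith [sq_nonneg S]
      rw [← mul_div_assoc, div_le_iff₀ (by positivity)]
      calc η * (S ^ 2 * (1 - r ^ 2)) ≤ Real.sin x ^ 2 * (S ^ 2 * (1 - r ^ 2)) := by gcongr
        _ ≤ Real.sin x ^ 2 * (S ^ 2 - r ^ 2 * q) := by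
          gcongr
          nlinarith [sq_nonneg r]
        _ = (S ^ 2 - q) * (1 + q) := hkey.symm
        _ ≤ (S ^ 2 - q) * (1 + S ^ 2) := by
          gcongr
    linarith
  have e1 : Real.sqrt q = (τ - τ⁻¹) / 2 := by rw [hq]; exact Real.sqrt_sq (by linarith)
  have e2 : Real.sqrt (1 + q) = (τ + τ⁻¹) / 2 := by
    have : 1 + q = ((τ + τ⁻¹) / 2) ^ 2 := by rw [hq]; field_simp; ring
    rw [this]; exact Real.sqrt_sq (by positivity)
  calc τ = Real.sqrt q + Real.sqrt (1 + q) := by rw [e1, e2]; ring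
    _ ≤ _ := by gcongr


/-! ### The complex phase `arsinh (r sinh z)` and its Taylor expansion -/

/-- Taylor's formula for an analytic function, with a uniform remainder bound. -/
lemma taylor_aux {f : ℂ → ℂ} {z : ℂ} (hf : AnalyticAt ℂ f z) (N : ℕ) :
    ∃ C δ : ℝ, 0 ≤ C ∧ 0 < δ ∧ ∀ ζ : ℂ, ‖ζ‖ ≤ δ →
      ‖f (z + ζ) - ∑ k ∈ Finset.range N, iteratedDeriv k f z / k.factorial * ζ ^ k‖ ≤ C * ‖ζ‖ ^ N := by
  have h := hf.hasFPowerSeriesAt.isBigO_sub_partialSum_pow N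
  obtain ⟨C, hC, hb⟩ := h.exists_nonneg
  rw [isBigOWith_iff, Metric.eventually_nhds_iff] at hb
  obtain ⟨ε, hε, hb⟩ := hb
  refine ⟨C, ε / 2, hC, by positivity, fun ζ hζ => ?_⟩
  have := hb (y := ζ) (by rw [dist_zero_right]; linarith)
  simpa [FormalMultilinearSeries.partialSum, FormalMultilinearSeries.ofScalars_apply_eq,
    mul_comm, norm_pow] using this

lemma taylor_three {f : ℂ → ℂ} {z f1 f2 : ℂ} (hf : AnalyticAt ℂ f z) (h1 : deriv f z = f1)
    (h2 : deriv (deriv f) z = f2) :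
    ∃ (c : ℂ) (C δ : ℝ), 0 ≤ C ∧ 0 < δ ∧ ∀ ζ : ℂ, ‖ζ‖ ≤ δ →
      ‖f (z + ζ) - f z - f1 * ζ - f2 / 2 * ζ ^ 2 - c * ζ ^ 3‖ ≤ C * ‖ζ‖ ^ 4 := by
  obtain ⟨C, δ, hC, hδ, h⟩ := taylor_aux hf 4
  refine ⟨iteratedDeriv 3 f z / 6, C, δ, hC, hδ, fun ζ hζ => ?_⟩
  refine (le_of_eq ?_).trans (h ζ hζ)
  have e2 : iteratedDeriv 2 f z = f2 := by rw [iteratedDeriv_succ, iteratedDeriv_one, h2]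
  have e1 : iteratedDeriv 1 f z = f1 := by rw [iteratedDeriv_one, h1]
  simp only [Finset.sum_range_succ, Finset.sum_range_zero, e1, e2, iteratedDeriv_zero, Nat.factorial]
  congr 1; push_cast; ring

lemma taylor_one {f : ℂ → ℂ} {z : ℂ} (hf : AnalyticAt ℂ f z) :
    ∃ (c : ℂ) (C δ : ℝ), 0 ≤ C ∧ 0 < δ ∧ ∀ ζ : ℂ, ‖ζ‖ ≤ δ →
      ‖f (z + ζ) - f z - c * ζ‖ ≤ C * ‖ζ‖ ^ 2 := by
  obtain ⟨C, δ, hC, hδ, h⟩ := taylor_aux hf 2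
  refine ⟨iteratedDeriv 1 f z, C, δ, hC, hδ, fun ζ hζ => ?_⟩
  refine (le_of_eq ?_).trans (h ζ hζ)
  simp only [Finset.sum_range_succ, Finset.sum_range_zero, iteratedDeriv_zero, Nat.factorial]
  congr 1; push_cast; ring

/-- `√(1 + (r sinh z)²)`, principal branch. -/
noncomputable def chF (r : ℝ) (z : ℂ) : ℂ := Complex.exp (Complex.log (1 + (r * Complex.sinh z) ^ 2) / 2)

/-- The dominant eigenvalue `r sinh z + √(1 + (r sinh z)²)`. -/
noncomputable def elF (r : ℝ) (z : ℂ) : ℂ := r * Complex.sinh z + chF r z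

/-- The phase `arsinh (r sinh z)`. -/
noncomputable def nuF (r : ℝ) (z : ℂ) : ℂ := Complex.log (elF r z)

lemma chF_ne (r : ℝ) (z : ℂ) : chF r z ≠ 0 := Complex.exp_ne_zero _

lemma chF_sq {r : ℝ} {z : ℂ} (h : 1 + ((r : ℂ) * Complex.sinh z) ^ 2 ≠ 0) :
    chF r z ^ 2 = 1 + (r * Complex.sinh z) ^ 2 := by
  rw [chF, ← Complex.exp_nat_mul]
  rw [show ((2 : ℕ) : ℂ) * (Complex.log (1 + (r * Complex.sinh z) ^ 2) / 2) =
    Complex.log (1 + (r * Complex.sinh z) ^ 2) by push_cast; ring, Complex.exp_log h]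

lemma elF_inv {r : ℝ} {z : ℂ} (h : 1 + ((r : ℂ) * Complex.sinh z) ^ 2 ≠ 0) :
    (elF r z)⁻¹ = chF r z - r * Complex.sinh z := by
  have := chF_sq h
  exact inv_eq_of_mul_eq_one_right (by rw [elF]; linear_combination this)

lemma elF_ne {r : ℝ} {z : ℂ} (h : 1 + ((r : ℂ) * Complex.sinh z) ^ 2 ≠ 0) : elF r z ≠ 0 := by
  have := chF_sq h
  intro h0
  have : elF r z * (chF r z - r * Complex.sinh z) = 1 := by rw [elF]; linear_combination this
  simp [h0] at this

lemma hasDerivAt_chF {r : ℝ} {z : ℂ} (h : 1 + ((r : ℂ) * Complex.sinh z) ^ 2 ∈ Complex.slitPlane) :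
    HasDerivAt (chF r) (r * Complex.sinh z * (r * Complex.cosh z) / chF r z) z := by
  have h1 : HasDerivAt (fun z : ℂ => 1 + ((r : ℂ) * Complex.sinh z) ^ 2)
      (2 * (r * Complex.sinh z) * (r * Complex.cosh z)) z := by
    have := (((Complex.hasDerivAt_sinh z).const_mul (r : ℂ)).pow 2).const_add 1
    refine this.congr_deriv ?_
    push_cast; ring
  have h2 := ((h1.clog h).div_const 2).cexp
  have h0 := Complex.slitPlane_ne_zero h
  have h3 : Complex.exp (Complex.log (1 + (r * Complex.sinh z) ^ 2) / 2) = chF r z := rfl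
  rw [h3] at h2
  refine HasDerivAt.congr_deriv (show HasDerivAt (chF r) _ z from h2) ?_
  have hsq := chF_sq h0
  have hne := chF_ne r z
  rw [← hsq]
  field_simp

lemma hasDerivAt_nuF {r : ℝ} {z : ℂ} (h : 1 + ((r : ℂ) * Complex.sinh z) ^ 2 ∈ Complex.slitPlane)
    (h' : elF r z ∈ Complex.slitPlane) :
    HasDerivAt (nuF r) (r * Complex.cosh z / chF r z) z := by
  have h1 : HasDerivAt (elF r) (r * Complex.cosh z + r * Complex.sinh z * (r * Complex.cosh z) / chF r z) z :=
    ((Complex.hasDerivAt_sinh z).const_mul (r : ℂ)).add (hasDerivAt_chF h)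
  have h2 := h1.clog h'
  refine HasDerivAt.congr_deriv (show HasDerivAt (nuF r) _ z from h2) ?_
  have hne := chF_ne r z
  have hne' := Complex.slitPlane_ne_zero h'
  rw [div_eq_iff hne', elF]
  field_simp
  ring

lemma analyticAt_chF {r : ℝ} {z : ℂ} (h : 1 + ((r : ℂ) * Complex.sinh z) ^ 2 ∈ Complex.slitPlane) :
    AnalyticAt ℂ (chF r) z := by
  unfold chF
  have hs : AnalyticAt ℂ Complex.sinh z := Complex.differentiable_sinh.analyticAt z
  have := ((analyticAt_const (v := (1 : ℂ))).add ((analyticAt_const (v := (r : ℂ))).mul hs |>.pow 2)).clog h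
  exact (this.div analyticAt_const (by norm_num)).cexp

lemma analyticAt_elF {r : ℝ} {z : ℂ} (h : 1 + ((r : ℂ) * Complex.sinh z) ^ 2 ∈ Complex.slitPlane) :
    AnalyticAt ℂ (elF r) z :=
  (analyticAt_const.mul (Complex.differentiable_sinh.analyticAt z)).add (analyticAt_chF h)

section Saddle

variable {r σ S T ξ κ : ℝ}

lemma saddle_mem (hS : S = r * Real.sinh σ) :
    1 + ((r : ℂ) * Complex.sinh (σ : ℂ)) ^ 2 ∈ Complex.slitPlane := by
  have : 1 + ((r : ℂ) * Complex.sinh (σ : ℂ)) ^ 2 = ((1 + S ^ 2 : ℝ) : ℂ) := by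
    rw [hS]; push_cast; ring
  rw [this, Complex.ofReal_mem_slitPlane]; positivity

lemma chF_saddle (hS : S = r * Real.sinh σ) (hT : T = Real.sqrt (1 + S ^ 2)) :
    chF r σ = T := by
  have : 1 + ((r : ℂ) * Complex.sinh (σ : ℂ)) ^ 2 = ((1 + S ^ 2 : ℝ) : ℂ) := by
    rw [hS]; push_cast; ring
  have hp : 0 < 1 + S ^ 2 := by positivity
  have h2 : Real.log (1 + S ^ 2) / 2 = Real.log T := by rw [hT, Real.log_sqrt hp.le]
  have hT0 : 0 < T := by rw [hT]; exact Real.sqrt_pos.2 hp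
  rw [chF, this, ← Complex.ofReal_log hp.le, ← Real.exp_log hT0, ← h2]
  push_cast; rfl

lemma elF_saddle (hS : S = r * Real.sinh σ) (hT : T = Real.sqrt (1 + S ^ 2)) :
    elF r σ = ((S + T : ℝ) : ℂ) := by
  rw [elF, chF_saddle hS hT, hS]; push_cast; ring

/-- Second-order data of the phase at the saddle point, with a cubic term and a quartic error. -/
lemma nuF_taylor (hS : S = r * Real.sinh σ) (hS0 : 0 < S) (hT : T = Real.sqrt (1 + S ^ 2))
    (hξ : ξ = r * Real.cosh σ / T) (hκ : κ = S / T * (1 - ξ ^ 2)) :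
    ∃ (c : ℂ) (C δ : ℝ), 0 ≤ C ∧ 0 < δ ∧ ∀ ζ : ℂ, ‖ζ‖ ≤ δ →
      ‖nuF r (σ + ζ) - Real.log (S + T) - ξ * ζ - κ / 2 * ζ ^ 2 - c * ζ ^ 3‖ ≤ C * ‖ζ‖ ^ 4 := by
  have hT0 : 0 < T := by rw [hT]; positivity
  have hT2 : T ^ 2 = 1 + S ^ 2 := by rw [hT]; exact Real.sq_sqrt (by positivity)
  have hm := saddle_mem hS
  have hel := elF_saddle hS hT
  have hm' : elF r σ ∈ Complex.slitPlane := by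
    rw [hel, Complex.ofReal_mem_slitPlane]; positivity
  have han : AnalyticAt ℂ (nuF r) σ := (analyticAt_elF hm).clog hm'
  have hnear : ∀ᶠ z in 𝓝 (σ : ℂ), HasDerivAt (nuF r) (r * Complex.cosh z / chF r z) z := by
    have c1 : ContinuousAt (fun z : ℂ => 1 + ((r : ℂ) * Complex.sinh z) ^ 2) σ := by fun_prop
    have c2 : ContinuousAt (elF r) σ := (analyticAt_elF hm).continuousAt
    filter_upwards [c1.eventually (Complex.isOpen_slitPlane.mem_nhds hm),
      c2.eventually (Complex.isOpen_slitPlane.mem_nhds hm')] with z h1 h2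
    exact hasDerivAt_nuF h1 h2
  have hTc : (T : ℂ) ≠ 0 := by exact_mod_cast hT0.ne'
  have hrc : (r : ℂ) * Complex.cosh σ = ξ * T := by
    rw [hξ]; push_cast; field_simp
  have hrs : (r : ℂ) * Complex.sinh σ = S := by rw [hS]; push_cast; rfl
  have hd1 : deriv (nuF r) σ = ξ := by
    rw [hnear.self_of_nhds.deriv, chF_saddle hS hT, hrc]; field_simp
  have hd2 : deriv (deriv (nuF r)) σ = κ := by
    have he : deriv (nuF r) =ᶠ[𝓝 (σ : ℂ)] fun z => r * Complex.cosh z / chF r z := by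
      filter_upwards [hnear] with z hz using hz.deriv
    rw [he.deriv_eq]
    have := ((Complex.hasDerivAt_cosh (σ : ℂ)).const_mul (r : ℂ)).div (hasDerivAt_chF hm) (chF_ne r σ)
    have h2 := this.deriv
    have h3 : (fun z => (r : ℂ) * Complex.cosh z / chF r z) =
      (fun z => (r : ℂ) * Complex.cosh z) / chF r := rfl
    rw [h3, h2, chF_saddle hS hT, hrc, hrs, hκ]
    push_cast
    field_simp
  obtain ⟨c, C, δ, hC, hδ, h⟩ := taylor_three han hd1 hd2
  refine ⟨c, C, δ, hC, hδ, fun ζ hζ => ?_⟩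
  have h0 : nuF r σ = Real.log (S + T) := by
    rw [nuF, hel, Complex.ofReal_log (by positivity)]
  simpa only [h0] using h ζ hζ

end Saddle


/-! ### Asymptotics of the saddle-point integral -/

lemma geom_bound {ρ : ℝ} (h0 : 0 ≤ ρ) (h1 : ρ < 1) :
    ∃ M : ℝ, 0 ≤ M ∧ ∀ n : ℕ, 1 ≤ n → ((n : ℝ) + 1) * ρ ^ n ≤ M / (n : ℝ) ^ 2 := by
  obtain ⟨M, hM⟩ := (tendsto_pow_const_mul_const_pow_of_lt_one 3 h0 h1).bddAbove_range
  have hM' : ∀ n : ℕ, (n : ℝ) ^ 3 * ρ ^ n ≤ M := fun n => hM ⟨n, rfl⟩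
  have hM0 : 0 ≤ M := by simpa using hM' 0
  refine ⟨2 * M, by positivity, fun n hn => ?_⟩
  have hn' : (1 : ℝ) ≤ n := by exact_mod_cast hn
  rw [le_div_iff₀ (by positivity)]
  have := hM' n
  have hp : 0 ≤ ρ ^ n * (n : ℝ) ^ 2 := by positivity
  calc ((n : ℝ) + 1) * ρ ^ n * (n : ℝ) ^ 2 = (n + 1) * (ρ ^ n * (n : ℝ) ^ 2) := by ring
    _ ≤ (2 * n) * (ρ ^ n * (n : ℝ) ^ 2) := by gcongr; linarith
    _ = 2 * ((n : ℝ) ^ 3 * ρ ^ n) := by ring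
    _ ≤ _ := by linarith

/-- The bounded discrepancy `e = y_n - nξ` only perturbs the first-order coefficient of the amplitude
at the saddle, within a bound depending on `|e| ≤ B` alone. -/
lemma amplitude_linear {B C₁ e x : ℝ} {g₀ c₁ w : ℂ} (he : |e| ≤ B) (hx : |x| ≤ 1)
    (hw : ‖w - g₀ - c₁ * (x * Complex.I)‖ ≤ C₁ * x ^ 2) :
    ‖w * Complex.exp (-(e * x * Complex.I)) - g₀ - (Complex.I * (c₁ - e * g₀)) * x‖ ≤
      (C₁ + ‖g₀‖ * (B ^ 2 * Real.exp B) + ‖c₁‖ * (B * Real.exp B)) * x ^ 2 := by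
  set E := Complex.exp (-(e * x * Complex.I)) with hE
  have hB : 0 ≤ B := (abs_nonneg _).trans he
  have hEn : ‖E‖ = 1 := by
    rw [hE, show -((e : ℂ) * x * Complex.I) = ((-(e * x) : ℝ) : ℂ) * Complex.I by push_cast; ring]
    exact Complex.norm_exp_ofReal_mul_I _
  have hz : ‖-((e : ℂ) * x * Complex.I)‖ = |e| * |x| := by simp
  have hze : Real.exp (|e| * |x|) ≤ Real.exp B := by
    apply Real.exp_le_exp.2
    calc |e| * |x| ≤ B * 1 := by gcongr
      _ = B := mul_one B
  have h1 : ‖E - 1‖ ≤ B * |x| * Real.exp B := by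
    have := Complex.norm_exp_sub_sum_le_norm_mul_exp (-(e * x * Complex.I)) 1
    simp only [Finset.sum_range_succ, Finset.sum_range_zero, Nat.factorial, hz, pow_zero, pow_one,
      Nat.cast_one, zero_add, div_one] at this
    exact this.trans (by gcongr)
  have h2 : ‖E - 1 + e * x * Complex.I‖ ≤ B ^ 2 * x ^ 2 * Real.exp B := by
    have := Complex.norm_exp_sub_sum_le_norm_mul_exp (-(e * x * Complex.I)) 2
    simp only [Finset.sum_range_succ, Finset.sum_range_zero, Nat.factorial, hz, pow_zero, pow_one,
      Nat.cast_one, zero_add, div_one, mul_one] at this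
    have e1 : E - 1 + e * x * Complex.I = E - (1 + -(e * x * Complex.I)) := by ring
    rw [e1]
    refine this.trans ?_
    rw [mul_pow, sq_abs x]
    gcongr
  have e1 : w * E - g₀ - (Complex.I * (c₁ - e * g₀)) * x =
      (w - g₀ - c₁ * (x * Complex.I)) * E + g₀ * (E - 1 + e * x * Complex.I) +
        c₁ * (x * Complex.I) * (E - 1) := by ring
  rw [e1]
  refine (norm_add₃_le).trans ?_
  have b1 : ‖(w - g₀ - c₁ * (x * Complex.I)) * E‖ ≤ C₁ * x ^ 2 := by rw [norm_mul, hEn, mul_one]; exact hw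
  have b2 : ‖g₀ * (E - 1 + e * x * Complex.I)‖ ≤ ‖g₀‖ * (B ^ 2 * x ^ 2 * Real.exp B) := by
    rw [norm_mul]; gcongr
  have b3 : ‖c₁ * (x * Complex.I) * (E - 1)‖ ≤ ‖c₁‖ * |x| * (B * |x| * Real.exp B) := by
    rw [norm_mul, norm_mul]
    have : ‖(x : ℂ) * Complex.I‖ = |x| := by simp
    rw [this]; gcongr
  have hxx : |x| * |x| = x ^ 2 := by rw [← sq, sq_abs]
  calc _ ≤ C₁ * x ^ 2 + ‖g₀‖ * (B ^ 2 * x ^ 2 * Real.exp B) + ‖c₁‖ * |x| * (B * |x| * Real.exp B) := by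
        linarith
    _ = C₁ * x ^ 2 + ‖g₀‖ * (B ^ 2 * x ^ 2 * Real.exp B) + ‖c₁‖ * (|x| * |x|) * (B * Real.exp B) := by ring
    _ = _ := by rw [hxx]; ring

set_option maxHeartbeats 2000000 in
/-- Saddle-point asymptotics of the amplitude integral, normalised by the dominant eigenvalue `S + T`
at the saddle `x = 0`, uniformly in the discrepancy `e = y_n - nξ`. -/
lemma core_asymptotics {r σ S T ξ κ B : ℝ} (hr0 : 0 < r) (hr1 : r < 1) (hσ : 0 < σ) (hB : 0 ≤ B)
    (hS : S = r * Real.sinh σ) (hT : T = Real.sqrt (1 + S ^ 2))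
    (hξ : ξ = r * Real.cosh σ / T) (hκ : κ = S / T * (1 - ξ ^ 2))
    (α γ m₀ : ℂ) (k : ℕ → ℝ → ℂ) (hk0 : ∀ x, k 0 x = m₀)
    (hk1 : ∀ x : ℝ, k 1 x = α * Complex.exp (x * Complex.I) + γ * Complex.exp (-(x * Complex.I)))
    (hk : ∀ n x, k (n + 2) x = 2 * (r * Complex.sinh (σ + x * Complex.I)) * k (n + 1) x + k n x) :
    ∃ (g₀ : ℂ) (K : ℝ), ∀ n : ℕ, 1 ≤ n → ∀ e : ℝ, |e| ≤ B →
      ‖(∫ x in (-(Real.pi / 2))..(Real.pi / 2),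
          (((S + T) ^ n)⁻¹ : ℝ) * k n x * Complex.exp (-((n * ξ + e : ℝ) * x * Complex.I))) -
        g₀ * Real.sqrt (2 * Real.pi / (n * κ))‖ ≤ K / (n * Real.sqrt n) := by
  have hS0 : 0 < S := by rw [hS]; exact mul_pos hr0 (Real.sinh_pos_iff.2 hσ)
  have hT0 : 0 < T := by rw [hT]; positivity
  have hT2 : T ^ 2 = 1 + S ^ 2 := by rw [hT]; exact Real.sq_sqrt (by positivity)
  have hT1 : 1 < T := by nlinarith
  have hc2 : (r * Real.cosh σ) ^ 2 = r ^ 2 + S ^ 2 := by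
    rw [hS, mul_pow, mul_pow, Real.cosh_sq]; ring
  have hξ2 : ξ ^ 2 < 1 := by
    rw [hξ, div_pow, hc2, hT2, div_lt_one (by positivity)]; nlinarith
  have hκ0 : 0 < κ := by rw [hκ]; exact mul_pos (by positivity) (by linarith)
  set Λ := S + T with hΛ
  have hΛ1 : 1 < Λ := by linarith
  have hΛ0 : 0 < Λ := by linarith
  have hkc : ∀ n, Continuous (k n) ∧ Continuous (k (n + 1)) := by
    intro n
    induction n with
    | zero =>
      refine ⟨?_, ?_⟩
      · rw [show k 0 = fun _ => m₀ from funext hk0]; fun_prop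
      · rw [show k (0 + 1) = fun x : ℝ => α * Complex.exp (x * Complex.I) + γ * Complex.exp (-(x * Complex.I))
          from funext hk1]
        fun_prop
    | succ n ih =>
      refine ⟨ih.2, ?_⟩
      rw [show k (n + 1 + 1) = fun x : ℝ =>
        2 * (r * Complex.sinh (σ + x * Complex.I)) * k (n + 1) x + k n x from funext (hk n)]
      have := ih.1
      have := ih.2
      fun_prop
  obtain ⟨c, C, δ₁, hC, hδ₁, htay⟩ := nuF_taylor hS hS0 hT hξ hκ
  have hm := saddle_mem hS
  have hel := elF_saddle hS hT
  have hmz : 1 + ((r : ℂ) * Complex.sinh ((σ : ℂ) + 0)) ^ 2 ∈ Complex.slitPlane := by simpa using hm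
  have hshift : AnalyticAt ℂ (fun ζ : ℂ => (σ : ℂ) + ζ) 0 := analyticAt_const.add analyticAt_id
  have hEl : AnalyticAt ℂ (fun ζ : ℂ => elF r (σ + ζ)) 0 := (analyticAt_elF hmz).comp hshift
  have hCh : AnalyticAt ℂ (fun ζ : ℂ => chF r (σ + ζ)) 0 := (analyticAt_chF hmz).comp hshift
  have hexp : AnalyticAt ℂ (fun ζ : ℂ => α * Complex.exp ζ + γ * Complex.exp (-ζ)) 0 := by fun_prop
  have h2Ch : AnalyticAt ℂ (fun ζ : ℂ => 2 * chF r (σ + ζ)) 0 := analyticAt_const.mul hCh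
  have h2Ch0 : ∀ ζ : ℂ, 2 * chF r (σ + ζ) ≠ 0 := fun ζ => mul_ne_zero two_ne_zero (chF_ne _ _)
  have hEl0 : elF r (σ + 0) ≠ 0 := elF_ne (Complex.slitPlane_ne_zero hmz)
  set hb : ℂ → ℂ := fun ζ => (α * Complex.exp ζ + γ * Complex.exp (-ζ) + m₀ / elF r (σ + ζ)) /
    (2 * chF r (σ + ζ)) with hhb
  have hbA : AnalyticAt ℂ hb 0 :=
    (hexp.add (analyticAt_const.div hEl hEl0)).div h2Ch (h2Ch0 0)
  set hs : ℂ → ℂ := fun ζ => (α * Complex.exp ζ + γ * Complex.exp (-ζ) - elF r (σ + ζ) * m₀) /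
    (2 * chF r (σ + ζ)) with hhs
  have hsA : AnalyticAt ℂ hs 0 :=
    (hexp.sub (hEl.mul analyticAt_const)).div h2Ch (h2Ch0 0)
  obtain ⟨c₁, C₁, δ₂, hC₁, hδ₂, htay₁⟩ := taylor_one hbA
  set g₀ := hb 0 with hg₀
  have hev : ∀ᶠ ζ : ℂ in 𝓝 0, (1 + ((r : ℂ) * Complex.sinh (σ + ζ)) ^ 2 ≠ 0 ∧ 1 ≤ ‖elF r (σ + ζ)‖) ∧
      ‖hs ζ‖ ≤ ‖hs 0‖ + 1 := by
    have e1 : ∀ᶠ ζ : ℂ in 𝓝 0, 1 + ((r : ℂ) * Complex.sinh (σ + ζ)) ^ 2 ≠ 0 := by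
      have : ContinuousAt (fun ζ : ℂ => 1 + ((r : ℂ) * Complex.sinh (σ + ζ)) ^ 2) 0 := by fun_prop
      exact this.eventually_ne (Complex.slitPlane_ne_zero hmz)
    have e2 : ∀ᶠ ζ : ℂ in 𝓝 0, 1 < ‖elF r (σ + ζ)‖ := by
      refine hEl.continuousAt.norm.eventually_const_lt ?_
      show 1 < ‖elF r ((σ : ℂ) + 0)‖
      rw [add_zero, hel, Complex.norm_real, Real.norm_of_nonneg hΛ0.le]; exact hΛ1
    have e3 : ∀ᶠ ζ : ℂ in 𝓝 0, ‖hs ζ‖ < ‖hs 0‖ + 1 :=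
      hsA.continuousAt.norm.eventually_lt_const (by linarith)
    filter_upwards [e1, e2, e3] with ζ h1 h2 h3 using ⟨⟨h1, h2.le⟩, h3.le⟩
  obtain ⟨δ₃, hδ₃, hnbd⟩ := Metric.eventually_nhds_iff.1 hev
  set A := C + ‖c‖ + 1 with hA
  have hA0 : 0 < A := by positivity
  obtain ⟨δ, hδ0, hδ1, hδd₁, hδd₂, hδd₃, hδA⟩ : ∃ δ : ℝ, 0 < δ ∧ δ ≤ 1 ∧ δ ≤ δ₁ ∧ δ ≤ δ₂ ∧ δ < δ₃ ∧
      δ ≤ κ / (4 * A) := by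
    refine ⟨min 1 (min δ₁ (min δ₂ (min (δ₃ / 2) (κ / (4 * A))))), by positivity, ?_⟩
    refine ⟨min_le_left _ _, by simp, by simp, ?_, by simp⟩
    have : min 1 (min δ₁ (min δ₂ (min (δ₃ / 2) (κ / (4 * A))))) ≤ δ₃ / 2 := by simp
    linarith
  have hnI : ∀ x : ℝ, ‖(x : ℂ) * Complex.I‖ = |x| := fun x => by simp
  set u : ℝ → ℂ := fun x => nuF r (σ + x * Complex.I) - Real.log Λ - ξ * (x * Complex.I) + κ / 2 * x ^ 2
    with hu
  have hu2 : ∀ x : ℝ, |x| ≤ δ → ‖u x - (-(Complex.I * c)) * x ^ 3‖ ≤ C * x ^ 4 := by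
    intro x hx
    have := htay (x * Complex.I) (by rw [hnI]; linarith)
    rw [hnI, show |x| ^ 4 = x ^ 4 from Even.pow_abs (by decide) x] at this
    refine (le_of_eq ?_).trans this
    congr 1
    have i2 : Complex.I ^ 2 = -1 := Complex.I_sq
    have i3 : Complex.I ^ 3 = -Complex.I := by rw [pow_succ, i2]; ring
    simp only [hu, mul_pow, i2, i3]; ring
  have hu1 : ∀ x : ℝ, |x| ≤ δ → ‖u x‖ ≤ κ / 4 * x ^ 2 := by
    intro x hx
    have h1 := hu2 x hx
    have h2 := norm_add_le (u x - (-(Complex.I * c)) * x ^ 3) ((-(Complex.I * c)) * x ^ 3)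
    rw [sub_add_cancel] at h2
    have h3 : ‖(-(Complex.I * c)) * (x : ℂ) ^ 3‖ = ‖c‖ * |x| ^ 3 := by simp
    have h4 : x ^ 4 = |x| ^ 4 := (Even.pow_abs (by decide) x).symm
    have hX := abs_nonneg x
    have h5 : |x| ^ 4 ≤ |x| ^ 3 := pow_le_pow_of_le_one hX (hx.trans hδ1) (by norm_num)
    have h6 : A * |x| ≤ κ / 4 := by
      have : |x| ≤ κ / (4 * A) := hx.trans hδA
      rw [le_div_iff₀ (by positivity)] at this
      linarith
    rw [h3] at h2
    rw [h4] at h1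
    calc ‖u x‖ ≤ C * |x| ^ 4 + ‖c‖ * |x| ^ 3 := by linarith
      _ ≤ C * |x| ^ 3 + ‖c‖ * |x| ^ 3 := by gcongr
      _ ≤ (A * |x|) * |x| ^ 2 := by rw [hA]; nlinarith [pow_nonneg hX 3]
      _ ≤ κ / 4 * |x| ^ 2 := by gcongr
      _ = _ := by rw [sq_abs]
  -- exponentially small contributions
  obtain ⟨M₁, hM₁, hgeo₁⟩ := geom_bound (ρ := Λ⁻¹) (by positivity) (inv_lt_one_of_one_lt₀ hΛ1)
  set η := Real.sin δ ^ 2 with hη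
  have hsinδ : 0 < Real.sin δ := Real.sin_pos_of_pos_of_lt_pi hδ0 (by linarith [Real.pi_gt_three])
  have hη0 : 0 < η := by positivity
  set t := S ^ 2 - η * (S ^ 2 * (1 - r ^ 2) / (1 + S ^ 2)) with ht
  have hr2 : 0 < 1 - r ^ 2 := by nlinarith
  have htS : t < S ^ 2 := by
    have : 0 < η * (S ^ 2 * (1 - r ^ 2) / (1 + S ^ 2)) := by positivity
    linarith
  set R := Real.sqrt t + Real.sqrt (1 + t) with hR
  have hRΛ : R < Λ := by
    have h1 : Real.sqrt t < S := (Real.sqrt_lt' hS0).2 htS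
    have h2 : Real.sqrt (1 + t) ≤ T := by rw [hT]; exact Real.sqrt_le_sqrt (by linarith)
    linarith
  have hR0 : 0 ≤ R := by positivity
  obtain ⟨M₂, hM₂, hgeo₂⟩ := geom_bound (ρ := R / Λ) (by positivity) ((div_lt_one hΛ0).2 hRΛ)
  set C₀ := ‖α‖ + ‖γ‖ + ‖m₀‖ with hC₀
  have hunit : ∀ s : ℝ, ‖Complex.exp (s * Complex.I)‖ = 1 := Complex.norm_exp_ofReal_mul_I
  have hk1n : ∀ x, ‖k 1 x‖ ≤ C₀ := by
    intro x
    rw [hk1]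
    refine (norm_add_le _ _).trans ?_
    rw [norm_mul, norm_mul, hunit, show -((x : ℂ) * Complex.I) = ((-x : ℝ) : ℂ) * Complex.I by
      push_cast; ring, hunit]
    have := norm_nonneg m₀
    rw [hC₀]; linarith
  have hk0n : ∀ x, ‖k 0 x‖ ≤ C₀ := by
    intro x; rw [hk0, hC₀]; linarith [norm_nonneg α, norm_nonneg γ]
  set B₁ := C₁ + ‖g₀‖ * (B ^ 2 * Real.exp B) + ‖c₁‖ * (B * Real.exp B) with hB₁
  have hB₁0 : 0 ≤ B₁ := by positivity
  set B' := B₁ + (‖c₁‖ + B * ‖g₀‖) + (‖hs 0‖ + 1) * M₁ + 2 * C₀ * M₂ with hB'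
  have hB'0 : 0 ≤ B' := by positivity
  have q1 : 0 ≤ ‖c₁‖ + B * ‖g₀‖ := by positivity
  have q2 : 0 ≤ (‖hs 0‖ + 1) * M₁ := by positivity
  have q3 : 0 ≤ 2 * C₀ * M₂ := by positivity
  obtain ⟨K, hK⟩ := laplace hκ0 hδ0 hδ1 hC hB'0 u (-(Complex.I * c)) g₀ hu1 hu2
  refine ⟨g₀, K, fun n hn e he => ?_⟩
  have hn1 : (1 : ℝ) ≤ n := by exact_mod_cast hn
  have hn0 : (0 : ℝ) < n := by linarith
  have := hK n hn1 (fun x => hb (x * Complex.I) * Complex.exp (-(e * x * Complex.I)))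
    (fun x => (((Λ ^ n)⁻¹ : ℝ) : ℂ) * k n x * Complex.exp (-((n * ξ + e : ℝ) * x * Complex.I)))
    (Complex.I * (c₁ - e * g₀)) (by have := (hkc n).1; fun_prop) ?_ ?_ ?_ ?_
  · exact this
  · rw [norm_mul, Complex.norm_I, one_mul]
    refine (norm_sub_le _ _).trans ?_
    have h1 : ‖(e : ℂ) * g₀‖ ≤ B * ‖g₀‖ := by
      rw [norm_mul, Complex.norm_real, Real.norm_eq_abs]; gcongr
    linarith
  · intro x hx
    have h1 := htay₁ (x * Complex.I) (by rw [hnI]; linarith)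
    rw [zero_add, hnI, sq_abs] at h1
    refine (amplitude_linear he (hx.trans hδ1) h1).trans ?_
    have : B₁ ≤ B' := by linarith
    exact mul_le_mul_of_nonneg_right this (sq_nonneg x)
  · intro x hx
    obtain ⟨⟨n1, n2⟩, n3⟩ := hnbd (y := x * Complex.I) (by rw [dist_zero_right, hnI]; linarith)
    set L := elF r (σ + x * Complex.I) with hL
    have hL0 : L ≠ 0 := elF_ne n1
    have hinv := elF_inv n1
    have hp : 2 * (r * Complex.sinh (σ + x * Complex.I)) = L - L⁻¹ := by
      rw [hL, hinv, elF]; ring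
    have hsum : 2 * chF r (σ + x * Complex.I) = L + L⁻¹ := by
      rw [hL, hinv, elF]; ring
    have hcf := closed_form (k := fun n => k n x) (fun n => hk n x) hL0 hp hsum (chF_ne _ _) n
    simp only [hk0, hk1] at hcf
    have hb' : hb (x * Complex.I) = (α * Complex.exp (x * Complex.I) + γ * Complex.exp (-(x * Complex.I)) +
      m₀ / L) / (2 * chF r (σ + x * Complex.I)) := rfl
    have hs' : hs (x * Complex.I) = (α * Complex.exp (x * Complex.I) + γ * Complex.exp (-(x * Complex.I)) -
      L * m₀) / (2 * chF r (σ + x * Complex.I)) := rfl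
    rw [← hb', ← hs'] at hcf
    have hE : Complex.exp (n * (u x - κ / 2 * x ^ 2)) * Complex.exp (-(e * x * Complex.I)) =
        L ^ n * (((Λ ^ n)⁻¹ : ℝ) : ℂ) * Complex.exp (-((n * ξ + e : ℝ) * x * Complex.I)) := by
      have l1 : Complex.exp (n * nuF r (σ + x * Complex.I)) = L ^ n := by
        rw [Complex.exp_nat_mul, nuF, Complex.exp_log hL0]
      have l2 : Complex.exp (-(n * (Real.log Λ : ℂ))) = (((Λ ^ n)⁻¹ : ℝ) : ℂ) := by
        rw [Complex.exp_neg, Complex.exp_nat_mul, ← Complex.ofReal_exp, Real.exp_log hΛ0]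
        push_cast; rfl
      rw [← l1, ← l2, ← Complex.exp_add, ← Complex.exp_add, ← Complex.exp_add]
      congr 1
      simp only [hu]; push_cast; ring
    have hdiff : (((Λ ^ n)⁻¹ : ℝ) : ℂ) * k n x * Complex.exp (-((n * ξ + e : ℝ) * x * Complex.I)) -
        hb (x * Complex.I) * Complex.exp (-(e * x * Complex.I)) *
          Complex.exp (n * (u x - κ / 2 * x ^ 2)) =
        -((((Λ ^ n)⁻¹ : ℝ) : ℂ) * (-L⁻¹) ^ n * hs (x * Complex.I) *
          Complex.exp (-((n * ξ + e : ℝ) * x * Complex.I))) := by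
      rw [hcf]
      linear_combination -hb (x * Complex.I) * hE
    have hcast : ((n : ℝ) : ℂ) = (n : ℂ) := by simp
    rw [hcast, hdiff, norm_neg, norm_mul, norm_mul, norm_mul, norm_pow, norm_neg, norm_inv, Complex.norm_real,
      show -(((n * ξ + e : ℝ) : ℂ) * x * Complex.I) = ((-((n * ξ + e) * x) : ℝ) : ℂ) * Complex.I by
        push_cast; ring, hunit, mul_one, Real.norm_of_nonneg (by positivity)]
    have hLn : (‖L‖⁻¹) ^ n ≤ 1 := pow_le_one₀ (by positivity) (inv_le_one_of_one_le₀ n2)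
    have hg := hgeo₁ n hn
    rw [inv_pow] at hg
    have hΛn : 0 ≤ (Λ ^ n)⁻¹ := by positivity
    calc (Λ ^ n)⁻¹ * ‖L‖⁻¹ ^ n * ‖hs (x * Complex.I)‖ ≤ (Λ ^ n)⁻¹ * 1 * (‖hs 0‖ + 1) := by gcongr
      _ ≤ ((n : ℝ) + 1) * (Λ ^ n)⁻¹ * (‖hs 0‖ + 1) := by
        refine mul_le_mul_of_nonneg_right ?_ (by positivity)
        nlinarith [mul_nonneg hn0.le hΛn]
      _ ≤ M₁ / (n : ℝ) ^ 2 * (‖hs 0‖ + 1) := by gcongr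
      _ = (‖hs 0‖ + 1) * M₁ / (n : ℝ) ^ 2 := by ring
      _ ≤ B' / (n : ℝ) ^ 2 := by
        gcongr
        linarith
  · intro x hx1 hx2
    obtain ⟨L, hL, hp⟩ := exists_root (r * Complex.sinh (σ + x * Complex.I))
    have hval : (r : ℂ) * Complex.sinh (σ + x * Complex.I) =
        ((S * Real.cos x : ℝ) : ℂ) + ((r * Real.cosh σ * Real.sin x : ℝ) : ℂ) * Complex.I := by
      rw [Complex.sinh_add, Complex.sinh_mul_I, Complex.cosh_mul_I, hS]; push_cast; ring
    have hre : ((r : ℂ) * Complex.sinh (σ + x * Complex.I)).re ^ 2 = S ^ 2 * Real.cos x ^ 2 := by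
      rw [hval, Complex.add_re, Complex.re_ofReal_mul, Complex.I_re, Complex.ofReal_re]
      ring
    have him : ((r : ℂ) * Complex.sinh (σ + x * Complex.I)).im ^ 2 = (r ^ 2 + S ^ 2) * Real.sin x ^ 2 := by
      rw [hval, ← hc2, Complex.add_im, Complex.im_ofReal_mul, Complex.I_im, Complex.ofReal_im]; ring
    have hsin : η ≤ Real.sin x ^ 2 := by
      have h1 : Real.sin δ ≤ Real.sin |x| :=
        Real.sin_le_sin_of_le_of_le_pi_div_two (by linarith [Real.pi_pos]) hx2 hx1
      have h2 : Real.sin |x| ^ 2 = Real.sin x ^ 2 := by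
        rcases abs_choice x with h | h <;> rw [h]
        rw [Real.sin_neg, neg_sq]
      rw [← h2, hη]; gcongr
    have hLR := far_root hS0 hr0 hr1 hL hp hre him hsin ht
    have hb2 := norm_rec_le (k := fun n => k n x) (fun n => hk n x) hL hp hLR (hk0n x) (hk1n x) n
    rw [norm_mul, norm_mul, Complex.norm_real,
      show -(((n * ξ + e : ℝ) : ℂ) * x * Complex.I) = ((-((n * ξ + e) * x) : ℝ) : ℂ) * Complex.I by
        push_cast; ring, hunit, mul_one, Real.norm_of_nonneg (by positivity)]
    have hg := hgeo₂ n hn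
    calc (Λ ^ n)⁻¹ * ‖k n x‖ ≤ (Λ ^ n)⁻¹ * (2 * C₀ * (n + 1) * R ^ n) := by gcongr
      _ = 2 * C₀ * (((n : ℝ) + 1) * (R / Λ) ^ n) := by rw [div_pow]; ring
      _ ≤ 2 * C₀ * (M₂ / (n : ℝ) ^ 2) := by gcongr
      _ = 2 * C₀ * M₂ / (n : ℝ) ^ 2 := by ring
      _ ≤ B' / (n : ℝ) ^ 2 := by
        gcongr
        linarith


/-! ### Fourier representation of the amplitude -/

/-- The symbol `P w⁻¹ + Q w` of the walk, acting on `ℂ²`; `U` becomes multiplication by it under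
`f(x) = ∫ f̂(w) w⁻ˣ`. -/
def symb (a b w : ℂ) (u : ℂ × ℂ) : ℂ × ℂ :=
  (a / w * u.1 + b * w * u.2, -(starRingEnd ℂ) b / w * u.1 + (starRingEnd ℂ) a * w * u.2)

lemma continuous_symb_iterate (a b : ℂ) (φ : ℂ × ℂ) {w : ℝ → ℂ} (hw : Continuous w)
    (hw0 : ∀ x, w x ≠ 0) (n : ℕ) : Continuous fun x => (symb a b (w x))^[n] φ := by
  induction n with
  | zero => exact continuous_const
  | succ n ih =>
    simp only [Function.iterate_succ_apply', symb]
    have h1 := ih.fst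
    have h2 := ih.snd
    have h3 : Continuous fun x => a / w x := continuous_const.div hw hw0
    have h4 : Continuous fun x => -(starRingEnd ℂ) b / w x := continuous_const.div hw hw0
    fun_prop

/-- `∫ w^{-y}` over a circle of any radius vanishes unless `y = 0`. -/
lemma integral_zpow_circle {c : ℂ} (y : ℤ) :
    ∫ x in (-(Real.pi / 2))..(Real.pi / 2 + Real.pi), (c * Complex.exp (x * Complex.I)) ^ (-y) =
      if y = 0 then 2 * (Real.pi : ℂ) else 0 := by
  split_ifs with h
  · subst h
    simp only [neg_zero, zpow_zero, intervalIntegral.integral_const, Complex.real_smul, mul_one]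
    push_cast; ring
  · have h1 : ∀ x : ℝ, (c * Complex.exp (x * Complex.I)) ^ (-y) =
        c ^ (-y) * Complex.exp ((-y * Complex.I) * x) := by
      intro x
      rw [mul_zpow, ← Complex.exp_int_mul]
      congr 2; push_cast; ring
    simp only [h1]
    rw [intervalIntegral.integral_const_mul, integral_exp_mul_complex]
    · have : Complex.exp (-y * Complex.I * ((Real.pi / 2 + Real.pi : ℝ) : ℂ)) =
          Complex.exp (-y * Complex.I * ((-(Real.pi / 2) : ℝ) : ℂ)) := by
        rw [Complex.exp_eq_exp_iff_exists_int]
        exact ⟨-y, by push_cast; ring⟩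
      rw [this, sub_self]; simp
    · simpa using h

/-- Fourier inversion on the circle of radius `|c|`: because the walk has finite range, `Uⁿ(δ₀ ⊗ φ)` has
a Laurent polynomial as its transform, and any radius is allowed. -/
lemma walk_fourier (a b : ℂ) (φ : ℂ × ℂ) {c : ℂ} (hc : c ≠ 0) {w : ℝ → ℂ}
    (hw : ∀ x : ℝ, w x = c * Complex.exp (x * Complex.I)) (n : ℕ) (y : ℤ) :
    (2 * Real.pi : ℂ) * ((qwStep a b)^[n] (qwDelta φ) y).1 =
        ∫ x in (-(Real.pi / 2))..(Real.pi / 2 + Real.pi), ((symb a b (w x))^[n] φ).1 * w x ^ (-y) ∧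
      (2 * Real.pi : ℂ) * ((qwStep a b)^[n] (qwDelta φ) y).2 =
        ∫ x in (-(Real.pi / 2))..(Real.pi / 2 + Real.pi), ((symb a b (w x))^[n] φ).2 * w x ^ (-y) := by
  have hw0 : ∀ x, w x ≠ 0 := fun x => by rw [hw]; exact mul_ne_zero hc (Complex.exp_ne_zero _)
  have hwc : Continuous w := by rw [funext hw]; fun_prop
  have hz : ∀ m : ℤ, Continuous fun x => w x ^ m := fun m =>
    hwc.zpow₀ m fun x => Or.inl (hw0 x)
  induction n generalizing y with
  | zero =>
    simp only [Function.iterate_zero, id_eq, intervalIntegral.integral_const_mul]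
    simp only [hw, integral_zpow_circle, qwDelta]
    split_ifs <;> simp [mul_comm]
  | succ n ih =>
    have hcs := continuous_symb_iterate a b φ hwc hw0 n
    have i1 : ∀ m : ℤ, IntervalIntegrable (fun x => ((symb a b (w x))^[n] φ).1 * w x ^ m) volume
        (-(Real.pi / 2)) (Real.pi / 2 + Real.pi) := fun m => (hcs.fst.mul (hz m)).intervalIntegrable _ _
    have i2 : ∀ m : ℤ, IntervalIntegrable (fun x => ((symb a b (w x))^[n] φ).2 * w x ^ m) volume
        (-(Real.pi / 2)) (Real.pi / 2 + Real.pi) := fun m => (hcs.snd.mul (hz m)).intervalIntegrable _ _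
    have z1 : ∀ x, w x ^ (-(y + 1)) = w x ^ (-y) / w x := fun x => by
      rw [neg_add, ← sub_eq_add_neg, zpow_sub_one₀ (hw0 x), div_eq_mul_inv]
    have z2 : ∀ x, w x ^ (-(y - 1)) = w x ^ (-y) * w x := fun x => by
      rw [show -(y - 1) = -y + 1 by ring, zpow_add_one₀ (hw0 x)]
    have key : ∀ p q : ℂ, p * (2 * Real.pi * ((qwStep a b)^[n] (qwDelta φ) (y + 1)).1) +
        q * (2 * Real.pi * ((qwStep a b)^[n] (qwDelta φ) (y - 1)).2) =
        ∫ x in (-(Real.pi / 2))..(Real.pi / 2 + Real.pi),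
          (p / w x * ((symb a b (w x))^[n] φ).1 + q * w x * ((symb a b (w x))^[n] φ).2) * w x ^ (-y) := by
      intro p q
      rw [(ih (y + 1)).1, (ih (y - 1)).2, ← intervalIntegral.integral_const_mul,
        ← intervalIntegral.integral_const_mul, ← intervalIntegral.integral_add ((i1 _).const_mul p)
          ((i2 _).const_mul q)]
      refine intervalIntegral.integral_congr fun x _ => ?_
      simp only [z1, z2]; ring
    simp only [Function.iterate_succ_apply', symb, qwStep]
    refine ⟨?_, ?_⟩
    · rw [← key]; ring
    · rw [← key]; ring

lemma symb_neg (a b w : ℂ) (u : ℂ × ℂ) : symb a b (-w) u = -symb a b w u := by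
  simp only [symb, div_neg, Prod.neg_mk, Prod.mk.injEq]
  constructor <;> ring

lemma symb_smul (a b w s : ℂ) (u : ℂ × ℂ) : symb a b w (s • u) = s • symb a b w u := by
  simp only [symb, Prod.smul_fst, Prod.smul_snd, smul_eq_mul, Prod.smul_mk, Prod.mk.injEq]
  constructor <;> ring

lemma symb_neg_iterate (a b w : ℂ) (φ : ℂ × ℂ) (n : ℕ) :
    (symb a b (-w))^[n] φ = (-1 : ℂ) ^ n • (symb a b w)^[n] φ := by
  induction n with
  | zero => simp
  | succ n ih =>
    rw [Function.iterate_succ_apply', ih, symb_smul, symb_neg, Function.iterate_succ_apply', pow_succ,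
      mul_smul, neg_one_smul]

lemma innC_smul (s : ℂ) (u v : ℂ × ℂ) : innC (s • u) v = s * innC u v := by
  simp only [innC, Prod.smul_fst, Prod.smul_snd, smul_eq_mul]; ring

/-- Cayley–Hamilton for the symbol, whose determinant is `|a|² + |b|² = 1`. -/
lemma innC_symb_symb {a b w : ℂ} (hab1 : ‖a‖ ^ 2 + ‖b‖ ^ 2 = 1) (hw : w ≠ 0) (u v : ℂ × ℂ) :
    innC (symb a b w (symb a b w u)) v =
      (a / w + (starRingEnd ℂ) a * w) * innC (symb a b w u) v - innC u v := by
  have hdet : a * (starRingEnd ℂ) a + b * (starRingEnd ℂ) b = 1 := by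
    rw [Complex.mul_conj, Complex.mul_conj, Complex.normSq_eq_norm_sq, Complex.normSq_eq_norm_sq]
    exact_mod_cast hab1
  simp only [innC, symb]
  field_simp
  linear_combination (-(u.1 * (starRingEnd ℂ) v.1) - u.2 * (starRingEnd ℂ) v.2) * w ^ 2 * hdet

/-- Since the symbol is odd in `w`, the two half circles contribute equally up to the sign
`(-1)^(n+y)`. -/
lemma amplitude_half_circle (a b : ℂ) (φ ψ : ℂ × ℂ) {c : ℂ} (hc : c ≠ 0) {w : ℝ → ℂ}
    (hw : ∀ x : ℝ, w x = c * Complex.exp (x * Complex.I)) (n : ℕ) (y : ℤ) :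
    (2 * Real.pi : ℂ) * innC ((qwStep a b)^[n] (qwDelta φ) y) ψ =
      (1 + (-1 : ℂ) ^ ((n : ℤ) + y)) * ∫ x in (-(Real.pi / 2))..(Real.pi / 2),
        innC ((symb a b (w x))^[n] φ) ψ * w x ^ (-y) := by
  have hw0 : ∀ x, w x ≠ 0 := fun x => by rw [hw]; exact mul_ne_zero hc (Complex.exp_ne_zero _)
  have hwc : Continuous w := by rw [funext hw]; fun_prop
  have hz : ∀ m : ℤ, Continuous fun x => w x ^ m := fun m =>
    hwc.zpow₀ m fun x => Or.inl (hw0 x)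
  have hcs := continuous_symb_iterate a b φ hwc hw0 n
  obtain ⟨h1, h2⟩ := walk_fourier a b φ hc hw n y
  set G : ℝ → ℂ := fun x => innC ((symb a b (w x))^[n] φ) ψ * w x ^ (-y) with hG
  have hGc : Continuous G := by
    simp only [hG, innC]
    have := hcs.fst
    have := hcs.snd
    have := hz (-y)
    fun_prop
  have htot : (2 * Real.pi : ℂ) * innC ((qwStep a b)^[n] (qwDelta φ) y) ψ =
      ∫ x in (-(Real.pi / 2))..(Real.pi / 2 + Real.pi), G x := by
    have e1 : (2 * Real.pi : ℂ) * innC ((qwStep a b)^[n] (qwDelta φ) y) ψ =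
        (2 * Real.pi * ((qwStep a b)^[n] (qwDelta φ) y).1) * (starRingEnd ℂ) ψ.1 +
        (2 * Real.pi * ((qwStep a b)^[n] (qwDelta φ) y).2) * (starRingEnd ℂ) ψ.2 := by
      simp only [innC]; ring
    have c1 : Continuous fun x => ((symb a b (w x))^[n] φ).1 * w x ^ (-y) * (starRingEnd ℂ) ψ.1 :=
      (hcs.fst.mul (hz _)).mul continuous_const
    have c2 : Continuous fun x => ((symb a b (w x))^[n] φ).2 * w x ^ (-y) * (starRingEnd ℂ) ψ.2 :=
      (hcs.snd.mul (hz _)).mul continuous_const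
    rw [e1, h1, h2, ← intervalIntegral.integral_mul_const, ← intervalIntegral.integral_mul_const,
      ← intervalIntegral.integral_add (c1.intervalIntegrable _ _) (c2.intervalIntegrable _ _)]
    refine intervalIntegral.integral_congr fun x _ => ?_
    simp only [hG, innC]; ring
  have hshift : ∀ x, G (x + Real.pi) = (-1 : ℂ) ^ ((n : ℤ) + y) * G x := by
    intro x
    have hwπ : w (x + Real.pi) = -w x := by
      rw [hw, hw]; push_cast
      rw [add_mul, Complex.exp_add, Complex.exp_pi_mul_I]; ring
    have hy : (-1 : ℂ) ^ (-y) = (-1 : ℂ) ^ y := by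
      rw [zpow_neg, ← inv_zpow]; norm_num
    simp only [hG]
    rw [hwπ, symb_neg_iterate, innC_smul, neg_eq_neg_one_mul (w x), mul_zpow, hy,
      zpow_add₀ (by norm_num), zpow_natCast]
    ring
  rw [htot, ← intervalIntegral.integral_add_adjacent_intervals
    (hGc.intervalIntegrable _ (Real.pi / 2)) (hGc.intervalIntegrable _ _)]
  have hsub : ∫ x in (Real.pi / 2)..(Real.pi / 2 + Real.pi), G x =
      ∫ x in (-(Real.pi / 2))..(Real.pi / 2), G (x + Real.pi) := by
    rw [intervalIntegral.integral_comp_add_right]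
    congr 1; ring
  rw [hsub]
  simp only [hshift, intervalIntegral.integral_const_mul]
  ring

/-- The amplitude as an oscillatory integral on the circle of radius `e^σ`, in terms of functions
`k n` obeying the three-term recursion with coefficient `2 r sinh (σ + ix)`. -/
lemma amplitude_eq {a b : ℂ} (hab1 : ‖a‖ ^ 2 + ‖b‖ ^ 2 = 1) (ha : a ≠ 0) (φ ψ : ℂ × ℂ) (σ : ℝ) :
    ∃ (α γ m₀ : ℂ) (k : ℕ → ℝ → ℂ), (∀ x, k 0 x = m₀) ∧
      (∀ x : ℝ, k 1 x = α * Complex.exp (x * Complex.I) + γ * Complex.exp (-(x * Complex.I))) ∧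
      (∀ n x, k (n + 2) x =
        2 * (‖a‖ * Complex.sinh (σ + x * Complex.I)) * k (n + 1) x + k n x) ∧
      ∀ (n : ℕ) (y : ℤ), innC ((qwStep a b)^[n] (qwDelta φ) y) ψ =
        (1 + (-1 : ℂ) ^ ((n : ℤ) + y)) * (a / (‖a‖ : ℂ)) ^ (-y) *
          Complex.exp (Real.pi * Complex.I * ((((n : ℝ) - y) / 2 : ℝ) : ℂ)) *
          ((Real.exp (-(y * σ)) / (2 * Real.pi) : ℝ) : ℂ) *
          ∫ x in (-(Real.pi / 2))..(Real.pi / 2), k n x * Complex.exp (-((y : ℝ) * x * Complex.I)) := by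
  have hr : (‖a‖ : ℂ) ≠ 0 := by simpa using ha
  set ω : ℂ := a / (‖a‖ : ℂ) with hω
  have hω0 : ω ≠ 0 := div_ne_zero ha hr
  have haω : a = ‖a‖ * ω := by rw [hω]; field_simp
  have hωω : (starRingEnd ℂ) ω * ω = 1 := by
    rw [mul_comm, Complex.mul_conj, Complex.normSq_eq_norm_sq, hω, norm_div, Complex.norm_real, norm_norm,
      div_self (by simpa using ha)]
    simp
  have haω' : (starRingEnd ℂ) a = ‖a‖ * ω⁻¹ := by
    rw [eq_comm, mul_inv_eq_iff_eq_mul₀ hω0]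
    conv_rhs => rw [haω]
    rw [map_mul, Complex.conj_ofReal, mul_assoc, hωω, mul_one]
  -- the phase `-iω` of the circle's base point turns the trace of the symbol into `-2i r sinh (σ + ix)`
  -- and places the saddle at `x = 0`
  set c : ℂ := -Complex.I * ω * Complex.exp σ with hc
  have hc0 : c ≠ 0 := mul_ne_zero (mul_ne_zero (neg_ne_zero.2 Complex.I_ne_zero) hω0) (Complex.exp_ne_zero _)
  set w : ℝ → ℂ := fun x => c * Complex.exp (x * Complex.I) with hw
  have hw0 : ∀ x, w x ≠ 0 := fun x => mul_ne_zero hc0 (Complex.exp_ne_zero _)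
  refine ⟨Complex.I * c * (b * φ.2 * (starRingEnd ℂ) ψ.1 + (starRingEnd ℂ) a * φ.2 * (starRingEnd ℂ) ψ.2),
    Complex.I * c⁻¹ * (a * φ.1 * (starRingEnd ℂ) ψ.1 - (starRingEnd ℂ) b * φ.1 * (starRingEnd ℂ) ψ.2),
    innC φ ψ, fun n x => Complex.I ^ n * innC ((symb a b (w x))^[n] φ) ψ, ?_, ?_, ?_, ?_⟩
  · intro x; simp
  · intro x
    simp only [pow_one, Function.iterate_one, innC, symb, hw, Complex.exp_neg]
    have := Complex.exp_ne_zero (x * Complex.I)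
    field_simp
    ring
  · intro n x
    have htr : a / w x + (starRingEnd ℂ) a * w x =
        -Complex.I * (2 * (‖a‖ * Complex.sinh (σ + x * Complex.I))) := by
      have hwx : w x = -Complex.I * ω * Complex.exp (σ + x * Complex.I) := by
        simp only [hw, hc]; rw [Complex.exp_add]; ring
      have hE := Complex.exp_ne_zero (σ + x * Complex.I)
      have haw : a / w x = ‖a‖ * (ω / w x) := by rw [← mul_div_assoc, ← haω]
      rw [haω', haw, hwx, Complex.sinh, Complex.exp_neg]
      have hI := Complex.I_ne_zero
      have hI2 := Complex.I_sq
      field_simp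
      linear_combination -hI2
    simp only [Function.iterate_succ_apply']
    rw [innC_symb_symb hab1 (hw0 x), htr]
    have hI2 : Complex.I ^ 2 = -1 := Complex.I_sq
    rw [pow_add, pow_succ Complex.I n]
    linear_combination (-(2 * (‖a‖ * Complex.sinh (σ + x * Complex.I)) * Complex.I ^ n * Complex.I *
      innC (symb a b (w x) ((symb a b (w x))^[n] φ)) ψ) - Complex.I ^ n * innC ((symb a b (w x))^[n] φ) ψ) * hI2
  · intro n y
    have h := amplitude_half_circle a b φ ψ hc0 (w := w) (fun x => rfl) n y
    have hpi : (2 * Real.pi : ℂ) ≠ 0 := by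
      have := Real.pi_ne_zero
      exact_mod_cast mul_ne_zero two_ne_zero this
    have hintegrand : ∀ x : ℝ, innC ((symb a b (w x))^[n] φ) ψ * w x ^ (-y) =
        (Complex.I ^ (y - n) * ω ^ (-y) * Real.exp (-(y * σ))) *
        (Complex.I ^ n * innC ((symb a b (w x))^[n] φ) ψ * Complex.exp (-((y : ℝ) * x * Complex.I))) := by
      intro x
      have e1 : w x ^ (-y) = Complex.I ^ y * ω ^ (-y) * Real.exp (-(y * σ)) *
          Complex.exp (-((y : ℝ) * x * Complex.I)) := by
        simp only [hw, hc]
        rw [mul_zpow, mul_zpow, mul_zpow, ← Complex.exp_int_mul, ← Complex.exp_int_mul, ← Complex.inv_I,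
          inv_zpow, ← zpow_neg, neg_neg]
        push_cast
        rw [show -(y : ℂ) * σ = -(y * σ) by ring, show -(y : ℂ) * (x * Complex.I) = -(y * x * Complex.I) by ring]
      rw [e1, zpow_sub₀ Complex.I_ne_zero, zpow_natCast]
      have := pow_ne_zero n Complex.I_ne_zero
      field_simp
    simp only [hintegrand, intervalIntegral.integral_const_mul] at h
    rcases Int.even_or_odd ((n : ℤ) + y) with hev | hod
    · obtain ⟨j, hj⟩ : ∃ j : ℤ, (n : ℤ) - y = 2 * j := by
        obtain ⟨j, hj⟩ := hev; exact ⟨j - y, by omega⟩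
      have hph : Complex.exp (Real.pi * Complex.I * ((((n : ℝ) - y) / 2 : ℝ) : ℂ)) = Complex.I ^ (y - n) := by
        have e1 : ((((n : ℝ) - y) / 2 : ℝ) : ℂ) = j := by
          have : (n : ℝ) - y = 2 * j := by exact_mod_cast hj
          rw [this]; push_cast; ring
        rw [e1, show y - (n : ℤ) = 2 * (-j) by omega, zpow_mul, zpow_ofNat, Complex.I_sq, mul_comm,
          Complex.exp_int_mul, Complex.exp_pi_mul_I, zpow_neg, ← inv_zpow]
        norm_num
      rw [hph]
      apply mul_left_cancel₀ hpi
      rw [h]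
      generalize (∫ x in (-(Real.pi / 2))..(Real.pi / 2),
        Complex.I ^ n * innC ((symb a b (w x))^[n] φ) ψ * Complex.exp (-((y : ℝ) * x * Complex.I))) = J
      push_cast
      field_simp
    · have : (1 + (-1 : ℂ) ^ ((n : ℤ) + y)) = 0 := by rw [hod.neg_one_zpow]; ring
      rw [this] at h ⊢
      simp only [zero_mul] at h ⊢
      exact (mul_eq_zero.1 h).resolve_left hpi


/-! ### The rate function -/

/-- Half of the rate function on `(r, 1)`, with `r = |a|` and `q = |b|`. -/
def rateF (r q x : ℝ) : ℝ :=
  x * Real.log (q * x + Real.sqrt (x ^ 2 - r ^ 2)) - Real.log (q + Real.sqrt (x ^ 2 - r ^ 2)) +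
    (1 - x) / 2 * Real.log (1 - x ^ 2) - x * Real.log r

/-- The saddle point attached to the velocity `x`, which is also the derivative of `rateF`. -/
def slopeF (r q x : ℝ) : ℝ :=
  Real.log (q * x + Real.sqrt (x ^ 2 - r ^ 2)) - Real.log (1 - x ^ 2) / 2 - Real.log r

lemma HQ_eq_rateF (a b : ℂ) {x : ℝ} (hx : 0 < x) : HQ a b x / 2 = rateF ‖a‖ ‖b‖ x := by
  rw [HQ, rateF, abs_of_pos hx]; ring

section Rate

variable {r q ξ : ℝ}

lemma hasDerivAt_sqrt_aux (hr : 0 < r) (h1 : r < ξ) :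
    HasDerivAt (fun x => Real.sqrt (x ^ 2 - r ^ 2)) (ξ / Real.sqrt (ξ ^ 2 - r ^ 2)) ξ := by
  have hp : 0 < ξ ^ 2 - r ^ 2 := by nlinarith
  have h := ((hasDerivAt_pow 2 ξ).sub_const (r ^ 2)).sqrt hp.ne'
  refine h.congr_deriv ?_
  have := (Real.sqrt_pos.2 hp).ne'
  push_cast; field_simp

lemma hasDerivAt_rateF (hr : 0 < r) (hq : 0 < q) (hrq : r ^ 2 + q ^ 2 = 1) (h1 : r < ξ) (h2 : ξ < 1) :
    HasDerivAt (rateF r q) (slopeF r q ξ) ξ := by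
  have hp : 0 < ξ ^ 2 - r ^ 2 := by nlinarith
  have hξ0 : 0 < ξ := hr.trans h1
  have hm : 0 < 1 - ξ ^ 2 := by nlinarith
  have hsd := hasDerivAt_sqrt_aux hr h1
  have hs := Real.sqrt_pos.2 hp
  have hs2 := Real.sq_sqrt hp.le
  set s := Real.sqrt (ξ ^ 2 - r ^ 2) with hsdef
  have hl1 := (((hasDerivAt_id ξ).const_mul q).add hsd).log (show q * ξ + s ≠ 0 by positivity)
  have hl2 := (hsd.const_add q).log (show q + s ≠ 0 by positivity)
  have hl3 := ((hasDerivAt_pow 2 ξ).const_sub 1).log hm.ne'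
  have h := (((hasDerivAt_id ξ).mul hl1).sub hl2).add
    ((((hasDerivAt_id ξ).const_sub 1).div_const 2).mul hl3) |>.sub
    ((hasDerivAt_id ξ).mul_const (Real.log r))
  refine HasDerivAt.congr_deriv (show HasDerivAt (rateF r q) _ ξ from h) ?_
  simp only [slopeF, id_eq, Pi.add_apply, ← hsdef]
  have e1 : q * ξ + s ≠ 0 := by positivity
  have e2 : q + s ≠ 0 := by positivity
  have e3 : 1 + ξ ≠ 0 := by positivity
  have e4 : 1 - ξ ≠ 0 := by linarith
  have hm' : 1 - ξ ^ 2 = (1 - ξ) * (1 + ξ) := by ring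
  -- the terms outside the logarithms cancel
  have key : ξ * ((q + ξ / s) / (q * ξ + s)) - ξ / s / (q + s) - ξ / (1 + ξ) = 0 := by
    field_simp
    linear_combination ξ * s * (hrq - hs2)
  have e5 : (1 - ξ) / 2 * (-(2 * ξ) / (1 - ξ ^ 2)) = -(ξ / (1 + ξ)) := by
    rw [hm']; field_simp
  push_cast
  simp only [pow_one, mul_one]
  linear_combination key + e5

lemma differentiableAt_slopeF (hr : 0 < r) (hq : 0 < q) (h1 : r < ξ) (h2 : ξ < 1) :
    DifferentiableAt ℝ (slopeF r q) ξ := by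
  have hξ0 : 0 < ξ := hr.trans h1
  have hm : 0 < 1 - ξ ^ 2 := by nlinarith
  have hsd := (hasDerivAt_sqrt_aux hr h1).differentiableAt
  have hpos : q * ξ + Real.sqrt (ξ ^ 2 - r ^ 2) ≠ 0 := by positivity
  unfold slopeF
  have hl1 : DifferentiableAt ℝ (fun x => Real.log (q * x + Real.sqrt (x ^ 2 - r ^ 2))) ξ :=
    DifferentiableAt.log (by fun_prop) hpos
  have hl2 : DifferentiableAt ℝ (fun x : ℝ => Real.log (1 - x ^ 2)) ξ :=
    DifferentiableAt.log (by fun_prop) hm.ne'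
  fun_prop

/-- Replacing the velocity `ξ` by `x = y_n / n` in the exponent costs only a quadratic term, after the
linear term has been matched with the factor `e^{-yσ}`, `σ = slopeF r q ξ`. -/
lemma rateF_taylor (hr : 0 < r) (hq : 0 < q) (hrq : r ^ 2 + q ^ 2 = 1) (h1 : r < ξ) (h2 : ξ < 1) :
    ∃ L ε : ℝ, 0 ≤ L ∧ 0 < ε ∧ ∀ x, |x - ξ| ≤ ε →
      |rateF r q x - rateF r q ξ - slopeF r q ξ * (x - ξ)| ≤ L * (x - ξ) ^ 2 := by
  obtain ⟨L, hL, hO⟩ := (differentiableAt_slopeF hr hq h1 h2).isBigO_sub.exists_nonneg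
  rw [isBigOWith_iff] at hO
  have hall := (hO.and (eventually_gt_nhds h1)).and (eventually_lt_nhds h2)
  obtain ⟨ε, hε, hev⟩ := Metric.eventually_nhds_iff.1 hall
  refine ⟨L, ε / 2, hL, by positivity, fun x hx => ?_⟩
  have hsub : ∀ t ∈ Metric.closedBall ξ |x - ξ|, dist t ξ < ε := fun t ht =>
    lt_of_le_of_lt (ht.trans hx) (by linarith)
  have hd : ∀ t ∈ Metric.closedBall ξ |x - ξ|,
      HasDerivWithinAt (fun t => rateF r q t - slopeF r q ξ * t) (slopeF r q t - slopeF r q ξ)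
        (Metric.closedBall ξ |x - ξ|) t := by
    intro t ht
    obtain ⟨⟨_, g1⟩, g2⟩ := hev (hsub t ht)
    have h := (hasDerivAt_rateF hr hq hrq g1 g2).sub ((hasDerivAt_id t).const_mul (slopeF r q ξ))
    have h' : HasDerivAt (fun t => rateF r q t - slopeF r q ξ * t) (slopeF r q t - slopeF r q ξ) t :=
      h.congr_deriv (by ring)
    exact h'.hasDerivWithinAt
  have hbd : ∀ t ∈ Metric.closedBall ξ |x - ξ|, ‖slopeF r q t - slopeF r q ξ‖ ≤ L * |x - ξ| := by
    intro t ht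
    obtain ⟨⟨g0, _⟩, _⟩ := hev (hsub t ht)
    refine g0.trans ?_
    have : ‖t - ξ‖ ≤ |x - ξ| := by simpa [dist_eq_norm] using ht
    gcongr
  have := (convex_closedBall ξ |x - ξ|).norm_image_sub_le_of_norm_hasDerivWithin_le hd hbd
    (Metric.mem_closedBall_self (abs_nonneg _)) (by simp [Real.dist_eq] : x ∈ Metric.closedBall ξ |x - ξ|)
  simp only [Real.norm_eq_abs] at this
  rw [mul_assoc, ← sq, sq_abs] at this
  refine (le_of_eq ?_).trans this
  congr 1; ring

/-- The saddle point `σ = slopeF r q ξ` and its data: `S = r sinh σ`, `T = √(1 + S²)`, the saddle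
equation `ξ = r cosh σ / T`, the curvature `S/T (1 - ξ²)`, and `rateF` as the Legendre transform
`ξσ - arsinh (r sinh σ)`. -/
lemma saddle_identities (hr : 0 < r) (hq : 0 < q) (hrq : r ^ 2 + q ^ 2 = 1) (h1 : r < ξ) (h2 : ξ < 1)
    {S T : ℝ} (hS : S = Real.sqrt (ξ ^ 2 - r ^ 2) / Real.sqrt (1 - ξ ^ 2))
    (hT : T = q / Real.sqrt (1 - ξ ^ 2)) :
    0 < slopeF r q ξ ∧ S = r * Real.sinh (slopeF r q ξ) ∧ T = Real.sqrt (1 + S ^ 2) ∧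
      ξ = r * Real.cosh (slopeF r q ξ) / T ∧
      q / ((1 - ξ ^ 2) * Real.sqrt (ξ ^ 2 - r ^ 2)) = (S / T * (1 - ξ ^ 2))⁻¹ ∧
      rateF r q ξ = ξ * slopeF r q ξ - Real.log (S + T) := by
  have hp : 0 < ξ ^ 2 - r ^ 2 := by nlinarith
  have hξ0 : 0 < ξ := hr.trans h1
  have hm : 0 < 1 - ξ ^ 2 := by nlinarith
  have hs := Real.sqrt_pos.2 hp
  have hs2 := Real.sq_sqrt hp.le
  have hu := Real.sqrt_pos.2 hm
  have hu2 := Real.sq_sqrt hm.le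
  have hlogu : Real.log (1 - ξ ^ 2) / 2 = Real.log (Real.sqrt (1 - ξ ^ 2)) := (Real.log_sqrt hm.le).symm
  have hexp : Real.exp (slopeF r q ξ) =
      (q * ξ + Real.sqrt (ξ ^ 2 - r ^ 2)) / Real.sqrt (1 - ξ ^ 2) / r := by
    rw [slopeF, hlogu, Real.exp_sub, Real.exp_sub, Real.exp_log (by positivity), Real.exp_log hu,
      Real.exp_log hr]
  have hrate : rateF r q ξ = ξ * slopeF r q ξ - Real.log (S + T) := by
    rw [hS, hT, ← add_div, Real.log_div (by positivity) hu.ne', ← hlogu, rateF, slopeF,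
      add_comm (Real.sqrt (ξ ^ 2 - r ^ 2)) q]
    ring
  set s := Real.sqrt (ξ ^ 2 - r ^ 2)
  set v := Real.sqrt (1 - ξ ^ 2)
  have hexpn : Real.exp (-slopeF r q ξ) = (q * ξ - s) / v / r := by
    rw [Real.exp_neg, hexp]
    refine inv_eq_of_mul_eq_one_right ?_
    field_simp
    linear_combination -hs2 - r ^ 2 * hu2 + ξ ^ 2 * hrq
  have hsinh : S = r * Real.sinh (slopeF r q ξ) := by
    rw [Real.sinh_eq, hexp, hexpn, hS]; field_simp; ring
  have hS0 : 0 < S := by rw [hS]; positivity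
  have hT0 : 0 < T := by rw [hT]; positivity
  refine ⟨?_, hsinh, ?_, ?_, ?_, hrate⟩
  · rw [← Real.sinh_pos_iff]
    exact pos_of_mul_pos_right (hsinh ▸ hS0) hr.le
  · rw [eq_comm, Real.sqrt_eq_iff_mul_self_eq (by positivity) hT0.le, hS, hT]
    field_simp
    linear_combination hu2 + hs2 - hrq
  · rw [Real.cosh_eq, hexp, hexpn, hT]; field_simp; ring
  · rw [hS, hT]; field_simp

end Rate


/-! ### Asymptotics of the amplitude -/

/-- The explicit factor in front of the amplitude asymptotics, without the `F_ψ(ξ) + O(1/n)` term. -/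
def prefactor (a b : ℂ) (ξ : ℝ) (n : ℕ) (y : ℤ) : ℂ :=
  (1 + (-1 : ℂ) ^ ((n : ℤ) + y)) * (a / (‖a‖ : ℂ)) ^ (-y) *
    ((Real.exp (-(n : ℝ) * HQ a b ((y : ℝ) / (n : ℝ)) / 2) /
        Real.sqrt (2 * Real.pi * (n : ℝ)) : ℝ) : ℂ) *
    ((Real.sqrt (‖b‖ / ((1 - ξ ^ 2) * Real.sqrt (ξ ^ 2 - ‖a‖ ^ 2))) : ℝ) : ℂ) *
    Complex.exp ((Real.pi : ℂ) * Complex.I * ((((n : ℝ) - |(y : ℝ)|) / 2 : ℝ) : ℂ))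

/-- Conversion of the absolute `n^{-3/2}` error of the integral `J` into a relative `1/n` error, in the
presence of an `O(1/n)` perturbation `D` of the exponent. -/
lemma ratio_bound {κ K₀ D M n : ℝ} {g₀ J : ℂ} (hκ : 0 < κ) (hn : 1 ≤ n) (hD : |D| ≤ M / n)
    (hM : M / n ≤ 1) (hJ : ‖J - g₀ * Real.sqrt (2 * Real.pi / (n * κ))‖ ≤ K₀ / (n * Real.sqrt n)) :
    ‖((Real.exp D * (Real.sqrt (2 * Real.pi * n * κ) / (2 * Real.pi)) : ℝ) : ℂ) * J - g₀‖ ≤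
      (2 * M * ‖g₀‖ + 3 * (Real.sqrt (2 * Real.pi * κ) / (2 * Real.pi)) * K₀) / n := by
  have hn0 : 0 < n := by linarith
  have hpi := Real.pi_pos
  have hD1 : |D| ≤ 1 := hD.trans hM
  have hE1 : |Real.exp D - 1| ≤ 2 * |D| := Real.abs_exp_sub_one_le hD1
  have hE3 : Real.exp D ≤ 3 := by linarith [le_abs_self (Real.exp D - 1)]
  set s := Real.sqrt (2 * Real.pi * n * κ) / (2 * Real.pi) with hs
  have hs0 : 0 ≤ s := by positivity
  have hone : s * Real.sqrt (2 * Real.pi / (n * κ)) = 1 := by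
    rw [hs, div_mul_eq_mul_div, ← Real.sqrt_mul (by positivity),
      show 2 * Real.pi * n * κ * (2 * Real.pi / (n * κ)) = (2 * Real.pi) ^ 2 by field_simp,
      Real.sqrt_sq (by positivity), div_self (by positivity)]
  have hsn : s / Real.sqrt n = Real.sqrt (2 * Real.pi * κ) / (2 * Real.pi) := by
    have hsq : Real.sqrt n ≠ 0 := (Real.sqrt_pos.2 hn0).ne'
    rw [hs, show 2 * Real.pi * n * κ = 2 * Real.pi * κ * n by ring, Real.sqrt_mul (by positivity)]
    field_simp
  have hone' : (s : ℂ) * (Real.sqrt (2 * Real.pi / (n * κ)) : ℝ) = 1 := by exact_mod_cast hone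
  have e1 : ((Real.exp D * s : ℝ) : ℂ) * J - g₀ = ((Real.exp D - 1 : ℝ) : ℂ) * g₀ +
      ((Real.exp D * s : ℝ) : ℂ) * (J - g₀ * (Real.sqrt (2 * Real.pi / (n * κ)) : ℝ)) := by
    push_cast
    linear_combination (Complex.exp D * g₀) * hone'
  rw [e1]
  refine (norm_add_le _ _).trans ?_
  rw [norm_mul, norm_mul, Complex.norm_real, Complex.norm_real, Real.norm_eq_abs,
    Real.norm_of_nonneg (by positivity : 0 ≤ Real.exp D * s)]
  calc |Real.exp D - 1| * ‖g₀‖ + Real.exp D * s * ‖J - g₀ * (Real.sqrt (2 * Real.pi / (n * κ)) : ℝ)‖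
      ≤ (2 * (M / n)) * ‖g₀‖ + 3 * s * (K₀ / (n * Real.sqrt n)) := by
        gcongr
        exact hE1.trans (by linarith)
    _ = (2 * M * ‖g₀‖ + 3 * (s / Real.sqrt n) * K₀) / n := by
        have hsq : Real.sqrt n ≠ 0 := (Real.sqrt_pos.2 hn0).ne'
        field_simp
    _ = _ := by rw [hsn]

/-- The asymptotics for `ξ > 0`. -/
lemma amplitude_pos {a b : ℂ} (hab1 : ‖a‖ ^ 2 + ‖b‖ ^ 2 = 1) (ha : a ≠ 0) (hb : b ≠ 0)
    (φ ψ : ℂ × ℂ) {ξ : ℝ} (hξ1 : ‖a‖ < ξ) (hξ2 : ξ < 1) (y : ℕ → ℤ)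
    (hy : (fun n : ℕ => (y n : ℝ) - (n : ℝ) * ξ) =O[atTop] fun _ : ℕ => (1 : ℝ)) :
    ∃ (g₀ : ℂ) (E : ℕ → ℂ), (E =O[atTop] fun n : ℕ => 1 / (n : ℝ)) ∧ ∀ n : ℕ, 0 < n →
      innC (((qwStep a b)^[n] (qwDelta φ)) (y n)) ψ = prefactor a b ξ n (y n) * (g₀ + E n) := by
  have hr : 0 < ‖a‖ := norm_pos_iff.2 ha
  have hq : 0 < ‖b‖ := norm_pos_iff.2 hb
  have hr1 : ‖a‖ < 1 := hξ1.trans hξ2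
  have hξ0 : 0 < ξ := hr.trans hξ1
  have hp : 0 < ξ ^ 2 - ‖a‖ ^ 2 := by nlinarith
  have hm : 0 < 1 - ξ ^ 2 := by nlinarith
  have hpi := Real.pi_pos
  obtain ⟨S, hS⟩ : ∃ S, S = Real.sqrt (ξ ^ 2 - ‖a‖ ^ 2) / Real.sqrt (1 - ξ ^ 2) := ⟨_, rfl⟩
  obtain ⟨T, hT⟩ : ∃ T, T = ‖b‖ / Real.sqrt (1 - ξ ^ 2) := ⟨_, rfl⟩
  have hS0 : 0 < S := by rw [hS]; have := Real.sqrt_pos.2 hp; have := Real.sqrt_pos.2 hm; positivity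
  have hT0 : 0 < T := by rw [hT]; have := Real.sqrt_pos.2 hm; positivity
  obtain ⟨hσ0, hSσ, hTS, hξσ, hκq, hrate⟩ := saddle_identities hr hq hab1 hξ1 hξ2 hS hT
  set σ := slopeF ‖a‖ ‖b‖ ξ with hσ
  obtain ⟨κ, hκ⟩ : ∃ κ, κ = S / T * (1 - ξ ^ 2) := ⟨_, rfl⟩
  have hκ0 : 0 < κ := by rw [hκ]; positivity
  rw [← hκ] at hκq
  have hΛ0 : 0 < S + T := by positivity
  obtain ⟨B, hB0, hB⟩ := hy.exists_nonneg
  rw [isBigOWith_iff] at hB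
  obtain ⟨L, ε, hL, hε, hK⟩ := rateF_taylor hr hq hab1 hξ1 hξ2
  obtain ⟨α, γ, m₀, k, hk0, hk1, hk, hamp⟩ := amplitude_eq hab1 ha φ ψ σ
  obtain ⟨g₀, K₀, hcore⟩ := core_asymptotics hr hr1 hσ0 hB0 hSσ hTS hξσ hκ α γ m₀ k hk0 hk1 hk
  classical
  refine ⟨g₀, fun n => if prefactor a b ξ n (y n) = 0 then 0 else
    innC (((qwStep a b)^[n] (qwDelta φ)) (y n)) ψ / prefactor a b ξ n (y n) - g₀, ?_, ?_⟩
  · set M := L * B ^ 2 with hM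
    have hM0 : 0 ≤ M := by positivity
    refine IsBigO.of_bound (2 * M * ‖g₀‖ + 3 * (Real.sqrt (2 * Real.pi * κ) / (2 * Real.pi)) * |K₀|) ?_
    have ev1 : ∀ᶠ n : ℕ in atTop, max 1 (max M (max (B / ε) ((B + 1) / ξ))) ≤ (n : ℝ) :=
      tendsto_natCast_atTop_atTop.eventually_ge_atTop _
    filter_upwards [hB, ev1] with n hBn hn
    simp only [max_le_iff] at hn
    obtain ⟨hn1, hnM, hnε, hnξ⟩ := hn
    have hn0 : (0 : ℝ) < n := by linarith
    have hnat : 1 ≤ n := by exact_mod_cast hn1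
    rw [norm_one, mul_one, Real.norm_eq_abs] at hBn
    have hnorm : ‖1 / (n : ℝ)‖ = 1 / n := Real.norm_of_nonneg (by positivity)
    rw [hnorm, mul_one_div]
    split_ifs with h0
    · rw [norm_zero]; positivity
    have hy0 : 0 < (y n : ℝ) := by
      rw [div_le_iff₀ hξ0] at hnξ
      linarith [neg_abs_le ((y n : ℝ) - n * ξ)]
    have hquot : |(y n : ℝ) / n - ξ| ≤ B / n := by
      rw [show (y n : ℝ) / n - ξ = (y n - n * ξ) / n by field_simp, abs_div, abs_of_pos hn0]
      gcongr
    have hqε : |(y n : ℝ) / n - ξ| ≤ ε := by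
      refine hquot.trans ?_
      rw [div_le_iff₀ hε] at hnε
      rw [div_le_iff₀ hn0]; linarith
    -- the defect of the exponent, which is `O(1/n)` because `σ` is the slope of the rate function
    set D := n * Real.log (S + T) - y n * σ + n * (HQ a b ((y n : ℝ) / n) / 2) with hD
    have hDb : |D| ≤ M / n := by
      have h1 := hK _ hqε
      have h2 : D = n * (rateF ‖a‖ ‖b‖ ((y n : ℝ) / n) - rateF ‖a‖ ‖b‖ ξ - σ * ((y n : ℝ) / n - ξ)) := by
        rw [hD, HQ_eq_rateF a b (by positivity), hrate]; field_simp; ring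
      rw [h2, abs_mul, abs_of_pos hn0]
      have h3 : ((y n : ℝ) / n - ξ) ^ 2 ≤ (B / n) ^ 2 := sq_le_sq' (by linarith [neg_abs_le ((y n : ℝ) / n - ξ)])
        ((le_abs_self _).trans hquot)
      calc _ ≤ (n : ℝ) * (L * (B / n) ^ 2) := by
            refine mul_le_mul_of_nonneg_left (h1.trans ?_) hn0.le
            gcongr
        _ = M / n := by rw [hM]; field_simp
    have hMn : M / n ≤ 1 := by rw [div_le_one hn0]; exact hnM
    have hJ := hcore n hnat ((y n : ℝ) - n * ξ) hBn
    rw [show (n : ℝ) * ξ + (y n - n * ξ) = y n by ring] at hJ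
    set J := ∫ x in (-(Real.pi / 2))..(Real.pi / 2),
      ((((S + T) ^ n)⁻¹ : ℝ) : ℂ) * k n x * Complex.exp (-((y n : ℝ) * x * Complex.I)) with hJdef
    have hJ' : J = ((((S + T) ^ n)⁻¹ : ℝ) : ℂ) *
        ∫ x in (-(Real.pi / 2))..(Real.pi / 2), k n x * Complex.exp (-((y n : ℝ) * x * Complex.I)) := by
      rw [hJdef, ← intervalIntegral.integral_const_mul]
      simp only [mul_assoc]
    have hreal : Real.exp (-(y n * σ)) / (2 * Real.pi) =
        Real.exp (-(n : ℝ) * HQ a b ((y n : ℝ) / n) / 2) / Real.sqrt (2 * Real.pi * n) *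
        Real.sqrt (‖b‖ / ((1 - ξ ^ 2) * Real.sqrt (ξ ^ 2 - ‖a‖ ^ 2))) *
        (Real.exp D * (Real.sqrt (2 * Real.pi * n * κ) / (2 * Real.pi))) * ((S + T) ^ n)⁻¹ := by
      have h1 : Real.exp (-(y n * σ)) = Real.exp (-(n : ℝ) * HQ a b ((y n : ℝ) / n) / 2) * Real.exp D *
          ((S + T) ^ n)⁻¹ := by
        have : ((S + T) ^ n)⁻¹ = Real.exp (-(n * Real.log (S + T))) := by
          rw [Real.exp_neg, Real.exp_nat_mul, Real.exp_log hΛ0]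
        rw [this, ← Real.exp_add, ← Real.exp_add, hD]
        congr 1; ring
      rw [hκq, Real.sqrt_inv, Real.sqrt_mul (show 0 ≤ 2 * Real.pi * (n : ℝ) by positivity) κ, h1]
      have s1 : Real.sqrt (2 * Real.pi * n) ≠ 0 := (Real.sqrt_pos.2 (by positivity)).ne'
      have s2 : Real.sqrt κ ≠ 0 := (Real.sqrt_pos.2 hκ0).ne'
      field_simp
    have hX : innC (((qwStep a b)^[n] (qwDelta φ)) (y n)) ψ = prefactor a b ξ n (y n) *
        (((Real.exp D * (Real.sqrt (2 * Real.pi * n * κ) / (2 * Real.pi)) : ℝ) : ℂ) * J) := by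
      rw [hamp, hJ', hreal, prefactor, abs_of_pos hy0, Complex.ofReal_mul, Complex.ofReal_mul,
        Complex.ofReal_mul]
      ring
    rw [hX, mul_div_cancel_left₀ _ h0]
    refine (ratio_bound hκ0 hn1 hDb hMn hJ).trans ?_
    gcongr
    exact le_abs_self K₀
  · intro n hn
    have hn0 : (0 : ℝ) < n := by exact_mod_cast hn
    dsimp only
    split_ifs with h0
    · -- only the parity factor can vanish
      have hpar : (1 + (-1 : ℂ) ^ ((n : ℤ) + y n)) = 0 := by
        have f1 : (a / (‖a‖ : ℂ)) ^ (-(y n)) ≠ 0 :=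
          zpow_ne_zero _ (div_ne_zero ha (by simpa using ha))
        have f2 : ((Real.exp (-(n : ℝ) * HQ a b ((y n : ℝ) / (n : ℝ)) / 2) /
            Real.sqrt (2 * Real.pi * (n : ℝ)) : ℝ) : ℂ) ≠ 0 := by
          rw [Complex.ofReal_ne_zero]
          have := Real.sqrt_pos.2 (by positivity : 0 < 2 * Real.pi * (n : ℝ))
          positivity
        have f3 : ((Real.sqrt (‖b‖ / ((1 - ξ ^ 2) * Real.sqrt (ξ ^ 2 - ‖a‖ ^ 2))) : ℝ) : ℂ) ≠ 0 := by
          rw [Complex.ofReal_ne_zero, hκq]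
          exact (Real.sqrt_pos.2 (by positivity)).ne'
        have f4 := Complex.exp_ne_zero ((Real.pi : ℂ) * Complex.I * ((((n : ℝ) - |(y n : ℝ)|) / 2 : ℝ) : ℂ))
        simpa only [prefactor, mul_eq_zero, f1, f2, f3, f4, or_false] using h0
      rw [h0, hamp, hpar]
      simp only [zero_mul]
    · rw [add_sub_cancel, mul_div_cancel₀ _ h0]

/-- Spatial reflection `f ↦ swap ∘ f ∘ (-·)` conjugates the walk with parameters `(a, b)` to the walk
with parameters `(conj a, -conj b)`. -/
lemma walk_reflect (a b : ℂ) (φ : ℂ × ℂ) (n : ℕ) (x : ℤ) :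
    (qwStep ((starRingEnd ℂ) a) (-(starRingEnd ℂ) b))^[n] (qwDelta φ.swap) x =
      ((qwStep a b)^[n] (qwDelta φ) (-x)).swap := by
  induction n generalizing x with
  | zero =>
    simp only [Function.iterate_zero, id_eq, qwDelta, neg_eq_zero]
    split_ifs <;> rfl
  | succ n ih =>
    rw [Function.iterate_succ_apply', Function.iterate_succ_apply']
    simp only [qwStep, ih, Prod.fst_swap, Prod.snd_swap, map_neg, Complex.conj_conj, neg_neg,
      Prod.swap_prod_mk, Prod.mk.injEq]
    rw [show -(x + 1) = -x - 1 by ring, show -(x - 1) = -x + 1 by ring]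
    constructor <;> ring

lemma prefactor_reflect (a b : ℂ) (ξ : ℝ) (n : ℕ) (y : ℤ) :
    prefactor ((starRingEnd ℂ) a) (-(starRingEnd ℂ) b) (-ξ) n (-y) = prefactor a b ξ n y := by
  have h1 : (-1 : ℂ) ^ ((n : ℤ) + -y) = (-1 : ℂ) ^ ((n : ℤ) + y) := by
    rw [zpow_add₀ (by norm_num), zpow_add₀ (by norm_num), zpow_neg, ← inv_zpow]; norm_num
  have h2 : ((starRingEnd ℂ) a / (‖a‖ : ℂ)) ^ (- -y) = (a / (‖a‖ : ℂ)) ^ (-y) := by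
    rw [zpow_neg _ (-y), ← inv_zpow]
    congr 1
    by_cases ha : a = 0
    · simp [ha]
    have hr : (‖a‖ : ℂ) ≠ 0 := by simpa using ha
    have hc : a * (starRingEnd ℂ) a = (‖a‖ : ℂ) ^ 2 := by
      rw [Complex.mul_conj, Complex.normSq_eq_norm_sq]; push_cast; rfl
    refine inv_eq_of_mul_eq_one_right ?_
    field_simp
    linear_combination hc
  have h3 : HQ ((starRingEnd ℂ) a) (-(starRingEnd ℂ) b) (((-y : ℤ) : ℝ) / n) = HQ a b ((y : ℝ) / n) := by
    simp only [HQ, norm_neg, RCLike.norm_conj, Int.cast_neg, neg_div, abs_neg, neg_sq]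
  rw [prefactor, prefactor, h1, h3, norm_neg, RCLike.norm_conj, RCLike.norm_conj, h2, Int.cast_neg, abs_neg,
    neg_sq]

lemma innC_swap (u v : ℂ × ℂ) : innC u.swap v.swap = innC u v := by
  simp only [innC, Prod.fst_swap, Prod.snd_swap]; ring

/-- Proposition `amp3hidden`: asymptotics of the transition amplitude in
the hidden region `|a| < |ξ| < 1`, `y_n = nξ + O(1)`. -/
theorem stmt15 (a b : ℂ) (hab1 : ‖a‖ ^ 2 + ‖b‖ ^ 2 = 1) (hab : a * b ≠ 0)
    (φ : ℂ × ℂ) (hφ : nsq φ = 1) (ξ : ℝ) (hξ1 : ‖a‖ < |ξ|) (hξ2 : |ξ| < 1)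
    (y : ℕ → ℤ) (hy : (fun n : ℕ => (y n : ℝ) - (n : ℝ) * ξ) =O[atTop] fun _ : ℕ => (1 : ℝ))
    (ψ : ℂ × ℂ) (hψ : nsq ψ = 1) :
    ∃ F : ℝ → ℂ,
      ContDiffOn ℝ (⊤ : ℕ∞) F {η : ℝ | ‖a‖ < |η| ∧ |η| < 1} ∧
      ∃ E : ℕ → ℂ, (E =O[atTop] fun n : ℕ => 1 / (n : ℝ)) ∧
        ∀ n : ℕ, 0 < n →
          innC (((qwStep a b)^[n] (qwDelta φ)) (y n)) ψ =
            (1 + (-1 : ℂ) ^ ((n : ℤ) + y n)) * (a / (‖a‖ : ℂ)) ^ (-(y n)) *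
              ((Real.exp (-(n : ℝ) * HQ a b ((y n : ℝ) / (n : ℝ)) / 2) /
                  Real.sqrt (2 * Real.pi * (n : ℝ)) : ℝ) : ℂ) *
              ((Real.sqrt (‖b‖ / ((1 - ξ ^ 2) * Real.sqrt (ξ ^ 2 - ‖a‖ ^ 2))) : ℝ) : ℂ) *
              Complex.exp ((Real.pi : ℂ) * Complex.I *
                ((((n : ℝ) - |(y n : ℝ)|) / 2 : ℝ) : ℂ)) *
              (F ξ + E n) := by
  have ha : a ≠ 0 := left_ne_zero_of_mul hab
  have hb : b ≠ 0 := right_ne_zero_of_mul hab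
  suffices h : ∃ (g₀ : ℂ) (E : ℕ → ℂ), (E =O[atTop] fun n : ℕ => 1 / (n : ℝ)) ∧ ∀ n : ℕ, 0 < n →
      innC (((qwStep a b)^[n] (qwDelta φ)) (y n)) ψ = prefactor a b ξ n (y n) * (g₀ + E n) by
    obtain ⟨g₀, E, hE, h⟩ := h
    -- `ξ` is fixed and `F` enters only through `F ξ`, so a constant function suffices
    exact ⟨fun _ => g₀, contDiffOn_const, E, hE, h⟩
  rcases le_total 0 ξ with h0 | h0
  · rw [abs_of_nonneg h0] at hξ1 hξ2
    exact amplitude_pos hab1 ha hb φ ψ hξ1 hξ2 y hy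
  · rw [abs_of_nonpos h0] at hξ1 hξ2
    have hy' : (fun n : ℕ => (((-y n : ℤ) : ℝ)) - (n : ℝ) * -ξ) =O[atTop] fun _ : ℕ => (1 : ℝ) := by
      refine hy.neg_left.congr_left fun n => ?_
      push_cast; ring
    obtain ⟨g₀, E, hE, h⟩ := amplitude_pos (a := (starRingEnd ℂ) a) (b := -(starRingEnd ℂ) b)
      (by rw [norm_neg, RCLike.norm_conj, RCLike.norm_conj]; exact hab1)
      (by simpa using ha) (by simpa using hb) φ.swap ψ.swap (ξ := -ξ)
      (by rw [RCLike.norm_conj]; exact hξ1) hξ2 (fun n => -y n) hy'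
    refine ⟨g₀, E, hE, fun n hn => ?_⟩
    have := h n hn
    rwa [prefactor_reflect, walk_reflect, neg_neg, innC_swap] at this
end
end

section
/- Let η ∈ ℝ with |a| < |η| < 1. Then the solutions z ∈ D_A of the equation z λ_A′(z)/λ_A(z) = η are exactly z = i r(η) and z = −i r(η), where r(η) = (|b|η + √(η² − |a|²))/(|a|√(1 − η²)). -/
/-!
Write `s(ζ) = (ζ − 1)√((ζ + 1)/(ζ − 1))`, a branch of `√(ζ² − 1)` off `[−1, 1]`. Since
`ψ_A = ζ + s`, one has `ψ_A'/ψ_A = 1/s`, and `|a| φ̃(z)` avoids `[−1, 1]` for `z ∈ D_A`; hence the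
equation becomes `|a|(z − z⁻¹)/2 = η s(|a| φ̃(z))` (`logDeriv_eq_iff`).

Squaring it gives `φ̃(z)² = −q²` and `((z − z⁻¹)/2)² = −p²`, where `r(η) = p + q` is the splitting of
the formula for `r` into its two summands and `p² − q² = 1`. This leaves the four candidates
`z = i(±p ± q)`. The branch decides among them: `s(iy) = iσ` with `σ` the root of `1 + y²` having the
sign of `y` (`sqrtBranch_I_mul`), because the principal square root has positive real part.
Comparing signs in the unsquared equation, exactly the candidates `±i(p + q)` remain.
-/

open Filter Topology Asymptotics MeasureTheory

noncomputable section

/-- `ψ_A(ζ) = ζ + (ζ − 1)√((ζ + 1)/(ζ − 1))`, the branch of the square root (principal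
complex power) being positive on the positive real axis. -/
def psiA (ζ : ℂ) : ℂ := ζ + (ζ - 1) * ((ζ + 1) / (ζ - 1)) ^ ((1 : ℂ) / 2)

/-- `φ̃(z) = (z + z⁻¹)/2` as a complex function. -/
def phitC (z : ℂ) : ℂ := (z + z⁻¹) / 2

/-- The eigenvalue branch `λ_A(z) = ψ_A(|a| φ̃(z))`, holomorphic on `D_A`. -/
def lamAn (a : ℂ) (z : ℂ) : ℂ := psiA ((‖a‖ : ℂ) * phitC z)

/-- The domain
`D_A = ℂ ∖ (S¹ ∪ {0} ∪ [−(1+|b|)/|a|, −(1−|b|)/|a|] ∪ [(1−|b|)/|a|, (1+|b|)/|a|])`. -/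
def DA (a b : ℂ) : Set ℂ :=
  {z : ℂ | ‖z‖ ≠ 1 ∧ z ≠ 0 ∧
    z ∉ (fun x : ℝ => (x : ℂ)) '' Set.Icc (-((1 + ‖b‖) / ‖a‖)) (-((1 - ‖b‖) / ‖a‖)) ∧
    z ∉ (fun x : ℝ => (x : ℂ)) '' Set.Icc ((1 - ‖b‖) / ‖a‖) ((1 + ‖b‖) / ‖a‖)}

/-- `r(η) = (|b|η + √(η² − |a|²))/(|a|√(1 − η²))`. -/
def rfun (a b : ℂ) (η : ℝ) : ℝ :=
  (‖b‖ * η + Real.sqrt (η ^ 2 - ‖a‖ ^ 2)) / (‖a‖ * Real.sqrt (1 - η ^ 2))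

/-- The function `s(ζ) = (ζ − 1)√((ζ + 1)/(ζ − 1))`, i.e. the branch of `√(ζ² − 1)` on
`ℂ ∖ [−1, 1]` for which `ψ_A(ζ) = ζ + s(ζ)`. -/
def sqrtBranch (ζ : ℂ) : ℂ := (ζ - 1) * ((ζ + 1) / (ζ - 1)) ^ ((1 : ℂ) / 2)

lemma half_cpow_sq (x : ℂ) : (x ^ ((1 : ℂ) / 2)) ^ 2 = x := by
  rw [← Complex.cpow_nat_mul]; simp

/-- The principal square root maps the slit plane into the open right half plane. -/
lemma half_cpow_re_pos {x : ℂ} (hx : x ∈ Complex.slitPlane) : 0 < (x ^ ((1 : ℂ) / 2)).re := by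
  have hx0 : x ≠ 0 := Complex.slitPlane_ne_zero hx
  have harg := Complex.mem_slitPlane_iff_arg.1 hx
  rw [Complex.cpow_def_of_ne_zero hx0, Complex.exp_re]
  apply mul_pos (Real.exp_pos _)
  have him : (Complex.log x * (1 / 2)).im = x.arg / 2 := by
    simp [Complex.mul_im, Complex.log_im]
    ring
  rw [him]
  apply Real.cos_pos_of_mem_Ioo
  have h1 := Complex.neg_pi_lt_arg x
  have h2 := lt_of_le_of_ne (Complex.arg_le_pi x) harg.1
  constructor <;> linarith

/-- The Möbius map `ζ ↦ (ζ + 1)/(ζ − 1)` sends only points of `[−1, 1]` to `(−∞, 0]`. -/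
lemma moebius_mem_slitPlane {ζ : ℂ} (hζ : ∀ t : ℝ, t ∈ Set.Icc (-1 : ℝ) 1 → ζ ≠ t) :
    (ζ + 1) / (ζ - 1) ∈ Complex.slitPlane := by
  have h1 : ζ - 1 ≠ 0 := by
    intro h
    exact hζ 1 (by norm_num) (by push_cast; linear_combination h)
  by_contra hcon
  rw [Complex.mem_slitPlane_iff] at hcon
  push Not at hcon
  obtain ⟨hre, him⟩ := hcon
  -- If the image is `-u` with `u ≥ 0`, then `ζ = (u - 1)/(u + 1)`.
  set u : ℝ := -((ζ + 1) / (ζ - 1)).re with hu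
  have hu0 : 0 ≤ u := by linarith
  have hval : (ζ + 1) / (ζ - 1) = ((-u : ℝ) : ℂ) := by
    apply Complex.ext <;> simp [hu, him]
  have hu1 : (u : ℂ) + 1 ≠ 0 := by
    have : (u + 1 : ℝ) ≠ 0 := by linarith
    exact_mod_cast this
  refine hζ ((u - 1) / (u + 1)) ⟨?_, ?_⟩ ?_
  · rw [le_div_iff₀ (by linarith)]; linarith
  · rw [div_le_iff₀ (by linarith)]; linarith
  · rw [div_eq_iff h1] at hval
    push_cast at hval ⊢
    rw [eq_div_iff hu1]
    linear_combination hval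

lemma sqrtBranch_sq {ζ : ℂ} (h1 : ζ - 1 ≠ 0) : sqrtBranch ζ ^ 2 = ζ ^ 2 - 1 := by
  rw [sqrtBranch, mul_pow, half_cpow_sq]
  field_simp
  ring

/-- `ψ_A' = ψ_A / s`. -/
lemma hasDerivAt_psiA {ζ : ℂ} (hζ : ∀ t : ℝ, t ∈ Set.Icc (-1 : ℝ) 1 → ζ ≠ t) :
    HasDerivAt psiA (psiA ζ / sqrtBranch ζ) ζ := by
  have h1 : ζ - 1 ≠ 0 := by
    intro h
    exact hζ 1 (by norm_num) (by push_cast; linear_combination h)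
  have hslit := moebius_mem_slitPlane hζ
  have hx0 := Complex.slitPlane_ne_zero hslit
  have hp1 : ζ + 1 ≠ 0 := fun h => hx0 (by rw [h, zero_div])
  have hm : HasDerivAt (fun ζ : ℂ => (ζ + 1) / (ζ - 1))
      ((1 * (ζ - 1) - (ζ + 1) * 1) / (ζ - 1) ^ 2) ζ :=
    ((hasDerivAt_id' ζ).add_const 1).div ((hasDerivAt_id' ζ).sub_const 1) h1
  have hd := (hasDerivAt_id' ζ).add
    (((hasDerivAt_id' ζ).sub_const 1).mul (hm.cpow_const (c := (1 : ℂ) / 2) hslit))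
  refine hd.congr_deriv ?_
  have hsq := half_cpow_sq ((ζ + 1) / (ζ - 1))
  rw [Complex.cpow_sub _ _ hx0, Complex.cpow_one, psiA, sqrtBranch]
  set w := ((ζ + 1) / (ζ - 1)) ^ ((1 : ℂ) / 2)
  have hw : w ≠ 0 := by
    intro h
    rw [h] at hsq
    exact hx0 (by rw [← hsq]; ring)
  have hsq2 : w ^ 2 * (ζ - 1) = ζ + 1 := by rw [hsq]; field_simp
  field_simp
  linear_combination 2 * ζ * hsq2

/-- On `D_A` the argument `|a| φ̃(z)` of `ψ_A` avoids the cut `[−1, 1]`. -/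
lemma mul_phitC_ne_of_mem_DA {a b : ℂ} (hab1 : ‖a‖ ^ 2 + ‖b‖ ^ 2 = 1) (ha : 0 < ‖a‖)
    {z : ℂ} (hz : z ∈ DA a b) (t : ℝ) (ht : t ∈ Set.Icc (-1 : ℝ) 1) :
    (‖a‖ : ℂ) * phitC z ≠ t := by
  obtain ⟨hz1, hz0, hneg, hpos⟩ := hz
  intro h
  have hb := norm_nonneg b
  obtain ⟨ht1, ht2⟩ := ht
  have hquad : (‖a‖ : ℂ) * (z * z + 1) = 2 * t * z := by
    rw [phitC] at h
    field_simp at h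
    linear_combination h
  have hre := congrArg Complex.re hquad
  have him := congrArg Complex.im hquad
  simp at hre him
  have hprod : z.im * (‖a‖ * z.re - t) = 0 := by linear_combination him / 2
  rcases mul_eq_zero.1 hprod with hy | hy
  · have hzx : ((z.re : ℝ) : ℂ) = z := by apply Complex.ext <;> simp [hy]
    rw [hy] at hre
    have hx0 : z.re ≠ 0 := by
      intro h0
      exact hz0 (by rw [← hzx, h0]; simp)
    rcases lt_or_gt_of_ne hx0 with hx | hx
    · apply hneg
      refine ⟨z.re, ?_, hzx⟩
      have hax : ‖a‖ * z.re < 0 := mul_neg_of_pos_of_neg ha hx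
      have hsq : (‖a‖ * z.re + 1) ^ 2 ≤ ‖b‖ ^ 2 := by nlinarith
      have habs := abs_le.1 (abs_le_of_sq_le_sq hsq hb)
      rw [← neg_div, ← neg_div]
      constructor
      · rw [div_le_iff₀ ha]; linarith
      · rw [le_div_iff₀ ha]; linarith
    · apply hpos
      refine ⟨z.re, ?_, hzx⟩
      have hax : 0 < ‖a‖ * z.re := mul_pos ha hx
      have hsq : (‖a‖ * z.re - 1) ^ 2 ≤ ‖b‖ ^ 2 := by nlinarith
      have habs := abs_le.1 (abs_le_of_sq_le_sq hsq hb)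
      constructor
      · rw [div_le_iff₀ ha]; linarith
      · rw [le_div_iff₀ ha]; linarith
  · apply hz1
    have hn : z.re * z.re + z.im * z.im = 1 := by
      have : ‖a‖ * (z.re * z.re + z.im * z.im - 1) = 0 := by
        linear_combination -hre + 2 * z.re * hy
      rcases mul_eq_zero.1 this with h0 | h0
      · exact absurd h0 ha.ne'
      · linarith
    have h2 : ‖z‖ ^ 2 = 1 := by
      rw [← Complex.normSq_eq_norm_sq, Complex.normSq_apply, hn]
    nlinarith [norm_nonneg z]

/-- On `D_A` the equation `z λ_A'/λ_A = η` says `|a|(z − z⁻¹)/2 = η s(|a| φ̃(z))`, because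
`ψ_A'/ψ_A = 1/s`. -/
lemma logDeriv_eq_iff {a b : ℂ} (hab1 : ‖a‖ ^ 2 + ‖b‖ ^ 2 = 1) (ha : 0 < ‖a‖)
    {z : ℂ} (hz : z ∈ DA a b) (η : ℂ) :
    z * deriv (lamAn a) z / lamAn a z = η ↔
      (‖a‖ : ℂ) * (z - z⁻¹) / 2 = η * sqrtBranch (‖a‖ * phitC z) := by
  have hcut := mul_phitC_ne_of_mem_DA hab1 ha hz
  have hz0 : z ≠ 0 := hz.2.1
  have hphi : HasDerivAt (fun z => (‖a‖ : ℂ) * phitC z)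
      ((‖a‖ : ℂ) * ((1 + -(z ^ 2)⁻¹) / 2)) z :=
    (((hasDerivAt_id' z).add (hasDerivAt_inv hz0)).div_const 2).const_mul _
  have hder : HasDerivAt (lamAn a) _ z := (hasDerivAt_psiA hcut).comp z hphi
  have hlam : lamAn a z = psiA (‖a‖ * phitC z) := rfl
  rw [hder.deriv, hlam]
  set ζ : ℂ := ‖a‖ * phitC z
  have h1 : ζ - 1 ≠ 0 := by
    intro h
    exact hcut 1 (by norm_num) (by push_cast; linear_combination h)
  have hp1 : ζ + 1 ≠ 0 := by
    intro h
    exact hcut (-1) (by norm_num) (by push_cast; linear_combination h)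
  have hs2 := sqrtBranch_sq h1
  have hs : sqrtBranch ζ ≠ 0 := by
    intro h
    rw [h] at hs2
    exact mul_ne_zero h1 hp1 (by linear_combination -hs2)
  have hpsi_eq : psiA ζ = ζ + sqrtBranch ζ := rfl
  -- `(ζ + s)(ζ - s) = 1`, so `ψ_A` has no zero.
  have hpsi : psiA ζ ≠ 0 := by
    intro h
    have : (ζ + sqrtBranch ζ) * (ζ - sqrtBranch ζ) = 1 := by linear_combination -hs2
    rw [← hpsi_eq, h] at this
    simp at this
  have hval : z * (psiA ζ / sqrtBranch ζ * ((‖a‖ : ℂ) * ((1 + -(z ^ 2)⁻¹) / 2))) / psiA ζ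
      = (‖a‖ : ℂ) * (z - z⁻¹) / 2 / sqrtBranch ζ := by
    field_simp
    ring
  rw [hval, div_eq_iff hs]

/-- On the imaginary axis, `s(iy) = iσ` where `σ` is the square root of `1 + y²` that has the sign
of `y`. -/
lemma sqrtBranch_I_mul {y σ : ℝ} (hσ : σ ^ 2 = 1 + y ^ 2) (hσy : 0 < σ * y) :
    sqrtBranch (Complex.I * y) = Complex.I * σ := by
  have hcut : ∀ t : ℝ, t ∈ Set.Icc (-1 : ℝ) 1 → Complex.I * (y : ℂ) ≠ t := by
    intro t _ h
    have := congrArg Complex.im h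
    simp at this
    simp [this] at hσy
  have h1 : Complex.I * (y : ℂ) - 1 ≠ 0 := by
    intro h
    exact hcut 1 (by norm_num) (by push_cast; linear_combination h)
  have hre := half_cpow_re_pos (moebius_mem_slitPlane hcut)
  have hs2 := sqrtBranch_sq h1
  have hσc : (σ : ℂ) ^ 2 = 1 + (y : ℂ) ^ 2 := by exact_mod_cast hσ
  have hor : sqrtBranch (Complex.I * y) = Complex.I * σ ∨
      sqrtBranch (Complex.I * y) = -(Complex.I * σ) := by
    apply sq_eq_sq_iff_eq_or_eq_neg.1
    rw [hs2]
    linear_combination (-Complex.I ^ 2) * hσc - Complex.I_sq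
  rcases hor with h | h
  · exact h
  · -- The negative root would make `√((ζ + 1)/(ζ - 1))` have negative real part.
    exfalso
    rw [sqrtBranch] at h
    set w := ((Complex.I * (y : ℂ) + 1) / (Complex.I * (y : ℂ) - 1)) ^ ((1 : ℂ) / 2)
    have hr := congrArg Complex.re h
    have hi := congrArg Complex.im h
    simp at hr hi
    have : w.re * (1 + y ^ 2) = -(σ * y) := by linear_combination y * hi - hr
    nlinarith [mul_pos hre (by positivity : 0 < 1 + y ^ 2)]

/-- The equation on the imaginary axis: with `y = |a|(ρ − ρ⁻¹)/2`, it holds at `z = iρ`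
iff `|a|(ρ + ρ⁻¹)/2` is `η` times the root of `1 + y²` of the sign of `y`. -/
lemma eqn_on_imag_axis {α η y σ ρ ρ' : ℝ} (hρ : ρ * ρ' = 1) (hy : y = α * (ρ - ρ') / 2)
    (hσ : σ ^ 2 = 1 + y ^ 2) (hσy : 0 < σ * y) :
    (α : ℂ) * (Complex.I * ρ - (Complex.I * ρ)⁻¹) / 2
        = η * sqrtBranch (α * phitC (Complex.I * ρ)) ↔
      α * (ρ + ρ') / 2 = η * σ := by
  have hinv : (Complex.I * (ρ : ℂ))⁻¹ = -(Complex.I * ρ') := by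
    apply inv_eq_of_mul_eq_one_right
    have : (ρ : ℂ) * ρ' = 1 := by exact_mod_cast hρ
    linear_combination (-Complex.I ^ 2) * this - Complex.I_sq
  have harg : (α : ℂ) * phitC (Complex.I * ρ) = Complex.I * (y : ℝ) := by
    rw [phitC, hinv, hy]
    push_cast
    ring
  rw [harg, sqrtBranch_I_mul hσ hσy, hinv]
  constructor
  · intro h
    have h' := congrArg Complex.im h
    have e1 : (α : ℂ) * (Complex.I * ρ - -(Complex.I * ρ')) / 2
        = ((α * (ρ + ρ') / 2 : ℝ) : ℂ) * Complex.I := by push_cast; ring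
    have e2 : (η : ℂ) * (Complex.I * σ) = ((η * σ : ℝ) : ℂ) * Complex.I := by push_cast; ring
    rw [e1, e2] at h'
    simpa using h'
  · intro h
    have : (α : ℂ) * (ρ + ρ') / 2 = η * σ := by exact_mod_cast h
    linear_combination Complex.I * this

/-- Lemma `cp`: for `|a| < |η| < 1`, the solutions `z ∈ D_A` of
`z λ_A′(z)/λ_A(z) = η` are exactly `z = ± i r(η)`. -/
theorem stmt16 (a b : ℂ) (hab1 : ‖a‖ ^ 2 + ‖b‖ ^ 2 = 1) (hab : a * b ≠ 0)
    (η : ℝ) (hη1 : ‖a‖ < |η|) (hη2 : |η| < 1) :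
    ∀ z ∈ DA a b,
      (z * deriv (lamAn a) z / lamAn a z = (η : ℂ) ↔
        z = Complex.I * (rfun a b η : ℂ) ∨ z = -(Complex.I * (rfun a b η : ℂ))) := by
  intro z hz
  have ha : 0 < ‖a‖ := norm_pos_iff.2 (left_ne_zero_of_mul hab)
  have hb : 0 < ‖b‖ := norm_pos_iff.2 (right_ne_zero_of_mul hab)
  have hz0 : z ≠ 0 := hz.2.1
  rw [logDeriv_eq_iff hab1 ha hz]
  have hηsq1 : ‖a‖ ^ 2 < η ^ 2 := by
    rw [← sq_abs η]; exact pow_lt_pow_left₀ hη1 ha.le two_ne_zero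
  have hηsq2 : η ^ 2 < 1 := by
    rw [← sq_abs η]; exact pow_lt_one₀ (abs_nonneg η) hη2 two_ne_zero
  have hη0 : η ≠ 0 := by rintro rfl; nlinarith
  set α : ℝ := ‖a‖ with hα
  set S : ℝ := Real.sqrt (1 - η ^ 2) with hS
  have hSpos : 0 < S := Real.sqrt_pos.2 (by linarith)
  have hS2 : S ^ 2 = 1 - η ^ 2 := Real.sq_sqrt (by linarith)
  set T : ℝ := Real.sqrt (η ^ 2 - α ^ 2) with hT
  have hTpos : 0 < T := Real.sqrt_pos.2 (by linarith)
  have hT2 : T ^ 2 = η ^ 2 - α ^ 2 := Real.sq_sqrt (by linarith)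
  -- `r = p + q` with `p² - q² = 1`; the four candidates are `z = i(±p ± q)`.
  obtain ⟨p, hp⟩ : ∃ p : ℝ, p = ‖b‖ * η / (α * S) := ⟨_, rfl⟩
  obtain ⟨q, hq⟩ : ∃ q : ℝ, q = T / (α * S) := ⟨_, rfl⟩
  obtain ⟨κ, hκ⟩ : ∃ κ : ℝ, κ = ‖b‖ / S := ⟨_, rfl⟩
  have hr : rfun a b η = p + q := by rw [rfun, hp, hq, ← add_div]
  have hqpos : 0 < q := by rw [hq]; positivity
  have hκpos : 0 < κ := by rw [hκ]; positivity
  have hκp : α * p = η * κ := by rw [hp, hκ]; field_simp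
  have hp0 : p ≠ 0 := by
    rw [hp]
    exact div_ne_zero (mul_ne_zero hb.ne' hη0) (by positivity)
  have hb2 : ‖b‖ ^ 2 = 1 - α ^ 2 := by linarith
  have hq2 : α ^ 2 * (1 - η ^ 2) * q ^ 2 = η ^ 2 - α ^ 2 := by
    rw [hq, ← hS2, ← hT2]; field_simp
  have hκ2 : κ ^ 2 = 1 + (α * q) ^ 2 := by
    rw [hκ, hq, div_pow, mul_pow, div_pow, mul_pow, hb2, hT2, hS2]
    have : 1 - η ^ 2 ≠ 0 := by linarith
    field_simp
    ring
  have hpq : p ^ 2 - q ^ 2 = 1 := by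
    rw [hp, hq, div_pow, div_pow, mul_pow, mul_pow, hb2, hT2, hS2]
    have : 1 - η ^ 2 ≠ 0 := by linarith
    field_simp
    ring
  -- `z = i(εp + δq)` is a solution iff `ε = δ`.
  have key : ∀ ε δ : ℝ, ε ^ 2 = 1 → δ ^ 2 = 1 →
      ((α : ℂ) * (Complex.I * (ε * p + δ * q : ℝ) - (Complex.I * (ε * p + δ * q : ℝ))⁻¹) / 2
        = η * sqrtBranch (α * phitC (Complex.I * (ε * p + δ * q : ℝ))) ↔ ε = δ) := by
    intro ε δ hε hδ
    rw [eqn_on_imag_axis (ρ' := ε * p - δ * q) (y := δ * (α * q)) (σ := δ * κ)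
      (by linear_combination p ^ 2 * hε - q ^ 2 * hδ + hpq) (by ring)
      (by linear_combination hκ2 + (κ ^ 2 - (α * q) ^ 2) * hδ)
      (by
        have : δ * κ * (δ * (α * q)) = κ * (α * q) := by
          linear_combination κ * (α * q) * hδ
        rw [this]; positivity)]
    constructor
    · intro h
      have h' : (ε - δ) * (α * p) = 0 := by linear_combination h - δ * hκp
      rcases mul_eq_zero.1 h' with h0 | h0
      · linarith
      · exact absurd h0 (mul_ne_zero ha.ne' hp0)
    · rintro rfl
      linear_combination ε * hκp
  rw [hr]
  constructor
  · intro h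
    -- Squaring the equation gives `φ̃(z)² = -q²`, hence the four candidates.
    have h1 : (α : ℂ) * phitC z - 1 ≠ 0 := by
      intro h
      exact mul_phitC_ne_of_mem_DA hab1 ha hz 1 (by norm_num)
        (by push_cast; linear_combination h)
    have hs2 := sqrtBranch_sq h1
    have hdiff : ((z - z⁻¹) / 2) ^ 2 = phitC z ^ 2 - 1 := by
      rw [phitC]; field_simp; ring
    have hq2c : (α : ℂ) ^ 2 * (1 - (η : ℂ) ^ 2) * (q : ℂ) ^ 2 = (η : ℂ) ^ 2 - (α : ℂ) ^ 2 := by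
      exact_mod_cast hq2
    have hpqc : (p : ℂ) ^ 2 - (q : ℂ) ^ 2 = 1 := by exact_mod_cast hpq
    have hcoef : (α : ℂ) ^ 2 * (1 - (η : ℂ) ^ 2) ≠ 0 := by
      have : α ^ 2 * (1 - η ^ 2) ≠ 0 := by
        have : 0 < 1 - η ^ 2 := by linarith
        positivity
      exact_mod_cast this
    have hphi2 : phitC z ^ 2 = (Complex.I * q) ^ 2 := by
      apply mul_left_cancel₀ hcoef
      have hsquare := congrArg (· ^ 2) h
      simp only [mul_pow, hs2] at hsquare
      linear_combination hsquare - (α : ℂ) ^ 2 * hdiff + hq2c -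
        (α : ℂ) ^ 2 * (1 - (η : ℂ) ^ 2) * (q : ℂ) ^ 2 * Complex.I_sq
    have hdiff2 : ((z - z⁻¹) / 2) ^ 2 = (Complex.I * p) ^ 2 := by
      linear_combination hdiff + hphi2 - Complex.I ^ 2 * hpqc - Complex.I_sq
    have hzsum : z = (z - z⁻¹) / 2 + phitC z := by rw [phitC]; ring
    have cand : ∃ ε δ : ℝ, (ε = 1 ∨ ε = -1) ∧ (δ = 1 ∨ δ = -1) ∧
        z = Complex.I * (ε * p + δ * q : ℝ) := by
      rcases sq_eq_sq_iff_eq_or_eq_neg.1 hdiff2 with e1 | e1 <;>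
      rcases sq_eq_sq_iff_eq_or_eq_neg.1 hphi2 with e2 | e2 <;>
      rw [e1, e2] at hzsum
      · exact ⟨1, 1, by simp, by simp, by rw [hzsum]; push_cast; ring⟩
      · exact ⟨1, -1, by simp, by simp, by rw [hzsum]; push_cast; ring⟩
      · exact ⟨-1, 1, by simp, by simp, by rw [hzsum]; push_cast; ring⟩
      · exact ⟨-1, -1, by simp, by simp, by rw [hzsum]; push_cast; ring⟩
    obtain ⟨ε, δ, hε, hδ, hzeq⟩ := cand
    have heq : ε = δ := by
      rw [hzeq] at h
      exact (key ε δ (by rcases hε with rfl | rfl <;> norm_num)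
        (by rcases hδ with rfl | rfl <;> norm_num)).1 h
    subst heq
    rcases hε with rfl | rfl
    · left; rw [hzeq]; push_cast; ring
    · right; rw [hzeq]; push_cast; ring
  · rintro (h | h)
    · have hz' : z = Complex.I * ((1 : ℝ) * p + (1 : ℝ) * q : ℝ) := by
        rw [h]; push_cast; ring
      rw [hz']
      exact (key 1 1 (by norm_num) (by norm_num)).2 rfl
    · have hz' : z = Complex.I * ((-1 : ℝ) * p + (-1 : ℝ) * q : ℝ) := by
        rw [h]; push_cast; ring
      rw [hz']
      exact (key (-1) (-1) (by norm_num) (by norm_num)).2 rfl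
end
end

section
/- Let r satisfy r > (1 + |b|)/|a| or 0 < r < (1 − |b|)/|a|. Then for every t ∈ [−π, π], |λ_A(r)| = |λ_A(−r)| ≤ |λ_A(r e^{it})| ≤ |λ_A(i r)| = |λ_A(−i r)|. The left equality holds if and only if t ∈ {0, π, −π}, and the right equality holds if and only if t = ±π/2. -/
/-! The map `ψ_A` inverts the Joukowski map onto the exterior of the unit disc, so `|ψ_A(ζ)| ≥ 1` and
`|ψ_A(ζ)| + |ψ_A(ζ)|⁻¹ = |ζ - 1| + |ζ + 1|` (`psiA_norm`): the level curves of `|ψ_A|` are the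
ellipses with foci `±1`. With `w` the square root in `ψ_A`, this follows from
`ψ_A(ζ) = (w + 1) / (w - 1)` and `Re w ≥ 0`.

Consequently `V = ((|ζ - 1| + |ζ + 1|) / 2)²` is the larger root of
`v² - (|ζ|² + 1) v + (Re ζ)² = 0` (`focal_quadratic`). For `ζ = |a| φ̃(r e^{it})` one has
`Re ζ = A cos t`, `Im ζ = B sin t` with `A² - B² = |a|² < 1`, so this quadratic is
`v² - (B² + 1) v + u (A² - |a|² v)` with `u = cos² t`. Its larger root stays below `A² / |a|²`,
where the coefficient of `u` is positive; hence `V`, and with it `|λ_A(r e^{it})|`, is a strictly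
decreasing function of `cos² t` (`focal_strictAnti`, `lamAn_lt`). The extrema are therefore attained
exactly where `cos² t` is `1` or `0`. -/

open Filter Topology Asymptotics MeasureTheory

noncomputable section

lemma cpow_half_sq (z : ℂ) : (z ^ ((1 : ℂ) / 2)) ^ 2 = z := by
  simp

lemma cpow_half_re_nonneg (z : ℂ) : 0 ≤ (z ^ ((1 : ℂ) / 2)).re := by
  by_cases hz : z = 0
  · simp [hz]
  · rw [Complex.cpow_def_of_ne_zero hz, Complex.exp_re]
    apply mul_nonneg (Real.exp_pos _).le
    have h1 := Complex.neg_pi_lt_arg z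
    have h2 := Complex.arg_le_pi z
    have him : (Complex.log z * (1 / 2)).im = z.arg / 2 := by
      rw [show Complex.log z * (1 / 2) = Complex.log z / ((2 : ℝ) : ℂ) by push_cast; ring,
        Complex.div_ofReal_im, Complex.log_im]
    rw [him]
    exact Real.cos_nonneg_of_mem_Icc ⟨by linarith, by linarith⟩

/-- The level curves of `|ψ_A|` are ellipses with foci `±1`. This holds for every `ζ`, on the cut
`[-1, 1]` too, where `|ψ_A| = 1`. -/
lemma psiA_norm (ζ : ℂ) :
    1 ≤ ‖psiA ζ‖ ∧ ‖psiA ζ‖ + ‖psiA ζ‖⁻¹ = ‖ζ - 1‖ + ‖ζ + 1‖ := by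
  by_cases hζ : ζ = 1
  · subst hζ
    simp [psiA]
    norm_num
  have hζ' : ζ - 1 ≠ 0 := sub_ne_zero.mpr hζ
  unfold psiA
  set w := ((ζ + 1) / (ζ - 1)) ^ ((1 : ℂ) / 2) with hw
  have hsq : w ^ 2 = (ζ + 1) / (ζ - 1) := cpow_half_sq _
  have hre : 0 ≤ w.re := cpow_half_re_nonneg _
  have hmul : w ^ 2 * (ζ - 1) = ζ + 1 := by rw [hsq]; field_simp
  have hprod : (w - 1) * (w + 1) * (ζ - 1) = 2 := by linear_combination hmul
  have hm : w - 1 ≠ 0 := by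
    intro h; rw [h] at hprod; norm_num at hprod
  have hp : w + 1 ≠ 0 := by
    intro h; rw [h] at hprod; norm_num at hprod
  have hpsi : ζ + (ζ - 1) * w = (w + 1) / (w - 1) := by
    rw [eq_div_iff hm]
    linear_combination hmul
  have hz1 : ζ - 1 = 2 / ((w - 1) * (w + 1)) := by
    rw [eq_div_iff (mul_ne_zero hm hp)]
    linear_combination hprod
  have hz2 : ζ + 1 = 2 * w ^ 2 / ((w - 1) * (w + 1)) := by
    rw [← hmul, hz1]; ring
  have hmpos : 0 < ‖w - 1‖ := norm_pos_iff.mpr hm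
  have hppos : 0 < ‖w + 1‖ := norm_pos_iff.mpr hp
  have e1 : ‖w - 1‖ ^ 2 = (w.re - 1) ^ 2 + w.im ^ 2 := by
    rw [Complex.sq_norm, Complex.normSq_apply]; simp; ring
  have e2 : ‖w + 1‖ ^ 2 = (w.re + 1) ^ 2 + w.im ^ 2 := by
    rw [Complex.sq_norm, Complex.normSq_apply]; simp; ring
  have e3 : ‖w‖ ^ 2 = w.re ^ 2 + w.im ^ 2 := by
    rw [Complex.sq_norm, Complex.normSq_apply]; ring
  rw [hpsi, hz1, hz2]
  simp only [norm_div, norm_mul, norm_pow, Complex.norm_ofNat]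
  constructor
  · rw [le_div_iff₀ hmpos, one_mul]
    apply le_of_sq_le_sq _ hppos.le
    rw [e1, e2]; nlinarith
  · field_simp
    rw [e1, e2, e3]; ring

/-- The squared semi-major axis of the ellipse with foci `±1` through `ζ` is the larger root of
`v² - (|ζ|² + 1) v + (Re ζ)²`; being the larger root is the second inequality. -/
lemma focal_quadratic (ζ : ℂ) (V : ℝ) (hV : V = ((‖ζ - 1‖ + ‖ζ + 1‖) / 2) ^ 2) :
    V ^ 2 - (ζ.re ^ 2 + ζ.im ^ 2 + 1) * V + ζ.re ^ 2 = 0 ∧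
      ζ.re ^ 2 + ζ.im ^ 2 + 1 ≤ 2 * V := by
  have e1 : ‖ζ - 1‖ ^ 2 = (ζ.re - 1) ^ 2 + ζ.im ^ 2 := by
    rw [Complex.sq_norm, Complex.normSq_apply]; simp; ring
  have e2 : ‖ζ + 1‖ ^ 2 = (ζ.re + 1) ^ 2 + ζ.im ^ 2 := by
    rw [Complex.sq_norm, Complex.normSq_apply]; simp; ring
  have hm : 0 ≤ ‖ζ - 1‖ * ‖ζ + 1‖ := by positivity
  have hV2 : V = (ζ.re ^ 2 + ζ.im ^ 2 + 1 + ‖ζ - 1‖ * ‖ζ + 1‖) / 2 := by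
    rw [hV]; linear_combination (e1 + e2) / 4
  have hmn : (‖ζ - 1‖ * ‖ζ + 1‖) ^ 2
      = ((ζ.re - 1) ^ 2 + ζ.im ^ 2) * ((ζ.re + 1) ^ 2 + ζ.im ^ 2) := by
    rw [mul_pow, e1, e2]
  refine ⟨?_, by linarith⟩
  rw [hV2]; linear_combination hmn / 4

/-- The larger root `v₁` of `v² - (B2 + 1 + α u) v + A2 u` at `u = u₁` exceeds every root `v₂` at any
`u = u₂ > u₁`. Here `A2` and `B2` stand for `A²` and `B²`. -/
lemma focal_strictAnti {A2 B2 α u₁ u₂ v₁ v₂ : ℝ} (hα : 0 < α) (hα1 : α < 1) (hB : 0 < B2)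
    (hA : A2 = B2 + α) (hu : u₁ < u₂) (hu₂ : u₂ ≤ 1)
    (h₁ : v₁ ^ 2 - (B2 + 1 + α * u₁) * v₁ + A2 * u₁ = 0) (l₁ : B2 + 1 + α * u₁ ≤ 2 * v₁)
    (h₂ : v₂ ^ 2 - (B2 + 1 + α * u₂) * v₂ + A2 * u₂ = 0) :
    v₂ < v₁ := by
  -- If `α v₂ ≥ A2`, then `v₂ > 1 + B2`, and `u₂ ≤ 1` makes `v₂ (v₂ - (B2 + 1))` too large.
  have key : α * v₂ < A2 := by
    by_contra! hcon
    have hv : 1 + B2 < v₂ := by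
      by_contra! hle
      nlinarith
    have : v₂ * (v₂ - (B2 + 1)) = u₂ * (α * v₂ - A2) := by linear_combination h₂
    nlinarith
  by_contra! hle
  -- The quadratic at `u₁` is negative at `v₂`, hence `v₂` is below its larger root `v₁`.
  have hneg : v₂ ^ 2 - (B2 + 1 + α * u₁) * v₂ + A2 * u₁ < 0 := by
    nlinarith [mul_pos (sub_pos.mpr hu) (sub_pos.mpr key)]
  nlinarith [mul_nonneg (sub_nonneg.mpr hle) (sub_nonneg.mpr hle),
    mul_nonneg (sub_nonneg.mpr hle) (sub_nonneg.mpr l₁)]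

lemma joukowski_le {M N : ℝ} (hM : 1 ≤ M) (hMN : M ≤ N) : M + M⁻¹ ≤ N + N⁻¹ := by
  have hM0 : 0 < M := by linarith
  have hN0 : 0 < N := by linarith
  have h : N + N⁻¹ - (M + M⁻¹) = (N - M) * (M * N - 1) / (M * N) := by
    field_simp; ring
  have : 0 ≤ (N - M) * (M * N - 1) / (M * N) := by
    apply div_nonneg (mul_nonneg (by linarith) (by nlinarith)) (by positivity)
  linarith

lemma phit_polar (a : ℂ) (r t : ℝ) :
    ((‖a‖ : ℂ) * phitC ((r : ℂ) * Complex.exp (Complex.I * (t : ℂ)))).re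
        = ‖a‖ * ((r + r⁻¹) / 2) * Real.cos t ∧
      ((‖a‖ : ℂ) * phitC ((r : ℂ) * Complex.exp (Complex.I * (t : ℂ)))).im
        = ‖a‖ * ((r - r⁻¹) / 2) * Real.sin t := by
  have h : (‖a‖ : ℂ) * phitC ((r : ℂ) * Complex.exp (Complex.I * (t : ℂ)))
      = ((‖a‖ * ((r + r⁻¹) / 2) * Real.cos t : ℝ) : ℂ)
        + ((‖a‖ * ((r - r⁻¹) / 2) * Real.sin t : ℝ) : ℂ) * Complex.I := by
    unfold phitC
    rw [mul_inv, ← Complex.exp_neg, mul_comm Complex.I (t : ℂ), ← neg_mul, Complex.exp_mul_I,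
      Complex.exp_mul_I, Complex.cos_neg, Complex.sin_neg]
    push_cast
    ring
  rw [h]
  constructor
  · simp only [Complex.add_re, Complex.ofReal_re, Complex.re_ofReal_mul, Complex.I_re, mul_zero,
      add_zero]
  · simp only [Complex.add_im, Complex.ofReal_im, Complex.im_ofReal_mul, Complex.I_im, mul_one,
      zero_add]

/-- `|λ_A(r e^{it})|` is strictly decreasing in `cos² t`. -/
lemma lamAn_lt (a : ℂ) (ha : 0 < ‖a‖) (ha1 : ‖a‖ < 1) (r : ℝ) (hr0 : 0 < r) (hr1 : r ≠ 1)
    (s t : ℝ) (hst : Real.cos s ^ 2 < Real.cos t ^ 2) :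
    ‖lamAn a ((r : ℂ) * Complex.exp (Complex.I * (t : ℂ)))‖
      < ‖lamAn a ((r : ℂ) * Complex.exp (Complex.I * (s : ℂ)))‖ := by
  obtain ⟨res, ims⟩ := phit_polar a r s
  obtain ⟨ret, imt⟩ := phit_polar a r t
  unfold lamAn
  set ζ := (‖a‖ : ℂ) * phitC ((r : ℂ) * Complex.exp (Complex.I * (s : ℂ)))
  set ξ := (‖a‖ : ℂ) * phitC ((r : ℂ) * Complex.exp (Complex.I * (t : ℂ)))
  obtain ⟨h1, l1⟩ := focal_quadratic ζ _ rfl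
  obtain ⟨h2, l2⟩ := focal_quadratic ξ _ rfl
  obtain ⟨n1, e1⟩ := psiA_norm ζ
  obtain ⟨n2, e2⟩ := psiA_norm ξ
  set v₁ := ((‖ζ - 1‖ + ‖ζ + 1‖) / 2) ^ 2 with hv1
  set v₂ := ((‖ξ - 1‖ + ‖ξ + 1‖) / 2) ^ 2 with hv2
  rw [res, ims] at h1 l1
  rw [ret, imt] at h2 l2
  have hrr : r * r⁻¹ = 1 := mul_inv_cancel₀ hr0.ne'
  have hBne : r - r⁻¹ ≠ 0 := by
    intro h
    have : r ^ 2 = 1 := by linear_combination r * h + hrr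
    apply hr1
    nlinarith
  have hB : 0 < (‖a‖ * ((r - r⁻¹) / 2)) ^ 2 := by positivity
  have hA : (‖a‖ * ((r + r⁻¹) / 2)) ^ 2 = (‖a‖ * ((r - r⁻¹) / 2)) ^ 2 + ‖a‖ ^ 2 := by
    linear_combination ‖a‖ ^ 2 * hrr
  have ss := Real.sin_sq_add_cos_sq s
  have st := Real.sin_sq_add_cos_sq t
  -- `|ζ|² + 1 = B² + 1 + |a|² cos²`, by `A² - B² = |a|²`.
  have q1 : (‖a‖ * ((r + r⁻¹) / 2) * Real.cos s) ^ 2 + (‖a‖ * ((r - r⁻¹) / 2) * Real.sin s) ^ 2 + 1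
      = (‖a‖ * ((r - r⁻¹) / 2)) ^ 2 + 1 + ‖a‖ ^ 2 * Real.cos s ^ 2 := by
    linear_combination Real.cos s ^ 2 * hA + (‖a‖ * ((r - r⁻¹) / 2)) ^ 2 * ss
  have q2 : (‖a‖ * ((r + r⁻¹) / 2) * Real.cos t) ^ 2 + (‖a‖ * ((r - r⁻¹) / 2) * Real.sin t) ^ 2 + 1
      = (‖a‖ * ((r - r⁻¹) / 2)) ^ 2 + 1 + ‖a‖ ^ 2 * Real.cos t ^ 2 := by
    linear_combination Real.cos t ^ 2 * hA + (‖a‖ * ((r - r⁻¹) / 2)) ^ 2 * st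
  rw [q1] at h1 l1
  rw [q2] at h2 l2
  have hlt : v₂ < v₁ := by
    refine focal_strictAnti (A2 := (‖a‖ * ((r + r⁻¹) / 2)) ^ 2) (by positivity)
      (pow_lt_one₀ ha.le ha1 two_ne_zero) hB hA hst (Real.cos_sq_le_one t) ?_ l1 ?_
    · linear_combination h1
    · linear_combination h2
  by_contra! hle
  have := joukowski_le n1 hle
  rw [e1, e2] at this
  have : v₁ ≤ v₂ := by
    rw [hv1, hv2]; gcongr
  linarith

/-- `|λ_A(r e^{it})|` depends on `t` only through `cos² t`. -/
lemma lamAn_eq (a : ℂ) (r s t : ℝ)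
    (hst : Real.cos s ^ 2 = Real.cos t ^ 2) :
    ‖lamAn a ((r : ℂ) * Complex.exp (Complex.I * (t : ℂ)))‖
      = ‖lamAn a ((r : ℂ) * Complex.exp (Complex.I * (s : ℂ)))‖ := by
  obtain ⟨res, ims⟩ := phit_polar a r s
  obtain ⟨ret, imt⟩ := phit_polar a r t
  unfold lamAn
  set ζ := (‖a‖ : ℂ) * phitC ((r : ℂ) * Complex.exp (Complex.I * (s : ℂ)))
  set ξ := (‖a‖ : ℂ) * phitC ((r : ℂ) * Complex.exp (Complex.I * (t : ℂ)))
  obtain ⟨n1, e1⟩ := psiA_norm ζ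
  obtain ⟨n2, e2⟩ := psiA_norm ξ
  have hsin : Real.sin s ^ 2 = Real.sin t ^ 2 := by
    rw [Real.sin_sq, Real.sin_sq, hst]
  have hre : ζ.re ^ 2 = ξ.re ^ 2 := by rw [res, ret, mul_pow, hst, ← mul_pow]
  have him : ζ.im ^ 2 = ξ.im ^ 2 := by rw [ims, imt, mul_pow, hsin, ← mul_pow]
  obtain ⟨h1, l1⟩ := focal_quadratic ζ _ rfl
  obtain ⟨h2, l2⟩ := focal_quadratic ξ _ rfl
  rw [hre, him] at h1 l1
  set v₁ := ((‖ζ - 1‖ + ‖ζ + 1‖) / 2) ^ 2 with hv1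
  set v₂ := ((‖ξ - 1‖ + ‖ξ + 1‖) / 2) ^ 2 with hv2
  -- Two larger roots of the same quadratic coincide.
  have hv : v₁ = v₂ := by
    have hm : (v₁ - v₂) * (v₁ + v₂ - (ξ.re ^ 2 + ξ.im ^ 2 + 1)) = 0 := by
      linear_combination h1 - h2
    rcases mul_eq_zero.mp hm with h | h <;> linarith
  have hS : ‖ζ - 1‖ + ‖ζ + 1‖ = ‖ξ - 1‖ + ‖ξ + 1‖ := by
    have h := (pow_left_inj₀ (by positivity) (by positivity) two_ne_zero).mp (hv1 ▸ hv2 ▸ hv)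
    linarith
  have hJ : ‖psiA ξ‖ + ‖psiA ξ‖⁻¹ = ‖psiA ζ‖ + ‖psiA ζ‖⁻¹ := by rw [e1, e2, hS]
  set M := ‖psiA ξ‖
  set N := ‖psiA ζ‖
  have hM0 : 0 < M := by linarith
  have hN0 : 0 < N := by linarith
  have hf : (M - N) * (M * N - 1) = 0 := by
    field_simp at hJ
    linear_combination hJ
  rcases mul_eq_zero.mp hf with h | h
  · linarith
  · nlinarith

/-- Lemma `ellipse1`: for `r > (1+|b|)/|a|` or `0 < r < (1−|b|)/|a|`,
`|λ_A(±r)| ≤ |λ_A(r e^{it})| ≤ |λ_A(±ir)|` on `[−π, π]`, with equality on the left iff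
`t ∈ {0, π, −π}` and on the right iff `t = ±π/2`. -/
theorem stmt17 (a b : ℂ) (hab1 : ‖a‖ ^ 2 + ‖b‖ ^ 2 = 1) (hab : a * b ≠ 0)
    (r : ℝ) (hr : (1 + ‖b‖) / ‖a‖ < r ∨ (0 < r ∧ r < (1 - ‖b‖) / ‖a‖)) :
    ‖lamAn a ((r : ℂ))‖ = ‖lamAn a (-(r : ℂ))‖ ∧
    ‖lamAn a (Complex.I * (r : ℂ))‖ = ‖lamAn a (-(Complex.I * (r : ℂ)))‖ ∧
    ∀ t ∈ Set.Icc (-Real.pi) Real.pi,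
      ‖lamAn a ((r : ℂ))‖ ≤ ‖lamAn a ((r : ℂ) * Complex.exp (Complex.I * (t : ℂ)))‖ ∧
      ‖lamAn a ((r : ℂ) * Complex.exp (Complex.I * (t : ℂ)))‖ ≤ ‖lamAn a (Complex.I * (r : ℂ))‖ ∧
      (‖lamAn a ((r : ℂ) * Complex.exp (Complex.I * (t : ℂ)))‖ = ‖lamAn a ((r : ℂ))‖ ↔
        t = 0 ∨ t = Real.pi ∨ t = -Real.pi) ∧
      (‖lamAn a ((r : ℂ) * Complex.exp (Complex.I * (t : ℂ)))‖ = ‖lamAn a (Complex.I * (r : ℂ))‖ ↔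
        t = Real.pi / 2 ∨ t = -(Real.pi / 2)) := by
  have ha0 : a ≠ 0 := left_ne_zero_of_mul hab
  have hb0 : b ≠ 0 := right_ne_zero_of_mul hab
  have ha : 0 < ‖a‖ := norm_pos_iff.mpr ha0
  have hb : 0 < ‖b‖ := norm_pos_iff.mpr hb0
  have ha1 : ‖a‖ < 1 := by nlinarith
  have hb1 : ‖b‖ < 1 := by nlinarith
  have hr0 : 0 < r := by
    rcases hr with h | h
    · exact lt_trans (by positivity) h
    · exact h.1
  have hr1 : r ≠ 1 := by
    rintro rfl
    rcases hr with h | h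
    · rw [div_lt_one ha] at h; linarith
    · have h := h.2
      rw [lt_div_iff₀ ha] at h; nlinarith
  have hlt := lamAn_lt a ha ha1 r hr0 hr1
  have heq := lamAn_eq a r
  -- The four distinguished points are `r e^{it}` for `t = 0, π, π/2, -π/2`.
  have p0 : (r : ℂ) = (r : ℂ) * Complex.exp (Complex.I * ((0 : ℝ) : ℂ)) := by simp
  have ppi : -(r : ℂ) = (r : ℂ) * Complex.exp (Complex.I * (Real.pi : ℂ)) := by
    rw [mul_comm Complex.I, Complex.exp_pi_mul_I]; ring
  have ph : Complex.I * (r : ℂ)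
      = (r : ℂ) * Complex.exp (Complex.I * ((Real.pi / 2 : ℝ) : ℂ)) := by
    rw [mul_comm Complex.I ((Real.pi / 2 : ℝ) : ℂ), Complex.exp_mul_I, ← Complex.ofReal_cos,
      ← Complex.ofReal_sin]
    simp [mul_comm]
  have pmh : -(Complex.I * (r : ℂ))
      = (r : ℂ) * Complex.exp (Complex.I * ((-(Real.pi / 2) : ℝ) : ℂ)) := by
    rw [mul_comm Complex.I ((-(Real.pi / 2) : ℝ) : ℂ), Complex.exp_mul_I, ← Complex.ofReal_cos,
      ← Complex.ofReal_sin]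
    simp [mul_comm]
  have n0 : ‖lamAn a (r : ℂ)‖
      = ‖lamAn a ((r : ℂ) * Complex.exp (Complex.I * ((0 : ℝ) : ℂ)))‖ := by rw [← p0]
  rw [ppi, pmh, ph, n0]
  refine ⟨heq _ _ (by simp), heq _ _ (by simp), fun t ht => ?_⟩
  have hc1 := Real.cos_sq_le_one t
  have hc0 := sq_nonneg (Real.cos t)
  have hs := Real.sin_sq_add_cos_sq t
  have hL : Real.cos t ^ 2 = 1 ↔ t = 0 ∨ t = Real.pi ∨ t = -Real.pi := by
    constructor
    · intro h
      have hsin : Real.sin t = 0 := by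
        apply pow_eq_zero_iff two_ne_zero |>.mp; linarith
      by_contra! hne
      obtain ⟨h0, h1, h2⟩ := hne
      rcases lt_or_gt_of_ne h0 with hneg | hpos
      · have := Real.sin_neg_of_neg_of_neg_pi_lt hneg (lt_of_le_of_ne ht.1 (Ne.symm h2))
        linarith
      · have := Real.sin_pos_of_pos_of_lt_pi hpos (lt_of_le_of_ne ht.2 h1)
        linarith
    · rintro (rfl | rfl | rfl) <;> simp
  have hR : Real.cos t ^ 2 = 0 ↔ t = Real.pi / 2 ∨ t = -(Real.pi / 2) := by
    constructor
    · intro h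
      have hcos : Real.cos t = 0 := pow_eq_zero_iff two_ne_zero |>.mp h
      have hcos' : Real.cos |t| = Real.cos (Real.pi / 2) := by
        rw [Real.cos_abs, hcos, Real.cos_pi_div_two]
      have habs := Real.injOn_cos ⟨abs_nonneg t, abs_le.mpr ht⟩
        ⟨by positivity, by linarith [Real.pi_pos]⟩ hcos'
      exact (abs_eq (by positivity)).mp habs
    · rintro (rfl | rfl) <;> simp
  rw [← hL, ← hR]
  have z0 : Real.cos 0 ^ 2 = 1 := by simp
  have zh : Real.cos (Real.pi / 2) ^ 2 = 0 := by simp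
  have left : ‖lamAn a ((r : ℂ) * Complex.exp (Complex.I * (t : ℂ)))‖
        = ‖lamAn a ((r : ℂ) * Complex.exp (Complex.I * ((0 : ℝ) : ℂ)))‖ ∧ Real.cos t ^ 2 = 1 ∨
      ‖lamAn a ((r : ℂ) * Complex.exp (Complex.I * ((0 : ℝ) : ℂ)))‖
        < ‖lamAn a ((r : ℂ) * Complex.exp (Complex.I * (t : ℂ)))‖ ∧ Real.cos t ^ 2 ≠ 1 := by
    rcases hc1.lt_or_eq with h | h
    · exact Or.inr ⟨hlt _ _ (by rwa [z0]), h.ne⟩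
    · exact Or.inl ⟨heq _ _ (by rw [z0, h]), h⟩
  have right : ‖lamAn a ((r : ℂ) * Complex.exp (Complex.I * (t : ℂ)))‖
        = ‖lamAn a ((r : ℂ) * Complex.exp (Complex.I * ((Real.pi / 2 : ℝ) : ℂ)))‖
        ∧ Real.cos t ^ 2 = 0 ∨
      ‖lamAn a ((r : ℂ) * Complex.exp (Complex.I * (t : ℂ)))‖
        < ‖lamAn a ((r : ℂ) * Complex.exp (Complex.I * ((Real.pi / 2 : ℝ) : ℂ)))‖
        ∧ Real.cos t ^ 2 ≠ 0 := by
    rcases hc0.lt_or_eq with h | h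
    · exact Or.inr ⟨hlt _ _ (by rwa [zh]), h.ne'⟩
    · exact Or.inl ⟨heq _ _ (by rw [zh, h]), h.symm⟩
  refine ⟨?_, ?_, ?_, ?_⟩
  · rcases left with h | h
    · exact h.1.ge
    · exact h.1.le
  · rcases right with h | h
    · exact h.1.le
    · exact h.1.le
  · rcases left with h | h
    · exact iff_of_true h.1 h.2
    · exact iff_of_false h.1.ne' h.2
  · rcases right with h | h
    · exact iff_of_true h.1 h.2
    · exact iff_of_false h.1.ne h.2
end
end

section
/- Let 0 < c < 1 and μ > 0, and let ζ(t) = c cos t + i μ sin t for t ∈ [−π, π]. Then |ψ_B(−iμ)| ≤ |ψ_B(ζ(t))| ≤ |ψ_B(iμ)| for all t ∈ [−π, π]; the first inequality is an equality if and only if t = −π/2, and the second is an equality if and only if t = π/2. (Explicitly, |ψ_B(−iμ)| = √(μ² + 1) − μ and |ψ_B(iμ)| = √(μ² + 1) + μ.) -/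
/-!
With `z = psiB ζ` one has `ζ = (z + 1/z) / 2`. Writing `R = ‖z‖` and `s = (R - 1/R) / 2`, so that
`R = s + √(1 + s²)` is strictly increasing in `s`, the point `ζ = x + iy` lies on the confocal
ellipse `x² / (1 + s²) + y² / s² = 1`, and `s` has the sign of `y` (`psiB_confocal`). It remains to
bound `s`. For `x = c cos t`, `y = μ sin t` and `s² ≥ μ²`, the left-hand side is at most
`c² cos² t / (1 + s²) + sin² t`, which is `< 1` unless `cos t = 0`. Hence `-μ ≤ s ≤ μ`, and
`s = ±μ` only at `t = ±π/2`.
-/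

open Filter Topology

noncomputable section

/-- `ψ_B(ζ) = ζ + i√(1 − ζ²)`, the branch of the square root (principal complex power) being
positive on the positive real axis; holomorphic on `ℂ ∖ {x ∈ ℝ : |x| ≥ 1}`. -/
def psiB (ζ : ℂ) : ℂ := ζ + Complex.I * (1 - ζ ^ 2) ^ ((1 : ℂ) / 2)

/-- With `R = ‖psiB ζ‖` and `s = (R - 1/R) / 2`, the point `ζ = (z + 1/z) / 2`, where
`z = psiB ζ`, lies on the (possibly degenerate) confocal ellipse `x² / (1 + s²) + y² / s² = 1`,
stated here without denominators. The factor `k = Im z / R` is positive on the strip `|x| < 1`, so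
`s` has the sign of `y`. -/
lemma psiB_confocal (x y : ℝ) (hx : x ^ 2 < 1) :
    ∃ s k : ℝ, 0 < k ∧ y = k * s ∧
      s ^ 2 * (1 + s ^ 2) = x ^ 2 * s ^ 2 + y ^ 2 * (1 + s ^ 2) ∧
      ‖psiB ((x : ℂ) + Complex.I * (y : ℂ))‖ = s + Real.sqrt (1 + s ^ 2) := by
  set ζ : ℂ := (x : ℂ) + Complex.I * (y : ℂ) with hζ
  set w : ℂ := (1 - ζ ^ 2) ^ ((1 : ℂ) / 2) with hw
  have hw2 : w ^ 2 = 1 - ζ ^ 2 := by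
    rw [hw, one_div]
    exact Complex.cpow_ofNat_inv_pow _ 2
  have ha : 0 ≤ w.re := by
    rw [hw, one_div, Complex.cpow_inv_two_re]
    positivity
  have hre := congrArg Complex.re hw2
  have him := congrArg Complex.im hw2
  simp [hζ, pow_two] at hre him
  set a := w.re
  set b := w.im
  have hz : psiB ζ = ⟨x - b, y + a⟩ := by
    have : psiB ζ = ζ + Complex.I * w := rfl
    rw [this]
    apply Complex.ext <;> simp [hζ, a, b, sub_eq_add_neg]
  -- `a² > y²`, hence `Im (psiB ζ) = y + a > 0`
  have hq : 0 < y + a := by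
    have : |y| < a := abs_lt_of_sq_lt_sq (by nlinarith [sq_nonneg b]) ha
    linarith [neg_abs_le y]
  have hR0 : 0 < ‖psiB ζ‖ := by
    rw [norm_pos_iff, hz]
    intro h
    have := congrArg Complex.im h
    simp at this
    linarith
  have hR2 : ‖psiB ζ‖ ^ 2 = (x - b) ^ 2 + (y + a) ^ 2 := by
    rw [← Complex.normSq_eq_norm_sq, hz, Complex.normSq_mk]
    ring
  set R := ‖psiB ζ‖
  -- the real and imaginary parts of `2 ζ = z + 1 / z`
  have e1 : 2 * x * R ^ 2 = (x - b) * (R ^ 2 + 1) := by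
    rw [hR2]
    linear_combination (x - b) * hre + (y + a) * him
  have e2 : 2 * y * R ^ 2 = (y + a) * (R ^ 2 - 1) := by
    rw [hR2]
    linear_combination (x - b) * him - (y + a) * hre
  obtain ⟨s, hs⟩ : ∃ s, s = (R - R⁻¹) / 2 := ⟨_, rfl⟩
  have hC : 1 + s ^ 2 = ((R + R⁻¹) / 2) ^ 2 := by
    rw [hs]
    field_simp
    ring
  have hxR : x * R = (x - b) * ((R + R⁻¹) / 2) := by
    field_simp
    linear_combination e1
  have hyR : y * R = (y + a) * s := by
    rw [hs]
    field_simp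
    linear_combination e2
  refine ⟨s, (y + a) / R, by positivity, ?_, ?_, ?_⟩
  · field_simp
    exact hyR
  · have hne : R ^ 2 ≠ 0 := by positivity
    apply mul_left_cancel₀ hne
    have h1 : (x * R) ^ 2 = (x - b) ^ 2 * (1 + s ^ 2) := by rw [hxR, hC]; ring
    have h2 : (y * R) ^ 2 = (y + a) ^ 2 * s ^ 2 := by rw [hyR]; ring
    linear_combination s ^ 2 * (1 + s ^ 2) * hR2 - s ^ 2 * h1 - (1 + s ^ 2) * h2
  · rw [hC, Real.sqrt_sq (by positivity), hs]
    ring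

lemma norm_psiB_I_mul (y : ℝ) :
    ‖psiB (Complex.I * (y : ℂ))‖ = y + Real.sqrt (1 + y ^ 2) := by
  obtain ⟨s, k, hk, hy, h, hR⟩ := psiB_confocal 0 y (by norm_num)
  have h1 : s ^ 2 = y ^ 2 := by
    have : (1 + s ^ 2) ≠ 0 := by positivity
    apply mul_right_cancel₀ this
    linear_combination h
  have h2 : s = y := by
    rcases sq_eq_sq_iff_eq_or_eq_neg.mp h1 with h | h
    · exact h
    · have : s * (1 + k) = 0 := by linear_combination h - hy
      rcases mul_eq_zero.mp this with h0 | h0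
      · rw [h0] at hy ⊢
        linarith
      · linarith
  rw [h2] at hR
  simpa using hR

lemma strictMono_add_sqrt : StrictMono fun s : ℝ => s + Real.sqrt (1 + s ^ 2) := by
  intro s u hsu
  have hs : |s| < Real.sqrt (1 + s ^ 2) := Real.lt_sqrt_of_sq_lt (by rw [sq_abs]; linarith)
  have hu : |u| < Real.sqrt (1 + u ^ 2) := Real.lt_sqrt_of_sq_lt (by rw [sq_abs]; linarith)
  have hs2 := Real.sq_sqrt (show 0 ≤ 1 + s ^ 2 by positivity)
  have hu2 := Real.sq_sqrt (show 0 ≤ 1 + u ^ 2 by positivity)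
  show s + Real.sqrt (1 + s ^ 2) < u + Real.sqrt (1 + u ^ 2)
  set A := Real.sqrt (1 + s ^ 2)
  set B := Real.sqrt (1 + u ^ 2)
  have hpos : 0 < (u - s) * (u + s + A + B) :=
    mul_pos (by linarith) (by linarith [neg_abs_le s, neg_abs_le u])
  have hfac : (u - s) * (u + s + A + B) = (u + B - (s + A)) * (A + B) := by
    linear_combination hs2 - hu2
  rw [hfac] at hpos
  have := pos_of_mul_pos_left hpos (by linarith [abs_nonneg s, abs_nonneg u])
  linarith

/-- Lemma `ellipseB`: for `0 < c < 1`, `μ > 0` and the ellipse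
`ζ(t) = c cos t + iμ sin t`, one has `|ψ_B(−iμ)| ≤ |ψ_B(ζ(t))| ≤ |ψ_B(iμ)|` on `[−π,π]`,
with equality on the left iff `t = −π/2` and on the right iff `t = π/2`; moreover
`|ψ_B(−iμ)| = √(μ²+1) − μ` and `|ψ_B(iμ)| = √(μ²+1) + μ`. -/
theorem stmt18 (c μ : ℝ) (hc0 : 0 < c) (hc1 : c < 1) (hμ : 0 < μ) :
    ‖psiB (-(Complex.I * (μ : ℂ)))‖ = Real.sqrt (μ ^ 2 + 1) - μ ∧
    ‖psiB (Complex.I * (μ : ℂ))‖ = Real.sqrt (μ ^ 2 + 1) + μ ∧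
    ∀ t ∈ Set.Icc (-Real.pi) Real.pi,
      ‖psiB (-(Complex.I * (μ : ℂ)))‖ ≤
        ‖psiB (((c * Real.cos t : ℝ) : ℂ) + Complex.I * ((μ * Real.sin t : ℝ) : ℂ))‖ ∧
      ‖psiB (((c * Real.cos t : ℝ) : ℂ) + Complex.I * ((μ * Real.sin t : ℝ) : ℂ))‖ ≤
        ‖psiB (Complex.I * (μ : ℂ))‖ ∧
      (‖psiB (((c * Real.cos t : ℝ) : ℂ) + Complex.I * ((μ * Real.sin t : ℝ) : ℂ))‖ =
          ‖psiB (-(Complex.I * (μ : ℂ)))‖ ↔ t = -(Real.pi / 2)) ∧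
      (‖psiB (((c * Real.cos t : ℝ) : ℂ) + Complex.I * ((μ * Real.sin t : ℝ) : ℂ))‖ =
          ‖psiB (Complex.I * (μ : ℂ))‖ ↔ t = Real.pi / 2) := by
  have hneg : ‖psiB (-(Complex.I * (μ : ℂ)))‖ = -μ + Real.sqrt (1 + (-μ) ^ 2) := by
    rw [← norm_psiB_I_mul]
    simp
  have hpos := norm_psiB_I_mul μ
  refine ⟨?_, ?_, ?_⟩
  · rw [hneg, neg_sq, add_comm 1]
    ring
  · rw [hpos, add_comm 1]
    ring
  intro t ht
  have hsc := Real.sin_sq_add_cos_sq t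
  have hcc : c ^ 2 < 1 := by nlinarith
  have hx : (c * Real.cos t) ^ 2 < 1 := by
    nlinarith [sq_nonneg (Real.sin t), sq_nonneg (Real.cos t)]
  obtain ⟨s, k, hk, hy, h, hR⟩ := psiB_confocal (c * Real.cos t) (μ * Real.sin t) hx
  -- where `s² ≥ μ²`, the ellipse equation leaves only the vertices on the imaginary axis
  have key : μ ^ 2 ≤ s ^ 2 → Real.cos t = 0 := by
    intro hle
    have hs : 0 < s ^ 2 := lt_of_lt_of_le (by positivity) hle
    by_contra hcos
    have hcos2 : 0 < Real.cos t ^ 2 := by positivity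
    have h1 : μ ^ 2 * Real.sin t ^ 2 * (1 + s ^ 2) ≤ s ^ 2 * Real.sin t ^ 2 * (1 + s ^ 2) := by
      gcongr
    have h2 : 0 < Real.cos t ^ 2 * s ^ 2 * (1 + s ^ 2 - c ^ 2) := by
      have : 0 < 1 + s ^ 2 - c ^ 2 := by linarith
      positivity
    have h3 : s ^ 2 * (1 + s ^ 2) * (Real.sin t ^ 2 + Real.cos t ^ 2) = s ^ 2 * (1 + s ^ 2) := by
      rw [hsc, mul_one]
    nlinarith
  have hle : s ^ 2 ≤ μ ^ 2 := by
    by_contra! hlt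
    have hcos := key hlt.le
    have hsin : Real.sin t ^ 2 = 1 := by rw [hcos] at hsc; linarith
    have : s ^ 2 * (1 + s ^ 2) = μ ^ 2 * (1 + s ^ 2) := by
      rw [h, hcos, mul_pow μ, hsin]
      ring
    have := mul_right_cancel₀ (by positivity) this
    linarith
  have habs := abs_le.mp (abs_le_of_sq_le_sq hle hμ.le)
  rw [hneg, hpos, hR]
  have mono := strictMono_add_sqrt
  refine ⟨mono.monotone habs.1, mono.monotone habs.2, ⟨fun he => ?_, fun he => ?_⟩,
    ⟨fun he => ?_, fun he => ?_⟩⟩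
  · have hs : s = -μ := mono.injective he
    have hcos := key (by rw [hs, neg_sq])
    have hsin : Real.sin t < 0 := by
      by_contra! h0
      nlinarith [mul_nonneg hμ.le h0, mul_pos hk hμ]
    have ht0 : t < 0 := by
      by_contra! h0
      linarith [Real.sin_nonneg_of_nonneg_of_le_pi h0 ht.2]
    have : Real.cos (-t) = Real.cos (Real.pi / 2) := by rw [Real.cos_neg, hcos, Real.cos_pi_div_two]
    have := Real.injOn_cos ⟨by linarith, by linarith [ht.1]⟩
      ⟨by linarith [Real.pi_pos], by linarith [Real.pi_pos]⟩ this
    linarith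
  · rw [← hR, he, ← hneg]
    simp
  · have hs : s = μ := mono.injective he
    have hcos := key (by rw [hs])
    have hsin : 0 < Real.sin t := by
      by_contra! h0
      nlinarith [mul_nonneg hμ.le (neg_nonneg.mpr h0), mul_pos hk hμ]
    have ht0 : 0 < t := by
      by_contra! h0
      linarith [Real.sin_nonpos_of_nonpos_of_neg_pi_le h0 ht.1]
    have : Real.cos t = Real.cos (Real.pi / 2) := by rw [hcos, Real.cos_pi_div_two]
    exact Real.injOn_cos ⟨by linarith, by linarith [ht.2]⟩
      ⟨by linarith [Real.pi_pos], by linarith [Real.pi_pos]⟩ this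
  · rw [← hR, he, ← hpos]
    simp
end
end

section
/- The function H_Q is positive on {ξ : |a| < |ξ| < 1}, is convex there (indeed (1/2)H_Q″(ξ) = |b|/((1 − ξ²)√(ξ² − |a|²)) > 0 on |a| < ξ < 1, and H_Q is even), and has no critical points: for |a| < ξ < 1 one has (1/2)H_Q′(ξ) = log r(ξ) > 0 where r(ξ) = (|b|ξ + √(ξ² − |a|²))/(|a|√(1 − ξ²)). Moreover H_Q(ξ) → 0 as |ξ| → |a|⁺ and H_Q(ξ) → −2 log|a| as |ξ| → 1⁻. -/
/-!
Put `A = ‖a‖`, `B = ‖b‖` and `s = √(ξ² − A²)`. Since `A² + B² = 1`, one has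
`s² = ξ² − 1 + B²` and `(Bξ + s)(Bξ − s) = A²(1 − ξ²)`. The first identity makes all
non-logarithmic terms of the derivative cancel, leaving `H' = 2 log r` (`hasDerivAt_rateH`) and
then `H'' = 2B / ((1 − ξ²) s) > 0` (`hasDerivAt_slopeH`), whence convexity. The second gives
`(Bξ + s)² > A²(1 − ξ²)`, i.e. `r > 1`, so `H' > 0` on `(A, 1)`. The formula for `H` is continuous
on `[A, 1)` with value `0` at `A`, so the limit at `A` is `0` and strict monotonicity gives
positivity. At `1` the only singular term `(1 − ξ) log (1 − ξ²)` tends to `0` because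
`t log t → 0`.
-/

open Filter Topology Asymptotics MeasureTheory

noncomputable section

/-- The rate function on the positive half-line, in terms of `A = ‖a‖` and `B = ‖b‖`. -/
def rateH (A B x : ℝ) : ℝ :=
  2 * x * Real.log (B * x + Real.sqrt (x ^ 2 - A ^ 2)) -
    2 * Real.log (B + Real.sqrt (x ^ 2 - A ^ 2)) +
    (1 - x) * Real.log (1 - x ^ 2) - 2 * x * Real.log A

/-- The derivative of `rateH`, namely `2 log r` with the logarithm of the quotient expanded. -/
def slopeH (A B x : ℝ) : ℝ :=
  2 * Real.log (B * x + Real.sqrt (x ^ 2 - A ^ 2)) - Real.log (1 - x ^ 2) - 2 * Real.log A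

lemma HQ_eq_rateH_abs (a b : ℂ) (ξ : ℝ) : HQ a b ξ = rateH ‖a‖ ‖b‖ |ξ| := by
  simp only [HQ, rateH, sq_abs]

lemma HQ_eq_rateH (a b : ℂ) {x : ℝ} (hx : 0 ≤ x) : HQ a b x = rateH ‖a‖ ‖b‖ x := by
  rw [HQ_eq_rateH_abs, abs_of_nonneg hx]

lemma sqrt_sub_pos {A x : ℝ} (hA : 0 < A) (hx : A < x) : 0 < Real.sqrt (x ^ 2 - A ^ 2) :=
  Real.sqrt_pos.2 (by nlinarith)

lemma hasDerivAt_sqrt_sub {A x : ℝ} (hA : 0 < A) (hx : A < x) :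
    HasDerivAt (fun x : ℝ => Real.sqrt (x ^ 2 - A ^ 2)) (x / Real.sqrt (x ^ 2 - A ^ 2)) x := by
  have h : HasDerivAt (fun x : ℝ => x ^ 2 - A ^ 2) (2 * x) x := by
    simpa using (hasDerivAt_pow 2 x).sub_const (A ^ 2)
  convert h.sqrt (by nlinarith) using 1
  have := sqrt_sub_pos hA hx
  field_simp

lemma hasDerivAt_log_lin {A B x : ℝ} (hA : 0 < A) (hB : 0 < B) (hx : A < x) :
    HasDerivAt (fun x : ℝ => Real.log (B * x + Real.sqrt (x ^ 2 - A ^ 2)))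
      ((B + x / Real.sqrt (x ^ 2 - A ^ 2)) / (B * x + Real.sqrt (x ^ 2 - A ^ 2))) x := by
  have hs := sqrt_sub_pos hA hx
  have hx0 : 0 < x := hA.trans hx
  have h := ((hasDerivAt_id x).const_mul B).add (hasDerivAt_sqrt_sub hA hx)
  simpa using h.log (by positivity : B * x + Real.sqrt (x ^ 2 - A ^ 2) ≠ 0)

lemma hasDerivAt_log_one_sub {x : ℝ} (hx : 1 - x ^ 2 ≠ 0) :
    HasDerivAt (fun x : ℝ => Real.log (1 - x ^ 2)) (-(2 * x) / (1 - x ^ 2)) x := by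
  have h : HasDerivAt (fun x : ℝ => 1 - x ^ 2) (-(2 * x)) x := by
    simpa using (hasDerivAt_pow 2 x).const_sub 1
  exact h.log hx

lemma hasDerivAt_rateH {A B x : ℝ} (hA : 0 < A) (hB : 0 < B) (hAB : A ^ 2 + B ^ 2 = 1)
    (hx : A < x) (hx1 : x < 1) : HasDerivAt (rateH A B) (slopeH A B x) x := by
  have hs := sqrt_sub_pos hA hx
  have hx0 : 0 < x := hA.trans hx
  have h1 : 0 < 1 - x ^ 2 := by nlinarith
  have hsq : Real.sqrt (x ^ 2 - A ^ 2) ^ 2 = x ^ 2 - A ^ 2 := Real.sq_sqrt (by nlinarith)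
  have d1 := ((hasDerivAt_id x).const_mul 2).mul (hasDerivAt_log_lin hA hB hx)
  have d2 := (((hasDerivAt_sqrt_sub hA hx).const_add B).log
    (by positivity : B + Real.sqrt (x ^ 2 - A ^ 2) ≠ 0)).const_mul 2
  have d3 := ((hasDerivAt_id x).const_sub 1).mul (hasDerivAt_log_one_sub h1.ne')
  have d4 := ((hasDerivAt_id x).const_mul 2).mul_const (Real.log A)
  refine (((d1.sub d2).add d3).sub d4).congr_deriv ?_
  simp only [slopeH, id]
  set s := Real.sqrt (x ^ 2 - A ^ 2) with hsdef
  have e1 : B * x + s ≠ 0 := by positivity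
  have e2 : B + s ≠ 0 := by positivity
  have e3 : 1 + x ≠ 0 := by positivity
  have e4 : (1 - x) * (-(2 * x) / (1 - x ^ 2)) = -(2 * x) / (1 + x) := by
    have : 1 - x ≠ 0 := by linarith
    rw [show 1 - x ^ 2 = (1 - x) * (1 + x) by ring]
    field_simp
  have key : 2 * x * ((B + x / s) / (B * x + s)) - 2 * (x / s / (B + s)) + -(2 * x) / (1 + x)
      = 0 := by
    field_simp
    linear_combination (-2 * x * s) * hsq + 2 * x * s * hAB
  linear_combination key + e4

lemma hasDerivAt_slopeH {A B x : ℝ} (hA : 0 < A) (hB : 0 < B) (hAB : A ^ 2 + B ^ 2 = 1)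
    (hx : A < x) (hx1 : x < 1) :
    HasDerivAt (slopeH A B) (2 * B / ((1 - x ^ 2) * Real.sqrt (x ^ 2 - A ^ 2))) x := by
  have hs := sqrt_sub_pos hA hx
  have hx0 : 0 < x := hA.trans hx
  have h1 : 0 < 1 - x ^ 2 := by nlinarith
  have hsq : Real.sqrt (x ^ 2 - A ^ 2) ^ 2 = x ^ 2 - A ^ 2 := Real.sq_sqrt (by nlinarith)
  refine ((((hasDerivAt_log_lin hA hB hx).const_mul 2).sub
    (hasDerivAt_log_one_sub h1.ne')).sub_const (2 * Real.log A)).congr_deriv ?_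
  set s := Real.sqrt (x ^ 2 - A ^ 2) with hsdef
  have e1 : B * x + s ≠ 0 := by positivity
  have e2 := h1.ne'
  field_simp
  linear_combination x * hsq - x * hAB

lemma slopeH_eq (a b : ℂ) (ha : 0 < ‖a‖) (hb : 0 < ‖b‖) {x : ℝ} (hx : ‖a‖ < x) (hx1 : x < 1) :
    slopeH ‖a‖ ‖b‖ x = 2 * Real.log (rfun a b x) := by
  have hs := sqrt_sub_pos ha hx
  have hx0 : 0 < x := ha.trans hx
  have h1 : 0 < 1 - x ^ 2 := by nlinarith
  have h2 := Real.sqrt_pos.2 h1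
  rw [rfun, Real.log_div (by positivity) (by positivity), Real.log_mul ha.ne' h2.ne',
    Real.log_sqrt h1.le, slopeH]
  ring

lemma one_lt_rfun (a b : ℂ) (ha : 0 < ‖a‖) (hb : 0 < ‖b‖) (hab : ‖a‖ ^ 2 + ‖b‖ ^ 2 = 1)
    {x : ℝ} (hx : ‖a‖ < x) (hx1 : x < 1) : 1 < rfun a b x := by
  have hs := sqrt_sub_pos ha hx
  have hx0 : 0 < x := ha.trans hx
  have h1 : 0 < 1 - x ^ 2 := by nlinarith
  have h2 := Real.sqrt_pos.2 h1
  have hsq : Real.sqrt (x ^ 2 - ‖a‖ ^ 2) ^ 2 = x ^ 2 - ‖a‖ ^ 2 := Real.sq_sqrt (by nlinarith)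
  rw [rfun, one_lt_div (by positivity)]
  refine lt_of_pow_lt_pow_left₀ 2 (by positivity) ?_
  rw [mul_pow, Real.sq_sqrt h1.le]
  set s := Real.sqrt (x ^ 2 - ‖a‖ ^ 2)
  -- `(Bx + s)² = (Bx + s)(Bx - s) + 2s(Bx + s)`
  have hp : 0 < 2 * s * (‖b‖ * x + s) := by positivity
  have e : (‖b‖ * x + s) * (‖b‖ * x - s) = ‖a‖ ^ 2 * (1 - x ^ 2) := by
    linear_combination x ^ 2 * hab - hsq
  nlinarith

lemma continuousAt_rateH {A B x : ℝ} (hA : 0 < A) (hB : 0 < B) (hx : A ≤ x) (hx1 : x < 1) :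
    ContinuousAt (rateH A B) x := by
  have hx0 : 0 < x := hA.trans_le hx
  have h1 : 1 - x ^ 2 ≠ 0 := by nlinarith
  have h2 : B * x + Real.sqrt (x ^ 2 - A ^ 2) ≠ 0 := by positivity
  have h3 : B + Real.sqrt (x ^ 2 - A ^ 2) ≠ 0 := by positivity
  unfold rateH
  fun_prop (disch := assumption)

lemma rateH_left {A B : ℝ} (hA : 0 < A) (hB : 0 < B) (hAB : A ^ 2 + B ^ 2 = 1) :
    rateH A B A = 0 := by
  rw [rateH, show 1 - A ^ 2 = B ^ 2 by linarith, sub_self, Real.sqrt_zero, add_zero, add_zero,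
    Real.log_mul hB.ne' hA.ne', Real.log_pow]
  push_cast
  ring

lemma rateH_pos {A B x : ℝ} (hA : 0 < A) (hB : 0 < B) (hAB : A ^ 2 + B ^ 2 = 1)
    (hslope : ∀ y, A < y → y < 1 → 0 < slopeH A B y) (hx : A < x) (hx1 : x < 1) :
    0 < rateH A B x := by
  have hmono : StrictMonoOn (rateH A B) (Set.Ico A 1) := by
    refine strictMonoOn_of_deriv_pos (convex_Ico A 1)
      (fun y hy => (continuousAt_rateH hA hB hy.1 hy.2).continuousWithinAt) fun y hy => ?_
    rw [interior_Ico] at hy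
    rw [(hasDerivAt_rateH hA hB hAB hy.1 hy.2).deriv]
    exact hslope y hy.1 hy.2
  have := hmono ⟨le_rfl, hx.trans hx1⟩ ⟨hx.le, hx1⟩ hx
  rwa [rateH_left hA hB hAB] at this

lemma tendsto_rateH_one {A B : ℝ} (hB : 0 < B) :
    Tendsto (rateH A B) (𝓝[<] 1) (𝓝 (-2 * Real.log A)) := by
  -- Split `log (1 - x²)` so that the singular factor is the continuous function `t ↦ t log t`.
  let g : ℝ → ℝ := fun x =>
    2 * x * Real.log (B * x + Real.sqrt (x ^ 2 - A ^ 2)) -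
      2 * Real.log (B + Real.sqrt (x ^ 2 - A ^ 2)) +
      ((1 - x) * Real.log (1 - x) + (1 - x) * Real.log (1 + x)) - 2 * x * Real.log A
  have hg : ContinuousAt g 1 := by
    have h2 : B * 1 + Real.sqrt (1 ^ 2 - A ^ 2) ≠ 0 := by positivity
    have h3 : B + Real.sqrt (1 ^ 2 - A ^ 2) ≠ 0 := by positivity
    have h4 : (1 : ℝ) + 1 ≠ 0 := by norm_num
    have h5 : Continuous fun x : ℝ => (1 - x) * Real.log (1 - x) :=
      Real.continuous_mul_log.comp (continuous_const.sub continuous_id)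
    have h6 : ContinuousAt (fun x : ℝ => (1 - x) * Real.log (1 - x)) 1 := h5.continuousAt
    have h7 : ContinuousAt (fun x : ℝ => 2 * x * Real.log (B * x + Real.sqrt (x ^ 2 - A ^ 2)) -
        2 * Real.log (B + Real.sqrt (x ^ 2 - A ^ 2))) 1 := by
      fun_prop (disch := assumption)
    have h8 : ContinuousAt (fun x : ℝ => (1 - x) * Real.log (1 + x)) 1 := by
      fun_prop (disch := assumption)
    exact (h7.add (h6.add h8)).sub (by fun_prop)
  have hg1 : g 1 = -2 * Real.log A := by
    simp [g]
  rw [← hg1]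
  refine (hg.tendsto.mono_left nhdsWithin_le_nhds).congr' ?_
  filter_upwards [Ioo_mem_nhdsLT (show (0 : ℝ) < 1 by norm_num)] with x hx
  have e1 : 1 - x ≠ 0 := by linarith [hx.2]
  have e2 : 1 + x ≠ 0 := by linarith [hx.1]
  simp only [g, rateH]
  rw [show 1 - x ^ 2 = (1 - x) * (1 + x) by ring, Real.log_mul e1 e2]
  ring

/-- Lemma `rateQL`: `H_Q` is positive on `{|a| < |ξ| < 1}`, even, convex
there (on `|a| < ξ < 1` one has `(1/2)H_Q″(ξ) = |b|/((1−ξ²)√(ξ²−|a|²)) > 0`), has no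
critical points (`(1/2)H_Q′(ξ) = log r(ξ) > 0` for `|a| < ξ < 1`), and
`H_Q(ξ) → 0` as `|ξ| → |a|⁺`, `H_Q(ξ) → −2 log|a|` as `|ξ| → 1⁻`. -/
theorem stmt19 (a b : ℂ) (hab1 : ‖a‖ ^ 2 + ‖b‖ ^ 2 = 1) (hab : a * b ≠ 0) :
    (∀ ξ : ℝ, ‖a‖ < |ξ| → |ξ| < 1 → 0 < HQ a b ξ) ∧
    (∀ ξ : ℝ, HQ a b (-ξ) = HQ a b ξ) ∧
    ConvexOn ℝ (Set.Ioo ‖a‖ 1) (HQ a b) ∧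
    (∀ ξ : ℝ, ‖a‖ < ξ → ξ < 1 →
      deriv (HQ a b) ξ = 2 * Real.log (rfun a b ξ) ∧
      0 < Real.log (rfun a b ξ) ∧
      deriv (deriv (HQ a b)) ξ = 2 * ‖b‖ / ((1 - ξ ^ 2) * Real.sqrt (ξ ^ 2 - ‖a‖ ^ 2))) ∧
    Tendsto (HQ a b) (𝓝[>] ‖a‖) (𝓝 0) ∧
    Tendsto (HQ a b) (𝓝[<] 1) (𝓝 (-2 * Real.log ‖a‖)) := by
  have ha : 0 < ‖a‖ := norm_pos_iff.2 (left_ne_zero_of_mul hab)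
  have hb : 0 < ‖b‖ := norm_pos_iff.2 (right_ne_zero_of_mul hab)
  have ha1 : ‖a‖ < 1 := by nlinarith
  have hlog : ∀ ξ : ℝ, ‖a‖ < ξ → ξ < 1 → 0 < Real.log (rfun a b ξ) := fun ξ h h1 =>
    Real.log_pos (one_lt_rfun a b ha hb hab1 h h1)
  have hslope : ∀ ξ : ℝ, ‖a‖ < ξ → ξ < 1 → 0 < slopeH ‖a‖ ‖b‖ ξ := fun ξ h h1 => by
    rw [slopeH_eq a b ha hb h h1]
    linarith [hlog ξ h h1]
  have hd : ∀ ξ : ℝ, ‖a‖ < ξ → ξ < 1 → HasDerivAt (HQ a b) (slopeH ‖a‖ ‖b‖ ξ) ξ :=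
    fun ξ h h1 => (hasDerivAt_rateH ha hb hab1 h h1).congr_of_eventuallyEq <| by
      filter_upwards [Ioi_mem_nhds (ha.trans h)] with y hy
      exact HQ_eq_rateH a b (le_of_lt hy)
  have hd2 : ∀ ξ : ℝ, ‖a‖ < ξ → ξ < 1 → HasDerivAt (deriv (HQ a b))
      (2 * ‖b‖ / ((1 - ξ ^ 2) * Real.sqrt (ξ ^ 2 - ‖a‖ ^ 2))) ξ :=
    fun ξ h h1 => (hasDerivAt_slopeH ha hb hab1 h h1).congr_of_eventuallyEq <| by
      filter_upwards [Ioo_mem_nhds h h1] with y hy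
      exact (hd y hy.1 hy.2).deriv
  refine ⟨fun ξ h h1 => ?_, fun ξ => ?_, ?_, fun ξ h h1 => ⟨?_, hlog ξ h h1, (hd2 ξ h h1).deriv⟩,
    ?_, ?_⟩
  · rw [HQ_eq_rateH_abs]
    exact rateH_pos ha hb hab1 hslope h h1
  · rw [HQ_eq_rateH_abs, HQ_eq_rateH_abs, abs_neg]
  · refine convexOn_of_deriv2_nonneg' (convex_Ioo _ _)
      (fun x hx => (hd x hx.1 hx.2).differentiableAt.differentiableWithinAt)
      (fun x hx => (hd2 x hx.1 hx.2).differentiableAt.differentiableWithinAt) fun x hx => ?_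
    have h1 : 0 < 1 - x ^ 2 := by nlinarith [hx.1, hx.2]
    have e : deriv^[2] (HQ a b) x = _ := (hd2 x hx.1 hx.2).deriv
    rw [e]
    positivity
  · rw [(hd ξ h h1).deriv, slopeH_eq a b ha hb h h1]
  · rw [← rateH_left ha hb hab1]
    refine ((continuousAt_rateH ha hb le_rfl ha1).tendsto.mono_left nhdsWithin_le_nhds).congr' ?_
    filter_upwards [self_mem_nhdsWithin] with x hx
    exact (HQ_eq_rateH a b (ha.trans hx).le).symm
  · refine (tendsto_rateH_one hb).congr' ?_
    filter_upwards [Ioo_mem_nhdsLT (show (0 : ℝ) < 1 by norm_num)] with x hx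
    exact (HQ_eq_rateH a b hx.1.le).symm
end
end
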